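/- Let 0 < t < √3/2, let F be a C^∞-smooth complex-valued function on an open neighbourhood U of 0 in ℂ whose partial derivatives of all orders ≤ 3 vanish at 0 (so F(z) = o(|z|³) as z → 0), and let M_t = {(z, p_t(z,z̄) + F(z)) : z ∈ U} with p_t(z,z̄) = z²z̄ + t z z̄² + (t²/3) z̄³. Then for every δ > 0 the polynomially convex hull of M_t ∩ B̄(0;δ) contains a nonempty open ball centred at the origin: there exists ρ > 0 with B(0;ρ) contained in the hull of M_t ∩ B̄(0;δ). -/

import Mathlib

open Complex ComplexConjugate

/-- The polynomially convex hull of a set `K ⊆ ℂ²`. -/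
def polyHull2 (K : Set (ℂ × ℂ)) : Set (ℂ × ℂ) :=
  { z | ∀ p : MvPolynomial (Fin 2) ℂ,
      ‖MvPolynomial.eval (fun i => if i = 0 then z.1 else z.2) p‖ ≤
        sSup ((fun w : ℂ × ℂ =>
          ‖MvPolynomial.eval (fun i => if i = 0 then w.1 else w.2) p‖) '' K) }

/-- A set `K ⊆ ℂ²` is polynomially convex if it equals its polynomially convex hull. -/
def PolyConvex2 (K : Set (ℂ × ℂ)) : Prop := polyHull2 K = K

/-- The closed Euclidean ball of radius `r` centred at the origin in `ℂ²`. -/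
def eClosedBall (r : ℝ) : Set (ℂ × ℂ) := { z | ‖z.1‖ ^ 2 + ‖z.2‖ ^ 2 ≤ r ^ 2 }

/-- The open Euclidean ball of radius `r` centred at the origin in `ℂ²`. -/
def eOpenBall (r : ℝ) : Set (ℂ × ℂ) := { z | ‖z.1‖ ^ 2 + ‖z.2‖ ^ 2 < r ^ 2 }

/-- The surface `M_t = {(z, z²z̄ + t z z̄² + (t²/3) z̄³ + F(z)) : z ∈ U}`. -/
def Mset (t : ℝ) (U : Set ℂ) (F : ℂ → ℂ) : Set (ℂ × ℂ) :=
  { zw | ∃ z ∈ U, zw = (z, z ^ 2 * conj z + (t : ℂ) * z * (conj z) ^ 2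
      + ((t : ℂ) ^ 2 / 3) * (conj z) ^ 3 + F z) }

/-!
Write `p_t(z, z̄) = z³ Q(z̄ / z)`. For `S` and `E` holomorphic on the unit disc and `ζ = s²`, the
disc `s ↦ (s e^{iS(ζ)}, s e^{3iS(ζ) + E(ζ)})` passes through the origin, and its boundary lies on
the graph of `p_t` if and only if `ζ e^{-E(ζ)} Q(z̄ / z) = 1` there, where
`z̄ / z = ζ̄ e^{-2i Re S}`. This holds when `ζ ↦ ζ e^{-E(ζ)}` is the conformal map of the unit
disc onto the domain `{c | c Q(σ) ≠ 1 for |σ| ≤ 1}`, provided that this map parametrizes the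
boundary `{1 / Q(σ) | |σ| = 1}` diffeomorphically. The map is constructed from the harmonic
measure of the domain at `0`. As `3t Q(σ) = (1 + tσ)³ - 1`, the other two solutions `s` of
`Q(s) = Q(σ)` come from multiplying `1 + tσ` by a nontrivial cube root of unity, and for
`t < √3/2` they lie outside the closed unit disc when `|σ| = 1`. Hence the harmonic measure has a
real analytic density on the circle.

The disc survives a small Lipschitz perturbation of the graph. Bishop's equation for the perturbed
disc is solved on the `(2m + 1)`-st roots of unity by a contraction in a discrete Sobolev space
with bounds independent of `m`, and `m → ∞` in the maximum principle shows that the origin is in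
the polynomial hull of the perturbed graph. Finally, the dilations `(z, w) ↦ (rz, r³w)` preserve
the graph of `p_t`, and they turn `F = o(|z|³)` and a translation by a small vector into a small
perturbation, so that the hull contains every point near the origin.
-/

namespace CubicHull

open Polynomial

/-! ### Discrete harmonic conjugation -/

section RootMeanSquare

variable {ι E : Type*} [Fintype ι] [SeminormedAddCommGroup E]

/-- The quadratic mean of the norms of a finite family: the `L²` norm for the uniform probability
measure on the index set. -/
noncomputable def rms (x : ι → E) : ℝ := ‖WithLp.toLp 2 x‖ / √(Fintype.card ι)

lemma rms_nonneg (x : ι → E) : 0 ≤ rms x := by unfold rms; positivity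

lemma rms_eq_sqrt (x : ι → E) : rms x = √((∑ j, ‖x j‖ ^ 2) / Fintype.card ι) := by
  rw [rms, PiLp.norm_eq_of_L2, Real.sqrt_div (by positivity)]

lemma card_mul_rms_sq (x : ι → E) : Fintype.card ι * rms x ^ 2 = ∑ j, ‖x j‖ ^ 2 := by
  rcases isEmpty_or_nonempty ι with _ | _
  · simp
  · rw [rms_eq_sqrt, Real.sq_sqrt (by positivity), mul_div_cancel₀]
    exact_mod_cast Fintype.card_ne_zero

lemma rms_add_le (x y : ι → E) : rms (x + y) ≤ rms x + rms y := by
  rw [rms, rms, rms, ← add_div, WithLp.toLp_add]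
  gcongr
  exact norm_add_le _ _

lemma rms_sub_le (x y : ι → E) : rms (x - y) ≤ rms x + rms y := by
  rw [rms, rms, rms, ← add_div, WithLp.toLp_sub]
  gcongr
  exact norm_sub_le _ _

lemma rms_le_rms {F : Type*} [SeminormedAddCommGroup F] {x : ι → E} {y : ι → F}
    (h : ∀ j, ‖x j‖ ≤ ‖y j‖) : rms x ≤ rms y := by
  rw [rms_eq_sqrt, rms_eq_sqrt]
  gcongr with j
  exact h j

lemma rms_const_le (a : E) : rms (fun _ : ι ↦ a) ≤ ‖a‖ := by
  rw [rms_eq_sqrt]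
  refine Real.sqrt_le_iff.2 ⟨norm_nonneg a, ?_⟩
  rcases isEmpty_or_nonempty ι with _ | _
  all_goals simp

lemma rms_smul {𝕜 : Type*} [NormedField 𝕜] [NormedSpace 𝕜 E] (c : 𝕜) (x : ι → E) :
    rms (c • x) = ‖c‖ * rms x := by
  rw [rms, rms, WithLp.toLp_smul, norm_smul, mul_div_assoc]

lemma rms_le_of_forall_norm_le {x : ι → E} {a : ℝ} (ha : 0 ≤ a) (h : ∀ j, ‖x j‖ ≤ a) :
    rms x ≤ a := by
  refine (rms_le_rms (y := fun _ ↦ a) fun j ↦ ?_).trans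
    ((rms_const_le a).trans_eq (Real.norm_of_nonneg ha))
  rw [Real.norm_of_nonneg ha]
  exact h j

lemma exists_norm_le_rms [Nonempty ι] (x : ι → E) : ∃ j, ‖x j‖ ≤ rms x := by
  by_contra! h
  have hlt : ∑ _j : ι, rms x ^ 2 < ∑ j, ‖x j‖ ^ 2 :=
    Finset.sum_lt_sum_of_nonempty Finset.univ_nonempty fun j _ ↦
      pow_lt_pow_left₀ (h j) (rms_nonneg x) two_ne_zero
  simp only [Finset.sum_const, Finset.card_univ, nsmul_eq_mul, card_mul_rms_sq, lt_self_iff_false]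
    at hlt

lemma sum_norm_le_card_mul_rms (x : ι → E) : ∑ j, ‖x j‖ ≤ Fintype.card ι * rms x := by
  refine le_of_sq_le_sq ?_ (mul_nonneg (Nat.cast_nonneg _) (rms_nonneg x))
  calc (∑ j, ‖x j‖) ^ 2 ≤ Fintype.card ι * ∑ j, ‖x j‖ ^ 2 := sq_sum_le_card_mul_sum_sq
    _ = (Fintype.card ι * rms x) ^ 2 := by rw [← card_mul_rms_sq]; ring

end RootMeanSquare

section Nodes

variable {m : ℕ}

/-- The index group of the `2m + 1` nodes; the node count is odd so that a real function on the
nodes is the real part of exactly one polynomial of degree `≤ m` with real constant term. -/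
abbrev Node (m : ℕ) : Type := ZMod (2 * m + 1)

/-- The nodes: the `(2m + 1)`-st roots of unity, indexed additively. -/
noncomputable def node (j : Node m) : ℂ := ZMod.stdAddChar j

@[simp] lemma norm_node (j : Node m) : ‖node j‖ = 1 := AddChar.norm_apply _ _

lemma node_ne_zero (j : Node m) : node j ≠ 0 := norm_ne_zero_iff.1 (by simp)

@[simp] lemma node_zero : node (0 : Node m) = 1 := AddChar.map_zero_eq_one _

lemma node_add (i j : Node m) : node (i + j) = node i * node j := AddChar.map_add_eq_mul _ _ _

lemma node_sub (i j : Node m) : node (i - j) = node i * conj (node j) := by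
  rw [sub_eq_add_neg, node_add]
  exact congrArg _ (AddChar.map_neg_eq_conj _ _)

lemma node_pow (j : Node m) (k : ℕ) : node j ^ k = node ((k : Node m) * j) := by
  rw [← nsmul_eq_mul]
  exact (AddChar.map_nsmul_eq_pow _ _ _).symm

lemma node_eq_one_iff {j : Node m} : node j = 1 ↔ j = 0 :=
  ⟨fun h ↦ ZMod.injective_stdAddChar (h.trans node_zero.symm), fun h ↦ by rw [h, node_zero]⟩

lemma card_node : (Fintype.card (Node m) : ℝ) = 2 * m + 1 := by
  rw [ZMod.card]; push_cast; rfl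

lemma sum_node_mul (a : Node m) : ∑ j, node (a * j) = if a = 0 then (2 * m + 1 : ℂ) else 0 := by
  have h := AddChar.sum_mulShift (R' := ℂ) a (ZMod.isPrimitive_stdAddChar (2 * m + 1))
  simp only [ZMod.card, mul_comm _ a] at h
  refine h.trans ?_
  push_cast
  rfl

lemma natCast_eq_natCast_iff_of_le {k l : ℕ} (hk : k ≤ 2 * m) (hl : l ≤ 2 * m) :
    (k : Node m) = l ↔ k = l := by
  rw [ZMod.natCast_eq_natCast_iff', Nat.mod_eq_of_lt (by lia), Nat.mod_eq_of_lt (by lia)]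

lemma sum_eval_node {p : ℂ[X]} (hp : p.natDegree ≤ 2 * m) :
    ∑ j : Node m, p.eval (node j) = (2 * m + 1) * p.coeff 0 := by
  simp only [eval_eq_sum_range' (Nat.lt_succ_of_le hp), node_pow]
  rw [Finset.sum_comm, Finset.sum_eq_single 0]
  · simp [mul_comm]
  · intro k hk hk0
    have hk' : (k : Node m) ≠ 0 := by
      rw [← Nat.cast_zero, Ne, natCast_eq_natCast_iff_of_le (by grind) (Nat.zero_le _)]
      exact hk0
    rw [← Finset.mul_sum, sum_node_mul, if_neg hk', mul_zero]
  · simp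

lemma sum_norm_eval_node_sq {p : ℂ[X]} (hp : p.natDegree ≤ m) :
    ∑ j : Node m, ‖p.eval (node j)‖ ^ 2 = (2 * m + 1) * ∑ k ∈ Finset.range (m + 1),
      ‖p.coeff k‖ ^ 2 := by
  have expand (j : Node m) : ((‖p.eval (node j)‖ ^ 2 : ℝ) : ℂ) = ∑ k ∈ Finset.range (m + 1),
      ∑ l ∈ Finset.range (m + 1), p.coeff k * conj (p.coeff l) * node ((k - l : Node m) * j) := by
    rw [ofReal_pow, ← mul_conj', eval_eq_sum_range' (Nat.lt_succ_of_le hp), map_sum,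
      Finset.sum_mul_sum]
    refine Finset.sum_congr rfl fun k _ ↦ Finset.sum_congr rfl fun l _ ↦ ?_
    rw [sub_mul, node_sub, map_mul, map_pow, node_pow, ← map_pow, node_pow]
    ring
  have key : ∑ j : Node m, ((‖p.eval (node j)‖ ^ 2 : ℝ) : ℂ) =
      (2 * m + 1) * ∑ k ∈ Finset.range (m + 1), ((‖p.coeff k‖ ^ 2 : ℝ) : ℂ) := by
    simp only [expand]
    rw [Finset.sum_comm, Finset.mul_sum]
    refine Finset.sum_congr rfl fun k hk ↦ ?_
    rw [Finset.sum_comm, Finset.sum_eq_single k]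
    · rw [← Finset.mul_sum, sum_node_mul, if_pos (sub_self _), mul_conj', ofReal_pow, mul_comm]
    · intro l hl hlk
      have hkl : (k : Node m) - l ≠ 0 := by
        rw [Ne, sub_eq_zero, natCast_eq_natCast_iff_of_le (by grind) (by grind)]
        exact hlk.symm
      rw [← Finset.mul_sum, sum_node_mul, if_neg hkl, mul_zero]
    · exact fun h ↦ absurd hk h
  exact_mod_cast key

lemma re_two_mul_geom_sum_node (d : Node m) :
    (2 * ∑ k ∈ Finset.range (m + 1), node d ^ k - 1).re = if d = 0 then (2 * m + 1 : ℝ) else 0 := by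
  split_ifs with hd
  · simp only [hd, node_zero, one_pow, Finset.sum_const, Finset.card_range, nsmul_eq_mul, mul_one]
    norm_num
    ring
  set z := node d with hz
  set G := ∑ k ∈ Finset.range (m + 1), z ^ k with hG
  have geom_zero : ∑ k ∈ Finset.range (m + (m + 1)), z ^ k = 0 := by
    have hz1 : z ≠ 1 := mt node_eq_one_iff.1 hd
    have hpow : z ^ (2 * m + 1) = 1 := by rw [hz, node_pow, ZMod.natCast_self, zero_mul, node_zero]
    rw [← add_assoc, ← two_mul, geom_sum_eq hz1, hpow, sub_self, zero_div]
  have reflected : z ^ m * conj G = G := by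
    rw [hG, map_sum, Finset.mul_sum, ← Finset.sum_range_reflect]
    refine Finset.sum_congr rfl fun k hk ↦ ?_
    have hk' : k ≤ m := Nat.lt_succ_iff.1 (Finset.mem_range.1 hk)
    rw [Nat.add_sub_cancel, map_pow]
    calc z ^ m * conj z ^ (m - k) = z ^ k * (z * conj z) ^ (m - k) := by
          rw [mul_pow, ← mul_assoc, ← pow_add, Nat.add_sub_cancel' hk']
      _ = z ^ k := by rw [mul_conj', hz, norm_node, ofReal_one, one_pow, one_pow, mul_one]
  have split : z ^ m * (G + conj G - 1) = 0 := by
    rw [← geom_zero, Finset.sum_range_add]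
    simp only [pow_add, ← Finset.mul_sum]
    rw [mul_sub, mul_add, reflected, hG, Finset.sum_range_succ]
    ring
  have h := (mul_eq_zero.1 split).resolve_left (pow_ne_zero _ (node_ne_zero d))
  have := congrArg re h
  simp only [sub_re, add_re, conj_re, one_re, zero_re, mul_re, re_ofNat, im_ofNat, zero_mul,
    sub_zero] at this ⊢
  linarith

end Nodes

section DiscreteConjugation

variable {m : ℕ}

/-- The `k`-th coefficient (`k ≤ m`) of `schwarzPoly m`, linear in the nodal values. -/
noncomputable def schwarzCoeff (m k : ℕ) : (Node m → ℝ) →ₗ[ℝ] ℂ where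
  toFun x := (if k = 0 then 1 else 2) / (2 * m + 1) * ∑ j, x j * conj (node j) ^ k
  map_add' x y := by simp only [Pi.add_apply, ofReal_add, add_mul, Finset.sum_add_distrib, mul_add]
  map_smul' c x := by
    simp only [Pi.smul_apply, smul_eq_mul, ofReal_mul, mul_assoc, ← Finset.mul_sum, real_smul,
      RingHom.id_apply]
    ring

/-- The discrete Schwarz integral: the polynomial of degree `≤ m` with real constant coefficient
whose real part interpolates `x` at the nodes. -/
noncomputable def schwarzPoly (m : ℕ) : (Node m → ℝ) →ₗ[ℝ] ℂ[X] :=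
  ∑ k ∈ Finset.range (m + 1), (monomial k).restrictScalars ℝ ∘ₗ schwarzCoeff m k

/-- Discrete harmonic conjugation: the imaginary part of the discrete Schwarz integral at the
nodes. -/
noncomputable def conjugate (m : ℕ) : (Node m → ℝ) →ₗ[ℝ] Node m → ℝ where
  toFun x j := ((schwarzPoly m x).eval (node j)).im
  map_add' x y := by ext j; simp
  map_smul' c x := by ext j; simp [eval_smul]

/-- The forward difference on the nodes, scaled by the number of nodes; it plays the role of a
derivative along the circle. -/
noncomputable def scaledDiff {E : Type*} [AddCommGroup E] [Module ℝ E] :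
    (Node m → E) →ₗ[ℝ] Node m → E where
  toFun x j := (2 * m + 1 : ℝ) • (x (j + 1) - x j)
  map_add' x y := by ext j; simp only [Pi.add_apply, ← smul_add]; congr 1; abel
  map_smul' c x := by
    ext j
    simp only [Pi.smul_apply, ← smul_sub, RingHom.id_apply]
    exact smul_comm _ _ _

lemma schwarzCoeff_apply (k : ℕ) (x : Node m → ℝ) : schwarzCoeff m k x =
    (if k = 0 then 1 else 2) / (2 * m + 1) * ∑ j, x j * conj (node j) ^ k := rfl

lemma scaledDiff_apply {E : Type*} [AddCommGroup E] [Module ℝ E] (x : Node m → E) (j : Node m) :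
    scaledDiff x j = (2 * m + 1 : ℝ) • (x (j + 1) - x j) := rfl

lemma coeff_schwarzPoly {k : ℕ} (hk : k ≤ m) (x : Node m → ℝ) :
    (schwarzPoly m x).coeff k = schwarzCoeff m k x := by
  simp [schwarzPoly, coeff_monomial, hk]

lemma natDegree_schwarzPoly_le (x : Node m → ℝ) : (schwarzPoly m x).natDegree ≤ m := by
  rw [schwarzPoly, LinearMap.sum_apply]
  exact natDegree_sum_le_of_forall_le _ _ fun k hk ↦
    (natDegree_monomial_le _).trans (Nat.lt_succ_iff.1 (Finset.mem_range.1 hk))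

lemma eval_schwarzPoly (x : Node m → ℝ) (s : ℂ) :
    (schwarzPoly m x).eval s = ∑ k ∈ Finset.range (m + 1), schwarzCoeff m k x * s ^ k := by
  simp [schwarzPoly, eval_finsetSum]

lemma schwarzCoeff_zero (x : Node m → ℝ) :
    schwarzCoeff m 0 x = ((∑ j, x j) / (2 * m + 1) : ℝ) := by
  rw [schwarzCoeff_apply]
  push_cast
  simp only [pow_zero, mul_one]
  ring

lemma re_eval_schwarzPoly_node (x : Node m → ℝ) (l : Node m) :
    ((schwarzPoly m x).eval (node l)).re = x l := by
  have kernel (j : Node m) : ∑ k ∈ Finset.range (m + 1),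
      ((if k = 0 then 1 else 2) * node (l - j) ^ k : ℂ) =
        2 * ∑ k ∈ Finset.range (m + 1), node (l - j) ^ k - 1 := by
    rw [Finset.sum_range_succ', Finset.sum_range_succ']
    simp only [Nat.add_eq_zero_iff, one_ne_zero, and_false, ↓reduceIte, pow_zero, mul_one,
      Finset.mul_sum, mul_add]
    ring
  have expand : (schwarzPoly m x).eval (node l) = ∑ j, ((x j / (2 * m + 1) : ℝ) : ℂ) *
      (2 * ∑ k ∈ Finset.range (m + 1), node (l - j) ^ k - 1) := by
    simp only [eval_schwarzPoly, ← kernel]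
    simp only [schwarzCoeff_apply, Finset.mul_sum, Finset.sum_mul]
    rw [Finset.sum_comm]
    refine Finset.sum_congr rfl fun j _ ↦ Finset.sum_congr rfl fun k _ ↦ ?_
    rw [node_sub, mul_pow]
    push_cast
    ring
  rw [expand, re_sum, Finset.sum_eq_single l]
  · rw [re_ofReal_mul, re_two_mul_geom_sum_node, sub_self, if_pos rfl]
    field_simp
  · intro j _ hj
    rw [re_ofReal_mul, re_two_mul_geom_sum_node, if_neg (sub_ne_zero.2 hj.symm), mul_zero]
  · simp

lemma eval_schwarzPoly_node (x : Node m → ℝ) (l : Node m) :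
    (schwarzPoly m x).eval (node l) = x l + conjugate m x l * I := by
  rw [← re_add_im ((schwarzPoly m x).eval (node l)), re_eval_schwarzPoly_node]
  rfl

lemma norm_eval_schwarzPoly_node_sq (x : Node m → ℝ) (l : Node m) :
    ‖(schwarzPoly m x).eval (node l)‖ ^ 2 = ‖x l‖ ^ 2 + ‖conjugate m x l‖ ^ 2 := by
  rw [eval_schwarzPoly_node, ← normSq_eq_norm_sq, normSq_add_mul_I, Real.norm_eq_abs,
    Real.norm_eq_abs, sq_abs, sq_abs]

/-- The mean of the square of the Schwarz polynomial is the square of its constant coefficient,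
hence nonnegative. -/
lemma sum_conjugate_sq_le (x : Node m → ℝ) : ∑ j, conjugate m x j ^ 2 ≤ ∑ j, x j ^ 2 := by
  have hdeg : (schwarzPoly m x ^ 2).natDegree ≤ 2 * m :=
    natDegree_pow_le_of_le 2 (natDegree_schwarzPoly_le x)
  have h := congrArg re (sum_eval_node hdeg)
  rw [pow_two, mul_coeff_zero, coeff_schwarzPoly (Nat.zero_le m), schwarzCoeff_zero] at h
  have hre (j : Node m) : ((schwarzPoly m x * schwarzPoly m x).eval (node j)).re =
      x j ^ 2 - conjugate m x j ^ 2 := by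
    rw [eval_mul, eval_schwarzPoly_node]
    simp
    ring
  rw [re_sum] at h
  simp only [hre, Finset.sum_sub_distrib] at h
  rw [← sub_nonneg, h]
  norm_cast
  exact mul_nonneg (by positivity) (mul_self_nonneg _)

lemma rms_conjugate_le (x : Node m → ℝ) : rms (conjugate m x) ≤ rms x := by
  rw [rms_eq_sqrt, rms_eq_sqrt]
  refine Real.sqrt_le_sqrt (div_le_div_of_nonneg_right ?_ (Nat.cast_nonneg _))
  simpa using sum_conjugate_sq_le x

lemma schwarzCoeff_shift (k : ℕ) (x : Node m → ℝ) :
    schwarzCoeff m k (fun j ↦ x (j + 1)) = node (1 : Node m) ^ k * schwarzCoeff m k x := by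
  rw [schwarzCoeff_apply, schwarzCoeff_apply, mul_left_comm, Finset.mul_sum Finset.univ _ (_ ^ k),
    ← Equiv.sum_comp (Equiv.addRight 1) fun j : Node m ↦ node 1 ^ k * (x j * conj (node j) ^ k)]
  congr 1
  refine Finset.sum_congr rfl fun j _ ↦ ?_
  rw [Equiv.coe_addRight, mul_left_comm, ← mul_pow, node_add, map_mul, mul_left_comm, mul_conj',
    norm_node, ofReal_one, one_pow, mul_one]

lemma schwarzCoeff_scaledDiff (k : ℕ) (x : Node m → ℝ) : schwarzCoeff m k (scaledDiff x) =
    (2 * m + 1) * (node (1 : Node m) ^ k - 1) * schwarzCoeff m k x := by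
  have : scaledDiff x = (2 * m + 1 : ℝ) • ((fun j ↦ x (j + 1)) - x) := rfl
  rw [this, map_smul, map_sub, schwarzCoeff_shift, real_smul]
  push_cast
  ring

lemma conjugate_scaledDiff (x : Node m → ℝ) :
    conjugate m (scaledDiff x) = scaledDiff (conjugate m x) := by
  have eval_diff (j : Node m) : (schwarzPoly m (scaledDiff x)).eval (node j) = (2 * m + 1 : ℝ) •
      ((schwarzPoly m x).eval (node (j + 1)) - (schwarzPoly m x).eval (node j)) := by
    simp only [eval_schwarzPoly, schwarzCoeff_scaledDiff, real_smul, ← Finset.sum_sub_distrib,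
      Finset.mul_sum, node_add, mul_pow]
    push_cast
    exact Finset.sum_congr rfl fun k _ ↦ by ring
  ext j
  exact (congrArg im (eval_diff j)).trans (by rw [smul_im, sub_im]; rfl)

lemma node_one : node (1 : Node m) = exp (I * (2 * Real.pi / (2 * m + 1) : ℝ)) := by
  have h := ZMod.stdAddChar_coe (N := 2 * m + 1) 1
  rw [Int.cast_one] at h
  refine h.trans (congrArg exp ?_)
  push_cast
  ring

lemma le_norm_node_one_pow_sub_one {k : ℕ} (hk : k ≤ m) :
    4 * k / (2 * m + 1) ≤ ‖node (1 : Node m) ^ k - 1‖ := by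
  have harg : (k : ℂ) * (I * (2 * Real.pi / (2 * m + 1) : ℝ)) =
      I * (k * (2 * Real.pi / (2 * m + 1)) : ℝ) := by push_cast; ring
  rw [node_one, ← exp_nat_mul, harg, norm_exp_I_mul_ofReal_sub_one, Real.norm_eq_abs]
  have hk' : (k : ℝ) ≤ m := by exact_mod_cast hk
  have hle : (k : ℝ) * (2 * Real.pi / (2 * m + 1)) / 2 ≤ Real.pi / 2 := by
    gcongr
    rw [← mul_div_assoc, div_le_iff₀ (by positivity)]
    nlinarith [Real.pi_pos]
  have hsin := Real.mul_le_sin (by positivity) hle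
  calc 4 * k / (2 * m + 1)
      = 2 * (2 / Real.pi * ((k : ℝ) * (2 * Real.pi / (2 * m + 1)) / 2)) := by field_simp; ring
    _ ≤ 2 * Real.sin ((k : ℝ) * (2 * Real.pi / (2 * m + 1)) / 2) := by gcongr
    _ ≤ _ := le_abs_self _

lemma norm_pow_sub_pow_le {s s' : ℂ} (hs : ‖s‖ ≤ 1) (hs' : ‖s'‖ ≤ 1) (k : ℕ) :
    ‖s ^ k - s' ^ k‖ ≤ k * ‖s - s'‖ := by
  refine (convex_closedBall (0 : ℂ) 1).norm_image_sub_le_of_norm_hasDerivWithin_le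
    (fun z _ ↦ (hasDerivAt_pow k z).hasDerivWithinAt) (fun z hz ↦ ?_) (by simpa) (by simpa)
  rw [norm_mul, norm_natCast, norm_pow]
  exact mul_le_of_le_one_right k.cast_nonneg
    (pow_le_one₀ (norm_nonneg z) (mem_closedBall_zero_iff.1 hz))

lemma sum_schwarzCoeff_scaledDiff_sq_le (x : Node m → ℝ) :
    ∑ k ∈ Finset.range (m + 1), ‖schwarzCoeff m k (scaledDiff x)‖ ^ 2 ≤
      2 * rms (scaledDiff x) ^ 2 := by
  have parseval := sum_norm_eval_node_sq (natDegree_schwarzPoly_le (scaledDiff x))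
  simp only [norm_eval_schwarzPoly_node_sq, Finset.sum_add_distrib, ← card_mul_rms_sq, card_node]
    at parseval
  have hcoeff : ∑ k ∈ Finset.range (m + 1), ‖(schwarzPoly m (scaledDiff x)).coeff k‖ ^ 2 =
      ∑ k ∈ Finset.range (m + 1), ‖schwarzCoeff m k (scaledDiff x)‖ ^ 2 :=
    Finset.sum_congr rfl fun k hk ↦ by rw [coeff_schwarzPoly (by grind)]
  rw [hcoeff, ← mul_add] at parseval
  have hN : (2 * m + 1 : ℝ) ≠ 0 := by positivity
  refine (mul_left_cancel₀ hN parseval).symm.trans_le ?_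
  rw [two_mul (rms (scaledDiff x) ^ 2)]
  gcongr
  exacts [rms_nonneg _, rms_conjugate_le _]

lemma sum_mul_norm_schwarzCoeff_le (x : Node m → ℝ) :
    ∑ k ∈ Finset.range (m + 1), k * ‖schwarzCoeff m k x‖ ≤ rms (scaledDiff x) * √m := by
  have hdiff {k : ℕ} (hk : k ≤ m) :
      4 * (k * ‖schwarzCoeff m k x‖) ≤ ‖schwarzCoeff m k (scaledDiff x)‖ := by
    have h := le_norm_node_one_pow_sub_one hk
    rw [div_le_iff₀' (by positivity)] at h
    rw [schwarzCoeff_scaledDiff, norm_mul, norm_mul, ← mul_assoc]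
    have hnorm : ‖(2 * m + 1 : ℂ)‖ = 2 * m + 1 := by exact_mod_cast norm_natCast (2 * m + 1)
    rw [hnorm]
    exact mul_le_mul_of_nonneg_right h (norm_nonneg _)
  have hsq : ∑ k ∈ Finset.range m, ((k + 1 : ℕ) * ‖schwarzCoeff m (k + 1) x‖) ^ 2 ≤
      rms (scaledDiff x) ^ 2 := by
    have h : ∑ k ∈ Finset.range (m + 1), (4 * (k * ‖schwarzCoeff m k x‖)) ^ 2 ≤
        2 * rms (scaledDiff x) ^ 2 := (Finset.sum_le_sum fun k hk ↦ pow_le_pow_left₀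
      (by positivity) (hdiff (by grind)) 2).trans (sum_schwarzCoeff_scaledDiff_sq_le x)
    simp only [Finset.sum_range_succ', mul_pow (4 : ℝ), ← Finset.mul_sum] at h
    rw [Nat.cast_zero, zero_mul] at h
    linarith [sq_nonneg (rms (scaledDiff x))]
  rw [Finset.sum_range_succ', Nat.cast_zero, zero_mul, add_zero]
  refine le_of_sq_le_sq ?_ (mul_nonneg (rms_nonneg _) (Real.sqrt_nonneg _))
  calc _ ≤ m * ∑ k ∈ Finset.range m, ((k + 1 : ℕ) * ‖schwarzCoeff m (k + 1) x‖) ^ 2 := by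
        simpa using sq_sum_le_card_mul_sum_sq (s := Finset.range m)
          (f := fun k ↦ ((k + 1 : ℕ) * ‖schwarzCoeff m (k + 1) x‖ : ℝ))
    _ ≤ m * rms (scaledDiff x) ^ 2 := by gcongr
    _ = (rms (scaledDiff x) * √m) ^ 2 := by rw [mul_pow, Real.sq_sqrt m.cast_nonneg, mul_comm]

lemma norm_eval_schwarzPoly_sub_le (x : Node m → ℝ) {s s' : ℂ} (hs : ‖s‖ ≤ 1) (hs' : ‖s'‖ ≤ 1) :
    ‖(schwarzPoly m x).eval s - (schwarzPoly m x).eval s'‖ ≤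
      rms (scaledDiff x) * √m * ‖s - s'‖ := by
  rw [eval_schwarzPoly, eval_schwarzPoly, ← Finset.sum_sub_distrib]
  simp only [← mul_sub]
  calc _ ≤ ∑ k ∈ Finset.range (m + 1), k * ‖schwarzCoeff m k x‖ * ‖s - s'‖ := by
        refine norm_sum_le_of_le _ fun k _ ↦ ?_
        rw [norm_mul, mul_comm (k : ℝ), mul_assoc]
        gcongr
        exact norm_pow_sub_pow_le hs hs' k
    _ ≤ _ := by
        rw [← Finset.sum_mul]
        gcongr
        exact sum_mul_norm_schwarzCoeff_le x

end DiscreteConjugation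

/-! ### The discrete Bishop equation -/

section DiscreteBishop

variable {m : ℕ}

lemma norm_sub_le_sum_norm_forwardDiff {E : Type*} [SeminormedAddCommGroup E] (x : Node m → E)
    (i j : Node m) : ‖x j - x i‖ ≤ ∑ k, ‖x (k + 1) - x k‖ := by
  set n := (j - i).val with hn
  have hj : i + (n : Node m) = j := by rw [hn, ZMod.natCast_zmod_val, add_sub_cancel]
  have telescope : x j - x i =
      ∑ k ∈ Finset.range n, (x (i + (k : Node m) + 1) - x (i + (k : Node m))) := by
    have h := Finset.sum_range_sub (fun k : ℕ ↦ x (i + (k : Node m))) n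
    simpa only [hj, Nat.cast_add, Nat.cast_one, Nat.cast_zero, add_zero, add_assoc] using h.symm
  have inj : Set.InjOn (fun k : ℕ ↦ i + (k : Node m)) (Finset.range n) := fun k hk l hl h ↦ by
    have hlt : n < 2 * m + 1 := ZMod.val_lt _
    simp only [Finset.coe_range, Set.mem_Iio] at hk hl
    exact (natCast_eq_natCast_iff_of_le (by lia) (by lia)).1 (add_left_cancel h)
  calc ‖x j - x i‖ ≤ ∑ k ∈ Finset.range n, ‖x (i + (k : Node m) + 1) - x (i + (k : Node m))‖ := by
        rw [telescope]; exact norm_sum_le _ _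
    _ = ∑ k ∈ (Finset.range n).image fun k : ℕ ↦ i + (k : Node m), ‖x (k + 1) - x k‖ :=
        (Finset.sum_image (f := fun k ↦ ‖x (k + 1) - x k‖) inj).symm
    _ ≤ ∑ k, ‖x (k + 1) - x k‖ :=
        Finset.sum_le_univ_sum_of_nonneg fun _ ↦ norm_nonneg _

lemma norm_scaledDiff {E : Type*} [SeminormedAddCommGroup E] [NormedSpace ℝ E] (x : Node m → E)
    (j : Node m) : ‖scaledDiff x j‖ = (2 * m + 1) * ‖x (j + 1) - x j‖ := by
  rw [scaledDiff_apply, norm_smul, Real.norm_of_nonneg (by positivity)]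

lemma norm_le_rms_add_rms_scaledDiff {E : Type*} [SeminormedAddCommGroup E] [NormedSpace ℝ E]
    (x : Node m → E) (j : Node m) : ‖x j‖ ≤ rms x + rms (scaledDiff x) := by
  obtain ⟨i, hi⟩ := exists_norm_le_rms x
  have hsum : ∑ k, ‖x (k + 1) - x k‖ ≤ rms (scaledDiff x) := by
    have h := sum_norm_le_card_mul_rms (scaledDiff x)
    simp only [norm_scaledDiff, ← Finset.mul_sum, card_node] at h
    exact le_of_mul_le_mul_left h (by positivity)
  calc ‖x j‖ ≤ ‖x i‖ + ‖x j - x i‖ := norm_le_norm_add_norm_sub' _ _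
    _ ≤ rms x + rms (scaledDiff x) :=
        add_le_add hi ((norm_sub_le_sum_norm_forwardDiff x i j).trans hsum)

lemma rms_le_of_norm_le_add {ι E F G : Type*} [Fintype ι] [SeminormedAddCommGroup E]
    [SeminormedAddCommGroup F] [SeminormedAddCommGroup G] {z : ι → E} {x : ι → F} {y : ι → G}
    {a b c : ℝ} (ha : 0 ≤ a) (hb : 0 ≤ b) (hc : 0 ≤ c)
    (h : ∀ j, ‖z j‖ ≤ a * ‖x j‖ + b * ‖y j‖ + c) : rms z ≤ a * rms x + b * rms y + c := by
  have hx : rms (fun j ↦ a * ‖x j‖) = a * rms x :=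
    (rms_smul a fun j ↦ ‖x j‖).trans (by simp only [rms_eq_sqrt, norm_norm, Real.norm_of_nonneg ha])
  have hy : rms (fun j ↦ b * ‖y j‖) = b * rms y :=
    (rms_smul b fun j ↦ ‖y j‖).trans (by simp only [rms_eq_sqrt, norm_norm, Real.norm_of_nonneg hb])
  calc rms z ≤ rms ((fun j ↦ a * ‖x j‖) + (fun j ↦ b * ‖y j‖) + fun _ ↦ c) :=
        rms_le_rms fun j ↦ (h j).trans (le_abs_self _)
    _ ≤ a * rms x + b * rms y + c := by
        rw [← hx, ← hy]
        refine (rms_add_le _ _).trans (add_le_add (rms_add_le _ _) ?_)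
        exact (rms_const_le c).trans_eq (Real.norm_of_nonneg hc)

lemma rms_mul_le {ι : Type*} [Fintype ι] {g : ι → ℝ} {a : ℝ} (ha : 0 ≤ a) (hg : ∀ j, |g j| ≤ a)
    (x : ι → ℝ) : rms (g * x) ≤ a * rms x := by
  have h : rms (g * x) ≤ a * rms x + 0 * rms x + 0 :=
    rms_le_of_norm_le_add ha le_rfl le_rfl fun j ↦ by
      rw [zero_mul, add_zero, add_zero, Pi.mul_apply, norm_mul]
      exact mul_le_mul_of_nonneg_right (hg j) (norm_nonneg _)
  linarith

lemma dist_toLp_eq_sqrt_card_mul_rms {ι E : Type*} [Fintype ι] [SeminormedAddCommGroup E]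
    (x y : ι → E) :
    dist (WithLp.toLp 2 x) (WithLp.toLp 2 y) = √(Fintype.card ι) * rms (x - y) := by
  rw [dist_eq_norm, ← WithLp.toLp_sub, rms]
  rcases isEmpty_or_nonempty ι with _ | _
  · simp [PiLp.norm_eq_of_L2]
  · have : (Fintype.card ι : ℝ) ≠ 0 := by exact_mod_cast Fintype.card_ne_zero
    field_simp

lemma exists_isFixedPt_of_rms_contracting {ι E : Type*} [Fintype ι] [NormedAddCommGroup E]
    [CompleteSpace E] {S : Set (ι → E)} (hS : IsClosed S) (hne : S.Nonempty)
    {Φ : (ι → E) → ι → E} (hΦ : Set.MapsTo Φ S S) {c : NNReal} (hc : c < 1)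
    (hcontr : ∀ x ∈ S, ∀ y ∈ S, rms (Φ x - Φ y) ≤ c * rms (x - y)) :
    ∃ x ∈ S, Function.IsFixedPt Φ x := by
  let S' : Set (PiLp 2 fun _ : ι ↦ E) := {x | x.ofLp ∈ S}
  let Φ' : PiLp 2 (fun _ : ι ↦ E) → PiLp 2 fun _ : ι ↦ E := fun x ↦ WithLp.toLp 2 (Φ x.ofLp)
  have hmaps : Set.MapsTo Φ' S' S' := fun x hx ↦ hΦ hx
  have hS' : IsClosed S' := hS.preimage (PiLp.continuous_ofLp 2 fun _ : ι ↦ E)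
  have contracting : ContractingWith c (hmaps.restrict Φ' S' S') := by
    refine ⟨hc, LipschitzWith.of_dist_le_mul fun ⟨x, hx⟩ ⟨y, hy⟩ ↦ ?_⟩
    have hxy := dist_toLp_eq_sqrt_card_mul_rms x.ofLp y.ofLp
    rw [WithLp.toLp_ofLp, WithLp.toLp_ofLp] at hxy
    simp only [Subtype.dist_eq, Set.MapsTo.val_restrict_apply]
    rw [hxy, dist_toLp_eq_sqrt_card_mul_rms, mul_left_comm]
    gcongr
    exact hcontr _ hx _ hy
  obtain ⟨x, hx⟩ := hne
  obtain ⟨y, hy, hfix, -⟩ :=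
    contracting.exists_fixedPoint' hS'.isComplete hmaps (x := WithLp.toLp 2 x) hx (edist_ne_top _ _)
  exact ⟨y.ofLp, hy, congrArg WithLp.ofLp hfix⟩

/-- The amount by which `Im u` fails to be the discrete conjugate of `Re u`. It vanishes when `u`
is the restriction of a polynomial of degree `≤ m` with real constant coefficient. -/
noncomputable def conjugateDefect (m : ℕ) : (Node m → ℂ) →ₗ[ℝ] Node m → ℝ where
  toFun u := (fun i ↦ (u i).im) - conjugate m fun i ↦ (u i).re
  map_add' u v := by
    have h : (fun i ↦ ((u + v) i).re) = (fun i ↦ (u i).re) + fun i ↦ (v i).re := rfl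
    rw [h, map_add]
    ext j
    simp only [Pi.sub_apply, Pi.add_apply, add_im]
    ring
  map_smul' c u := by
    have h : (fun i ↦ ((c • u) i).re) = c • fun i ↦ (u i).re := by ext i; simp
    rw [h, map_smul]
    ext j
    simp [mul_sub]

lemma conjugateDefect_apply (u : Node m → ℂ) (j : Node m) :
    conjugateDefect m u j = (u j).im - conjugate m (fun i ↦ (u i).re) j := rfl

lemma rms_conjugateDefect_le (u : Node m → ℂ) : rms (conjugateDefect m u) ≤ 2 * rms u := by
  have him : rms (fun i ↦ (u i).im) ≤ rms u := rms_le_rms fun j ↦ abs_im_le_norm _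
  have hre : rms (fun i ↦ (u i).re) ≤ rms u := rms_le_rms fun j ↦ abs_re_le_norm _
  have h := rms_sub_le (fun i ↦ (u i).im) (conjugate m fun i ↦ (u i).re)
  have := rms_conjugate_le fun i ↦ (u i).re
  exact h.trans (by linarith)

lemma re_scaledDiff (u : Node m → ℂ) (j : Node m) :
    (scaledDiff u j).re = scaledDiff (fun i ↦ (u i).re) j := by
  simp [scaledDiff_apply]

lemma im_scaledDiff (u : Node m → ℂ) (j : Node m) :
    (scaledDiff u j).im = scaledDiff (fun i ↦ (u i).im) j := by
  simp [scaledDiff_apply]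

lemma conjugateDefect_scaledDiff (u : Node m → ℂ) :
    conjugateDefect m (scaledDiff u) = scaledDiff (conjugateDefect m u) := by
  ext j
  have h : conjugateDefect m u = (fun i ↦ (u i).im) - conjugate m fun i ↦ (u i).re := rfl
  simp only [conjugateDefect_apply, re_scaledDiff, im_scaledDiff, h, map_sub, Pi.sub_apply,
    ← conjugate_scaledDiff]

lemma scaledDiff_mul (g q : Node m → ℝ) (j : Node m) :
    scaledDiff (g * q) j = g (j + 1) * scaledDiff q j + scaledDiff g j * q j := by
  simp only [scaledDiff_apply, Pi.mul_apply, smul_eq_mul]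
  ring

/-- Bounds on the nonlinear term `H` of the discrete Bishop equation, on the range `|ξ| ≤ 2r`,
`|y| ≤ 4L` of its arguments: it is quadratically small in `r`, together with its differences in
the node and in `y`, and its Lipschitz constant in `ξ` is of order `r`. -/
structure IsSmallNonlinearity (K L r : ℝ) (H : Node m → ℝ → ℝ → ℂ) : Prop where
  norm_le {ξ y : ℝ} (hξ : |ξ| ≤ 2 * r) (hy : |y| ≤ 4 * L) (j : Node m) : ‖H j ξ y‖ ≤ K * r ^ 2
  norm_sub_le {ξ y ξ' y' : ℝ} (hξ : |ξ| ≤ 2 * r) (hy : |y| ≤ 4 * L) (hξ' : |ξ'| ≤ 2 * r)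
    (hy' : |y'| ≤ 4 * L) (j : Node m) :
    ‖H j ξ y - H j ξ' y'‖ ≤ K * r * |ξ - ξ'| + K * r ^ 2 * |y - y'|
  norm_scaledDiff_le {ξ y : ℝ} (hξ : |ξ| ≤ 2 * r) (hy : |y| ≤ 4 * L) (j : Node m) :
    ‖scaledDiff (fun i ↦ H i ξ y) j‖ ≤ K * r ^ 2

/-- The discrete Sobolev ball of radius `r` in which the Bishop equation is solved. -/
def sobolevBall (m : ℕ) (r : ℝ) : Set (Node m → ℝ) := {ξ | rms ξ ≤ r ∧ rms (scaledDiff ξ) ≤ r}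

/-- The nonlinear term of the discrete Bishop equation along the boundary function
`x₀ + ξ + i (x₀ + ξ)~`. -/
noncomputable def bishopTerm (H : Node m → ℝ → ℝ → ℂ) (x₀ ξ : Node m → ℝ) (j : Node m) : ℂ :=
  H j (ξ j) (conjugate m (x₀ + ξ) j)

lemma isClosed_sobolevBall (r : ℝ) : IsClosed (sobolevBall m r) := by
  have continuous_rms : Continuous fun x : Node m → ℝ ↦ rms x := by
    simp only [rms_eq_sqrt]; fun_prop
  have continuous_scaledDiff : Continuous fun x : Node m → ℝ ↦ scaledDiff x :=
    LinearMap.continuous_of_finiteDimensional _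
  exact (isClosed_le continuous_rms continuous_const).inter (isClosed_le
    (continuous_rms.comp continuous_scaledDiff) continuous_const)

lemma zero_mem_sobolevBall {r : ℝ} (hr : 0 ≤ r) : 0 ∈ sobolevBall m r := by
  simpa [sobolevBall, rms_eq_sqrt] using hr

lemma abs_le_of_mem_sobolevBall {r : ℝ} {ξ : Node m → ℝ} (hξ : ξ ∈ sobolevBall m r) (j : Node m) :
    |ξ j| ≤ 2 * r := by
  linarith [norm_le_rms_add_rms_scaledDiff ξ j, hξ.1, hξ.2, Real.norm_eq_abs (ξ j)]

lemma conjugate_mem_sobolevBall {r : ℝ} {ξ : Node m → ℝ} (hξ : ξ ∈ sobolevBall m r) :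
    conjugate m ξ ∈ sobolevBall m r :=
  ⟨(rms_conjugate_le ξ).trans hξ.1, by
    rw [← conjugate_scaledDiff]; exact (rms_conjugate_le _).trans hξ.2⟩

lemma add_mem_sobolevBall {r r' : ℝ} {ξ η : Node m → ℝ} (hξ : ξ ∈ sobolevBall m r)
    (hη : η ∈ sobolevBall m r') : ξ + η ∈ sobolevBall m (r + r') :=
  ⟨(rms_add_le _ _).trans (add_le_add hξ.1 hη.1), by
    rw [map_add]; exact (rms_add_le _ _).trans (add_le_add hξ.2 hη.2)⟩

section Estimates

variable {K L r : ℝ} {H : Node m → ℝ → ℝ → ℂ} {x₀ ξ η : Node m → ℝ}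

lemma conjugate_add_mem_sobolevBall (hrL : r ≤ L) (hx₀ : x₀ ∈ sobolevBall m L)
    (hξ : ξ ∈ sobolevBall m r) : conjugate m (x₀ + ξ) ∈ sobolevBall m (2 * L) := by
  have h := conjugate_mem_sobolevBall (add_mem_sobolevBall hx₀ hξ)
  exact ⟨h.1.trans (by linarith), h.2.trans (by linarith)⟩

lemma abs_conjugate_add_le (hrL : r ≤ L) (hx₀ : x₀ ∈ sobolevBall m L) (hξ : ξ ∈ sobolevBall m r)
    (j : Node m) : |conjugate m (x₀ + ξ) j| ≤ 4 * L := by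
  linarith [abs_le_of_mem_sobolevBall (conjugate_add_mem_sobolevBall hrL hx₀ hξ) j]

lemma IsSmallNonlinearity.rms_bishopTerm_le (hH : IsSmallNonlinearity K L r H) (hK : 0 ≤ K)
    (hrL : r ≤ L) (hx₀ : x₀ ∈ sobolevBall m L) (hξ : ξ ∈ sobolevBall m r) :
    rms (bishopTerm H x₀ ξ) ≤ K * r ^ 2 :=
  rms_le_of_forall_norm_le (by positivity) fun j ↦
    hH.norm_le (abs_le_of_mem_sobolevBall hξ j) (abs_conjugate_add_le hrL hx₀ hξ j) j

lemma IsSmallNonlinearity.rms_scaledDiff_bishopTerm_le (hH : IsSmallNonlinearity K L r H)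
    (hK : 0 ≤ K) (hL : 1 ≤ L) (hr : 0 ≤ r) (hrL : r ≤ L) (hx₀ : x₀ ∈ sobolevBall m L)
    (hξ : ξ ∈ sobolevBall m r) : rms (scaledDiff (bishopTerm H x₀ ξ)) ≤ 4 * K * L * r ^ 2 := by
  set y := conjugate m (x₀ + ξ)
  have hξ' := abs_le_of_mem_sobolevBall hξ
  have hy' : ∀ j, |y j| ≤ 4 * L := abs_conjugate_add_le hrL hx₀ hξ
  have pointwise (j : Node m) : ‖scaledDiff (bishopTerm H x₀ ξ) j‖ ≤
      K * r * ‖scaledDiff ξ j‖ + K * r ^ 2 * ‖scaledDiff y j‖ + K * r ^ 2 := by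
    have hsplit : bishopTerm H x₀ ξ (j + 1) - bishopTerm H x₀ ξ j =
        (H (j + 1) (ξ (j + 1)) (y (j + 1)) - H (j + 1) (ξ j) (y j)) +
          (H (j + 1) (ξ j) (y j) - H j (ξ j) (y j)) := by rw [sub_add_sub_cancel]; rfl
    rw [norm_scaledDiff, norm_scaledDiff, norm_scaledDiff, hsplit]
    refine (mul_le_mul_of_nonneg_left (norm_add_le _ _) (by positivity)).trans ?_
    rw [mul_add]
    refine add_le_add ?_ ((norm_scaledDiff _ j).symm.trans_le
      (hH.norm_scaledDiff_le (hξ' j) (hy' j) j))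
    rw [mul_left_comm, mul_left_comm (K * r ^ 2), ← mul_add]
    gcongr
    exact hH.norm_sub_le (hξ' _) (hy' _) (hξ' _) (hy' _) _
  calc rms (scaledDiff (bishopTerm H x₀ ξ))
      ≤ K * r * rms (scaledDiff ξ) + K * r ^ 2 * rms (scaledDiff y) + K * r ^ 2 :=
        rms_le_of_norm_le_add (by positivity) (by positivity) (by positivity) pointwise
    _ ≤ K * r * r + K * r ^ 2 * (2 * L) + K * r ^ 2 := by
        gcongr
        exacts [hξ.2, (conjugate_add_mem_sobolevBall hrL hx₀ hξ).2]
    _ ≤ 4 * K * L * r ^ 2 := by nlinarith [mul_nonneg hK (sq_nonneg r)]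

lemma IsSmallNonlinearity.rms_bishopTerm_sub_le (hH : IsSmallNonlinearity K L r H) (hK : 0 ≤ K)
    (hr : 0 ≤ r) (hr1 : r ≤ 1) (hrL : r ≤ L) (hx₀ : x₀ ∈ sobolevBall m L)
    (hξ : ξ ∈ sobolevBall m r) (hη : η ∈ sobolevBall m r) :
    rms (bishopTerm H x₀ ξ - bishopTerm H x₀ η) ≤ 2 * K * r * rms (ξ - η) := by
  have hconj : conjugate m (x₀ + ξ) - conjugate m (x₀ + η) = conjugate m (ξ - η) := by
    rw [← map_sub, add_sub_add_left_eq_sub]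
  calc rms (bishopTerm H x₀ ξ - bishopTerm H x₀ η)
      ≤ K * r * rms (ξ - η) + K * r ^ 2 * rms (conjugate m (ξ - η)) + 0 := by
        refine rms_le_of_norm_le_add (by positivity) (by positivity) le_rfl fun j ↦ ?_
        rw [← hconj, add_zero]
        exact hH.norm_sub_le (abs_le_of_mem_sobolevBall hξ j) (abs_conjugate_add_le hrL hx₀ hξ j)
          (abs_le_of_mem_sobolevBall hη j) (abs_conjugate_add_le hrL hx₀ hη j) j
    _ ≤ K * r * rms (ξ - η) + K * r * rms (ξ - η) + 0 := by
        have : r ^ 2 ≤ r := by nlinarith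
        gcongr
        exacts [rms_nonneg _, rms_conjugate_le _]
    _ = 2 * K * r * rms (ξ - η) := by ring

lemma mul_conjugateDefect_mem_sobolevBall {g : Node m → ℝ} {u : Node m → ℂ} (hK : 0 ≤ K)
    (hL : 1 ≤ L) (hr : 0 ≤ r) (hr0 : r * (14 * K * L ^ 2) ≤ 1) (hg : ∀ j, |g j| ≤ L)
    (hDg : ∀ j, |scaledDiff g j| ≤ L) (hu : rms u ≤ K * r ^ 2)
    (hDu : rms (scaledDiff u) ≤ 4 * K * L * r ^ 2) :
    g * conjugateDefect m u ∈ sobolevBall m r := by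
  have hq := (rms_conjugateDefect_le u).trans (mul_le_mul_of_nonneg_left hu zero_le_two)
  have hDq := (rms_conjugateDefect_le _).trans (mul_le_mul_of_nonneg_left hDu zero_le_two)
  rw [conjugateDefect_scaledDiff] at hDq
  have hLq : L * (2 * (K * r ^ 2)) + L * (2 * (4 * K * L * r ^ 2)) ≤ r := by
    have hKLr : L * (K * r ^ 2) ≤ L ^ 2 * (K * r ^ 2) := by gcongr; nlinarith
    have : 0 ≤ L ^ 2 * (K * r ^ 2) := by positivity
    nlinarith [mul_le_mul_of_nonneg_left hr0 hr]
  have hLDq : 0 ≤ L * (2 * (4 * K * L * r ^ 2)) := by positivity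
  constructor
  · calc rms (g * conjugateDefect m u)
        ≤ L * rms (conjugateDefect m u) := rms_mul_le (by positivity) hg _
      _ ≤ L * (2 * (K * r ^ 2)) := by gcongr
      _ ≤ r := by linarith
  · calc rms (scaledDiff (g * conjugateDefect m u))
        ≤ L * rms (scaledDiff (conjugateDefect m u)) + L * rms (conjugateDefect m u) + 0 := by
          refine rms_le_of_norm_le_add (by positivity) (by positivity) le_rfl fun j ↦ ?_
          rw [scaledDiff_mul, add_zero]
          refine (norm_add_le _ _).trans ?_
          rw [norm_mul, norm_mul]
          gcongr
          exacts [hg _, hDg j]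
      _ ≤ L * (2 * (4 * K * L * r ^ 2)) + L * (2 * (K * r ^ 2)) := by rw [add_zero]; gcongr
      _ ≤ r := by linarith

end Estimates

/-- The map whose fixed point solves the Bishop equation is a contraction of a small discrete
Sobolev ball in the mean square norm. -/
theorem exists_eq_mul_conjugateDefect_bishopTerm {K L r : ℝ} (hK : 1 ≤ K) (hL : 1 ≤ L) (hr : 0 ≤ r)
    (hr0 : r * (14 * K * L ^ 2) ≤ 1) {x₀ g : Node m → ℝ} (hx₀ : x₀ ∈ sobolevBall m L)
    (hg : ∀ j, |g j| ≤ L) (hDg : ∀ j, |scaledDiff g j| ≤ L) {H : Node m → ℝ → ℝ → ℂ}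
    (hH : IsSmallNonlinearity K L r H) :
    ∃ ξ ∈ sobolevBall m r, ξ = g * conjugateDefect m (bishopTerm H x₀ ξ) := by
  have : 1 ≤ K * L ^ 2 := one_le_mul_of_one_le_of_one_le hK (one_le_pow₀ hL)
  have hr1 : r ≤ 1 := by nlinarith
  have hrL : r ≤ L := hr1.trans hL
  have hK0 : 0 ≤ K := zero_le_one.trans hK
  have contracting : ∀ ξ ∈ sobolevBall m r, ∀ η ∈ sobolevBall m r,
      rms (g * conjugateDefect m (bishopTerm H x₀ ξ) - g * conjugateDefect m (bishopTerm H x₀ η)) ≤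
        (1 / 2 : NNReal) * rms (ξ - η) := fun ξ hξ η hη ↦ by
    have hq : rms (conjugateDefect m (bishopTerm H x₀ ξ - bishopTerm H x₀ η)) ≤
        2 * (2 * K * r * rms (ξ - η)) := (rms_conjugateDefect_le _).trans
      (mul_le_mul_of_nonneg_left (hH.rms_bishopTerm_sub_le hK0 hr hr1 hrL hx₀ hξ hη) zero_le_two)
    have hfactor : L * (4 * K * r) ≤ 1 / 2 := by
      have : r * K * L ≤ r * K * L ^ 2 := by gcongr; nlinarith
      nlinarith
    rw [← mul_sub, ← map_sub]
    calc _ ≤ L * rms (conjugateDefect m (bishopTerm H x₀ ξ - bishopTerm H x₀ η)) :=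
          rms_mul_le (by positivity) hg _
      _ ≤ L * (2 * (2 * K * r * rms (ξ - η))) := by gcongr
      _ = L * (4 * K * r) * rms (ξ - η) := by ring
      _ ≤ _ := by
          push_cast
          gcongr
          exact rms_nonneg _
  obtain ⟨ξ, hξ, hfix⟩ := exists_isFixedPt_of_rms_contracting (isClosed_sobolevBall r)
    ⟨0, zero_mem_sobolevBall hr⟩
    (fun ξ hξ ↦ mul_conjugateDefect_mem_sobolevBall hK0 hL hr hr0 hg hDg
      (hH.rms_bishopTerm_le hK0 hrL hx₀ hξ)
      (hH.rms_scaledDiff_bishopTerm_le hK0 hL hr hrL hx₀ hξ)) (by norm_num) contracting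
  exact ⟨ξ, hξ, hfix.symm⟩

end DiscreteBishop

section BoundedLipschitz

variable {α E F : Type*} [PseudoMetricSpace α] [NormedAddCommGroup E] [NormedAddCommGroup F]

/-- `f` is bounded by `M` and Lipschitz with constant `M` on `S`. -/
structure BoundedLipschitzOn (M : ℝ) (f : α → E) (S : Set α) : Prop where
  nonneg : 0 ≤ M
  norm_le {x : α} (hx : x ∈ S) : ‖f x‖ ≤ M
  norm_sub_le {x y : α} (hx : x ∈ S) (hy : y ∈ S) : ‖f x - f y‖ ≤ M * dist x y

/-- `f` is bounded and Lipschitz on `S`, with some constant. -/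
def IsBoundedLipschitzOn (f : α → E) (S : Set α) : Prop := ∃ M, BoundedLipschitzOn M f S

lemma BoundedLipschitzOn.mono {M M' : ℝ} {f : α → E} {S : Set α} (hf : BoundedLipschitzOn M f S)
    (h : M ≤ M') : BoundedLipschitzOn M' f S where
  nonneg := hf.nonneg.trans h
  norm_le hx := (hf.norm_le hx).trans h
  norm_sub_le hx hy := (hf.norm_sub_le hx hy).trans (mul_le_mul_of_nonneg_right h dist_nonneg)

lemma boundedLipschitzOn_const (c : E) (S : Set α) : BoundedLipschitzOn ‖c‖ (fun _ ↦ c) S where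
  nonneg := norm_nonneg c
  norm_le _ := le_rfl
  norm_sub_le _ _ := by rw [sub_self, norm_zero]; positivity

lemma BoundedLipschitzOn.add {M M' : ℝ} {f g : α → E} {S : Set α}
    (hf : BoundedLipschitzOn M f S) (hg : BoundedLipschitzOn M' g S) :
    BoundedLipschitzOn (M + M') (fun x ↦ f x + g x) S where
  nonneg := add_nonneg hf.nonneg hg.nonneg
  norm_le hx := (norm_add_le _ _).trans (add_le_add (hf.norm_le hx) (hg.norm_le hx))
  norm_sub_le hx hy := by
    rw [add_sub_add_comm, add_mul]
    exact (norm_add_le _ _).trans (add_le_add (hf.norm_sub_le hx hy) (hg.norm_sub_le hx hy))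

lemma BoundedLipschitzOn.comp_isometry {β : Type*} [PseudoMetricSpace β] {M : ℝ} {f : α → E}
    {g : β → α} {S : Set α} {T : Set β} (hf : BoundedLipschitzOn M f S) (hg : Isometry g)
    (h : Set.MapsTo g T S) : BoundedLipschitzOn M (fun x ↦ f (g x)) T where
  nonneg := hf.nonneg
  norm_le hx := hf.norm_le (h hx)
  norm_sub_le {x y} hx hy := by rw [← hg.dist_eq x y]; exact hf.norm_sub_le (h hx) (h hy)

lemma BoundedLipschitzOn.mul {R : Type*} [NormedRing R] {M M' : ℝ} {f g : α → R} {S : Set α}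
    (hf : BoundedLipschitzOn M f S) (hg : BoundedLipschitzOn M' g S) :
    BoundedLipschitzOn (2 * M * M') (fun x ↦ f x * g x) S where
  nonneg := mul_nonneg (mul_nonneg zero_le_two hf.nonneg) hg.nonneg
  norm_le {x} hx := by
    have := mul_nonneg hf.nonneg hg.nonneg
    have := mul_le_mul (hf.norm_le hx) (hg.norm_le hx) (norm_nonneg _) hf.nonneg
    linarith [norm_mul_le (f x) (g x)]
  norm_sub_le {x y} hx hy := by
    calc ‖f x * g x - f y * g y‖ = ‖f x * (g x - g y) + (f x - f y) * g y‖ := by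
          congr 1; noncomm_ring
      _ ≤ ‖f x‖ * ‖g x - g y‖ + ‖f x - f y‖ * ‖g y‖ :=
          (norm_add_le _ _).trans (add_le_add (norm_mul_le _ _) (norm_mul_le _ _))
      _ ≤ M * (M' * dist x y) + M * dist x y * M' := by
          have := hf.nonneg
          gcongr
          exacts [hf.norm_le hx, hg.norm_sub_le hx hy, hf.norm_sub_le hx hy, hg.norm_le hy]
      _ = 2 * M * M' * dist x y := by ring

lemma IsBoundedLipschitzOn.comp {β : Type*} [PseudoMetricSpace β] {f : E → F} {g : β → E}
    {S : Set E} {T : Set β} (hf : IsBoundedLipschitzOn f S) (hg : IsBoundedLipschitzOn g T)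
    (h : Set.MapsTo g T S) : IsBoundedLipschitzOn (fun x ↦ f (g x)) T := by
  obtain ⟨M, hM⟩ := hf
  obtain ⟨M', hM'⟩ := hg
  have hMM' := mul_nonneg hM.nonneg hM'.nonneg
  refine ⟨M + M * M', add_nonneg hM.nonneg hMM',
    fun hx ↦ (hM.norm_le (h hx)).trans (by linarith), fun {x y} hx hy ↦ ?_⟩
  calc ‖f (g x) - f (g y)‖ ≤ M * ‖g x - g y‖ := by
        rw [← dist_eq_norm (g x)]; exact hM.norm_sub_le (h hx) (h hy)
    _ ≤ M * (M' * dist x y) := mul_le_mul_of_nonneg_left (hM'.norm_sub_le hx hy) hM.nonneg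
    _ ≤ (M + M * M') * dist x y := by
        linarith [mul_nonneg hM.nonneg (dist_nonneg (x := x) (y := y))]

lemma IsBoundedLipschitzOn.prodMk {f : α → E} {g : α → F} {S : Set α}
    (hf : IsBoundedLipschitzOn f S) (hg : IsBoundedLipschitzOn g S) :
    IsBoundedLipschitzOn (fun x ↦ (f x, g x)) S := by
  obtain ⟨M, hM⟩ := hf
  obtain ⟨M', hM'⟩ := hg
  have hf := hM.mono (le_max_left M M')
  have hg := hM'.mono (le_max_right M M')
  exact ⟨max M M', hf.nonneg, fun hx ↦ max_le (hf.norm_le hx) (hg.norm_le hx),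
    fun hx hy ↦ max_le (hf.norm_sub_le hx hy) (hg.norm_sub_le hx hy)⟩

lemma isBoundedLipschitzOn_of_contDiffAt [NormedSpace ℝ E] [NormedSpace ℝ F] {f : E → F}
    {K : Set E} (hK : IsCompact K) (hf : ∀ x ∈ K, ContDiffAt ℝ 1 f x) :
    IsBoundedLipschitzOn f K := by
  obtain ⟨M, hM⟩ := hK.exists_bound_of_continuousOn
    fun x hx ↦ (hf x hx).continuousAt.continuousWithinAt
  have hlip : LocallyLipschitzOn K f := fun x hx ↦ by
    obtain ⟨C, U, hU, hC⟩ := (hf x hx).exists_lipschitzOnWith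
    exact ⟨C, U, mem_nhdsWithin_of_mem_nhds hU, hC⟩
  obtain ⟨C, hC⟩ := hlip.exists_lipschitzOnWith_of_compact hK
  refine ⟨max M C, C.coe_nonneg.trans (le_max_right _ _),
    fun hx ↦ (hM _ hx).trans (le_max_left _ _), fun {x y} hx hy ↦ ?_⟩
  calc ‖f x - f y‖ ≤ C * dist x y := by rw [← dist_eq_norm]; exact hC.dist_le_mul x hx y hy
    _ ≤ max M C * dist x y := mul_le_mul_of_nonneg_right (le_max_right _ _) dist_nonneg

lemma IsBoundedLipschitzOn.continuousOn {f : α → E} {S : Set α} (hf : IsBoundedLipschitzOn f S) :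
    ContinuousOn f S := by
  obtain ⟨M, hM⟩ := hf
  refine (LipschitzOnWith.of_dist_le_mul (K := ⟨M, hM.nonneg⟩) fun x hx y hy ↦ ?_).continuousOn
  rw [dist_eq_norm]
  exact hM.norm_sub_le hx hy

lemma IsBoundedLipschitzOn.contDiffAt_comp [NormedSpace ℝ E] [NormedSpace ℝ F] {f : E → F}
    {g : α → E} {S : Set α} (hS : IsCompact S) (hg : IsBoundedLipschitzOn g S)
    (hf : ∀ x ∈ S, ContDiffAt ℝ 1 f (g x)) : IsBoundedLipschitzOn (fun x ↦ f (g x)) S :=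
  (isBoundedLipschitzOn_of_contDiffAt (hS.image_of_continuousOn hg.continuousOn)
    (Set.forall_mem_image.2 hf)).comp hg (Set.mapsTo_image g S)

end BoundedLipschitz

/-! ### Discs attached to a perturbed graph -/

section CubicSymbol

/-- The polynomial `Q` such that `z²z̄ + t z z̄² + (t²/3) z̄³ = z³ Q(z̄ / z)`. -/
noncomputable def cubicSymbol (t : ℝ) (σ : ℂ) : ℂ := σ + t * σ ^ 2 + t ^ 2 / 3 * σ ^ 3

lemma exists_differentiable_exp_eq :
    ∃ ψ : ℂ → ℂ, Differentiable ℂ ψ ∧ ∀ z, exp z = 1 + z + z ^ 2 * ψ z := by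
  have differentiable_dslope {f : ℂ → ℂ} (hf : Differentiable ℂ f) :
      Differentiable ℂ (dslope f 0) :=
    differentiableOn_univ.1 ((differentiableOn_dslope Filter.univ_mem).2 hf.differentiableOn)
  refine ⟨dslope (dslope exp 0) 0, differentiable_dslope (differentiable_dslope differentiable_exp),
    fun z ↦ ?_⟩
  have h₁ := sub_smul_dslope exp 0 z
  have h₂ := sub_smul_dslope (dslope exp 0) 0 z
  have hderiv : dslope exp 0 0 = 1 := by rw [dslope_same, Complex.deriv_exp, exp_zero]
  rw [smul_eq_mul, sub_zero, exp_zero] at h₁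
  rw [smul_eq_mul, sub_zero, hderiv] at h₂
  linear_combination -h₁ - z * h₂

lemma exists_contDiff_cubicSymbol_mul_exp_eq (t : ℝ) :
    ∃ B : ℂ × ℝ → ℂ, ContDiff ℝ 1 B ∧ ∀ (τ : ℂ) (ξ : ℝ), cubicSymbol t (τ * exp (-2 * I * ξ)) =
      cubicSymbol t τ - 2 * I * τ * (1 + t * τ) ^ 2 * ξ + ξ ^ 2 * B (τ, ξ) := by
  obtain ⟨ψ, hψ, hexp⟩ := exists_differentiable_exp_eq
  have hψ' : ContDiff ℝ 1 ψ := hψ.contDiff.restrict_scalars ℝ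
  refine ⟨fun q ↦ -4 * q.1 * ψ (-2 * I * q.2) - 16 * t * q.1 ^ 2 * ψ (2 * (-2 * I * q.2)) -
    12 * t ^ 2 * q.1 ^ 3 * ψ (3 * (-2 * I * q.2)), ?_, fun τ ξ ↦ ?_⟩
  · have : ContDiff ℝ 1 fun q : ℂ × ℝ ↦ (q.2 : ℂ) := ofRealCLM.contDiff.comp contDiff_snd
    fun_prop
  · have h₂ := hexp (2 * (-2 * I * ξ))
    have h₃ := hexp (3 * (-2 * I * ξ))
    rw [← Nat.cast_ofNat (R := ℂ), exp_nat_mul] at h₂ h₃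
    push_cast at h₂ h₃
    simp only [cubicSymbol, mul_pow]
    linear_combination τ * hexp (-2 * I * ξ) + t * τ ^ 2 * h₂ + t ^ 2 / 3 * τ ^ 3 * h₃ +
      ξ ^ 2 * (4 * τ * ψ (-2 * I * ξ) + 16 * t * τ ^ 2 * ψ (2 * (-2 * I * ξ)) +
        12 * t ^ 2 * τ ^ 3 * ψ (3 * (-2 * I * ξ))) * I_sq

end CubicSymbol

section ModelDisc

/-- The polynomial `p_t`, as a function of `z` alone. -/
noncomputable def cubicPoly (t : ℝ) (z : ℂ) : ℂ :=
  z ^ 2 * conj z + t * z * conj z ^ 2 + t ^ 2 / 3 * conj z ^ 3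

/-- The quotient `z̄ / z` at the boundary point `z = s * exp (I * S)` of a disc, as a function of
`ζ = s ^ 2`, when `S` has real part `X ζ`. -/
noncomputable def phase (X : ℂ → ℝ) (ζ : ℂ) : ℂ := conj ζ * exp (-2 * I * X ζ)

/-- The data of a disc attached to the graph of `cubicPoly t`, in the variable `ζ = s ^ 2`, namely
`s ↦ (s * exp (I * S), s * exp (3 * I * S + E ζ))` where `S` is holomorphic with real part `X ζ` on
the circle, and of a holomorphic direction `b` in which it is deformed: up to the positive factor
`W`, multiplying the second coordinate by `1 + i v b`, with `v` real, amounts to moving the phase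
`z̄ / z` along the circle. -/
structure IsModelDisc (t : ℝ) (X W : ℂ → ℝ) (E b : ℂ → ℂ) : Prop where
  diffContOnCl_exponent : DiffContOnCl ℂ E (Metric.ball 0 1)
  diffContOnCl_direction : DiffContOnCl ℂ b (Metric.ball 0 1)
  isBoundedLipschitzOn_angle : IsBoundedLipschitzOn X (Metric.sphere 0 1)
  isBoundedLipschitzOn_weight : IsBoundedLipschitzOn W (Metric.sphere 0 1)
  weight_pos {ζ : ℂ} (hζ : ‖ζ‖ = 1) : 0 < W ζ
  exp_mul_conj {ζ : ℂ} (hζ : ‖ζ‖ = 1) : exp (E ζ) * conj ζ = cubicSymbol t (phase X ζ)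
  phase_mul_sq {ζ : ℂ} (hζ : ‖ζ‖ = 1) : phase X ζ * (1 + t * phase X ζ) ^ 2 =
    W ζ * b ζ * cubicSymbol t (phase X ζ)

/-- The boundary point `s * exp (I * S)` with `S = X (s ^ 2) + ξ + i y`. -/
noncomputable def discPoint (X : ℂ → ℝ) (s : ℂ) (ξ y : ℝ) : ℂ :=
  s * exp (I * ((X (s ^ 2) + ξ : ℝ) + y * I))

/-- The nonlinear term of the Bishop equation for discs attached to the graph of
`cubicPoly t + Φ`. -/
noncomputable def discNonlinearity (t : ℝ) (X W : ℂ → ℝ) (Φ : ℂ → ℂ) (s : ℂ) (ξ y : ℝ) : ℂ :=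
  W (s ^ 2) * (phase X (s ^ 2) * (1 + t * phase X (s ^ 2)) ^ 2)⁻¹ *
    (cubicSymbol t (phase X (s ^ 2) * exp (-2 * I * ξ)) - cubicSymbol t (phase X (s ^ 2)) +
      2 * I * phase X (s ^ 2) * (1 + t * phase X (s ^ 2)) ^ 2 * ξ +
      Φ (discPoint X s ξ y) * ((discPoint X s ξ y) ^ 3)⁻¹)

/-- The disc with boundary values `S` and deformation `V`, at a point `(s, S s, V s)`. -/
noncomputable def attachedDisc (E b : ℂ → ℂ) (q : ℂ × ℂ × ℂ) : ℂ × ℂ :=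
  (q.1 * exp (I * q.2.1), q.1 * exp (3 * I * q.2.1 + E (q.1 ^ 2)) * (1 + q.2.2 * b (q.1 ^ 2)))

variable {t : ℝ} {X W : ℂ → ℝ} {E b Φ : ℂ → ℂ} {s : ℂ}

lemma norm_phase (X : ℂ → ℝ) {ζ : ℂ} (hζ : ‖ζ‖ = 1) : ‖phase X ζ‖ = 1 := by
  rw [phase, norm_mul, norm_conj, hζ, norm_exp]
  simp

lemma norm_discPoint (X : ℂ → ℝ) (hs : ‖s‖ = 1) (ξ y : ℝ) :
    ‖discPoint X s ξ y‖ = Real.exp (-y) := by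
  rw [discPoint, norm_mul, hs, norm_exp]
  simp

lemma discPoint_ne_zero (X : ℂ → ℝ) (hs : ‖s‖ = 1) (ξ y : ℝ) : discPoint X s ξ y ≠ 0 :=
  norm_pos_iff.1 ((norm_discPoint X hs ξ y).symm ▸ Real.exp_pos _)

lemma phase_mul_ne_zero (ht : |t| < 1) (X : ℂ → ℝ) {ζ : ℂ} (hζ : ‖ζ‖ = 1) :
    phase X ζ * (1 + t * phase X ζ) ^ 2 ≠ 0 := by
  have hnorm := norm_phase X hζ
  refine mul_ne_zero (norm_pos_iff.1 (hnorm.symm ▸ one_pos)) (pow_ne_zero 2 fun h ↦ ht.ne ?_)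
  have := congrArg norm (eq_neg_of_add_eq_zero_right h)
  rwa [norm_mul, hnorm, mul_one, norm_real, Real.norm_eq_abs, norm_neg, norm_one] at this

lemma conj_discPoint (X : ℂ → ℝ) (hs : ‖s‖ = 1) (ξ y : ℝ) : conj (discPoint X s ξ y) =
    discPoint X s ξ y * (phase X (s ^ 2) * exp (-2 * I * ξ)) := by
  have hss : s * conj s = 1 := by rw [mul_conj, normSq_eq_norm_sq, hs, one_pow, ofReal_one]
  have hexp : exp (conj (I * ((X (s ^ 2) + ξ : ℝ) + y * I))) =
      exp (I * ((X (s ^ 2) + ξ : ℝ) + y * I)) * exp (-2 * I * X (s ^ 2)) * exp (-2 * I * ξ) := by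
    rw [← exp_add, ← exp_add]
    simp only [map_mul, map_add, conj_I, conj_ofReal]
    push_cast
    ring_nf
  rw [discPoint, phase, map_mul, ← exp_conj, hexp, map_pow]
  linear_combination (-conj s * exp (I * ((X (s ^ 2) + ξ : ℝ) + y * I)) *
    exp (-2 * I * X (s ^ 2)) * exp (-2 * I * ξ)) * hss

lemma cubicPoly_discPoint (t : ℝ) (X : ℂ → ℝ) (hs : ‖s‖ = 1) (ξ y : ℝ) :
    cubicPoly t (discPoint X s ξ y) =
      discPoint X s ξ y ^ 3 * cubicSymbol t (phase X (s ^ 2) * exp (-2 * I * ξ)) := by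
  rw [cubicPoly, conj_discPoint X hs, cubicSymbol]
  ring

lemma IsModelDisc.discNonlinearity_mul (h : IsModelDisc t X W E b) (ht : |t| < 1) (hs : ‖s‖ = 1)
    (Φ : ℂ → ℂ) (ξ y : ℝ) :
    discNonlinearity t X W Φ s ξ y * b (s ^ 2) * cubicSymbol t (phase X (s ^ 2)) =
      cubicSymbol t (phase X (s ^ 2) * exp (-2 * I * ξ)) - cubicSymbol t (phase X (s ^ 2)) +
        2 * I * phase X (s ^ 2) * (1 + t * phase X (s ^ 2)) ^ 2 * ξ +
        Φ (discPoint X s ξ y) * ((discPoint X s ξ y) ^ 3)⁻¹ := by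
  have hs2 : ‖s ^ 2‖ = 1 := by rw [norm_pow, hs, one_pow]
  have hcancel : W (s ^ 2) * (phase X (s ^ 2) * (1 + t * phase X (s ^ 2)) ^ 2)⁻¹ *
      (b (s ^ 2) * cubicSymbol t (phase X (s ^ 2))) = 1 := by
    rw [mul_right_comm, ← mul_assoc, ← h.phase_mul_sq hs2]
    exact mul_inv_cancel₀ (phase_mul_ne_zero ht X hs2)
  rw [discNonlinearity]
  linear_combination (cubicSymbol t (phase X (s ^ 2) * exp (-2 * I * ξ)) -
    cubicSymbol t (phase X (s ^ 2)) + 2 * I * phase X (s ^ 2) *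
      (1 + t * phase X (s ^ 2)) ^ 2 * ξ + Φ (discPoint X s ξ y) * ((discPoint X s ξ y) ^ 3)⁻¹) *
    hcancel

/-- The Bishop equation `2 W ξ = Im u - T` says that the disc with deformation `Re u + i T` is
attached to the perturbed graph at `s`. -/
lemma IsModelDisc.attachedDisc_eq (h : IsModelDisc t X W E b) (ht : |t| < 1) (hs : ‖s‖ = 1)
    {ξ y T : ℝ} (hξ : ξ = (2 * W (s ^ 2))⁻¹ * ((discNonlinearity t X W Φ s ξ y).im - T)) :
    attachedDisc E b (s, (X (s ^ 2) + ξ : ℝ) + y * I,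
        (discNonlinearity t X W Φ s ξ y).re + T * I) =
      (discPoint X s ξ y, cubicPoly t (discPoint X s ξ y) + Φ (discPoint X s ξ y)) := by
  have hs2 : ‖s ^ 2‖ = 1 := by rw [norm_pow, hs, one_pow]
  refine Prod.ext rfl ?_
  set z := discPoint X s ξ y with hz
  set u := discNonlinearity t X W Φ s ξ y
  set τ := phase X (s ^ 2)
  have hdeformation : (u.re + T * I : ℂ) = u - 2 * I * W (s ^ 2) * ξ := by
    have hT : T = u.im - 2 * W (s ^ 2) * ξ := by
      rw [hξ, mul_inv_cancel_left₀ (mul_pos two_pos (h.weight_pos hs2)).ne', sub_sub_cancel]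
    conv_rhs => rw [← re_add_im u]
    rw [hT]
    push_cast
    ring
  have hss : s * conj s = 1 := by rw [mul_conj, normSq_eq_norm_sq, hs, one_pow, ofReal_one]
  have hleading : s * exp (3 * I * ((X (s ^ 2) + ξ : ℝ) + y * I) + E (s ^ 2)) =
      z ^ 3 * cubicSymbol t τ := by
    rw [← h.exp_mul_conj hs2, hz, discPoint, mul_pow, ← exp_nat_mul, exp_add, map_pow,
      Nat.cast_ofNat, ← mul_assoc 3]
    linear_combination (-s * exp (3 * I * ((X (s ^ 2) + ξ : ℝ) + y * I)) * exp (E (s ^ 2)) *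
      (s * conj s + 1)) * hss
  have hperturbation : z ^ 3 * (Φ z * (z ^ 3)⁻¹) = Φ z := by
    rw [mul_left_comm, mul_inv_cancel₀ (pow_ne_zero 3 (discPoint_ne_zero X hs ξ y)), mul_one]
  calc _ = z ^ 3 * cubicSymbol t τ * (1 + (u - 2 * I * W (s ^ 2) * ξ) * b (s ^ 2)) := by
        rw [← hleading, ← hdeformation]; rfl
    _ = z ^ 3 * cubicSymbol t (τ * exp (-2 * I * ξ)) + z ^ 3 * (Φ z * (z ^ 3)⁻¹) := by
        linear_combination z ^ 3 * h.discNonlinearity_mul ht hs Φ ξ y +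
          2 * I * ξ * z ^ 3 * h.phase_mul_sq hs2
    _ = cubicPoly t z + Φ z := by rw [← cubicPoly_discPoint t X hs, hperturbation]

end ModelDisc

section DiscNonlinearity

variable {t : ℝ} {X W : ℂ → ℝ}

lemma isBoundedLipschitzOn_phase_discPoint (hX : IsBoundedLipschitzOn X (Metric.sphere 0 1))
    (hW : IsBoundedLipschitzOn W (Metric.sphere 0 1)) {D : Set (ℂ × ℝ × ℝ)} (hD : IsCompact D)
    (hD1 : ∀ q ∈ D, ‖q.1‖ = 1) :
    IsBoundedLipschitzOn (fun q : ℂ × ℝ × ℝ ↦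
      (phase X (q.1 ^ 2), W (q.1 ^ 2), q.2.1, discPoint X q.1 q.2.1 q.2.2)) D := by
  have hsq : IsBoundedLipschitzOn (fun q : ℂ × ℝ × ℝ ↦ q.1 ^ 2) D :=
    isBoundedLipschitzOn_of_contDiffAt hD fun _ _ ↦ by fun_prop
  have hmaps : Set.MapsTo (fun q : ℂ × ℝ × ℝ ↦ q.1 ^ 2) D (Metric.sphere 0 1) := fun q hq ↦ by
    rw [mem_sphere_zero_iff_norm, norm_pow, hD1 q hq, one_pow]
  have hid : IsBoundedLipschitzOn (fun q : ℂ × ℝ × ℝ ↦ q) D :=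
    isBoundedLipschitzOn_of_contDiffAt hD fun _ _ ↦ contDiffAt_id
  refine (hid.prodMk ((hX.comp hsq hmaps).prodMk (hW.comp hsq hmaps))).contDiffAt_comp
    (f := fun p : (ℂ × ℝ × ℝ) × ℝ × ℝ ↦ (conj (p.1.1 ^ 2) * exp (-2 * I * p.2.1), p.2.2, p.1.2.1,
      p.1.1 * exp (I * ((p.2.1 + p.1.2.1 : ℝ) + p.1.2.2 * I)))) hD fun q _ ↦ ContDiff.contDiffAt ?_
  have contDiff_ofReal {g : (ℂ × ℝ × ℝ) × ℝ × ℝ → ℝ} (hg : ContDiff ℝ 1 g) :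
      ContDiff ℝ 1 fun p ↦ (g p : ℂ) := ofRealCLM.contDiff.comp hg
  have contDiff_conj {g : (ℂ × ℝ × ℝ) × ℝ × ℝ → ℂ} (hg : ContDiff ℝ 1 g) :
      ContDiff ℝ 1 fun p ↦ conj (g p) := conjCLE.contDiff.comp hg
  have := contDiff_ofReal (g := fun p ↦ p.2.1) (by fun_prop)
  have := contDiff_ofReal (g := fun p ↦ p.1.2.2) (by fun_prop)
  have := contDiff_ofReal (g := fun p ↦ p.2.1 + p.1.2.1) (by fun_prop)
  have := contDiff_conj (g := fun p ↦ p.1.1 ^ 2) (by fun_prop)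
  fun_prop

lemma exists_discNonlinearity_eq (ht : |t| < 1) (hX : IsBoundedLipschitzOn X (Metric.sphere 0 1))
    (hW : IsBoundedLipschitzOn W (Metric.sphere 0 1)) {D : Set (ℂ × ℝ × ℝ)} (hD : IsCompact D)
    (hD1 : ∀ q ∈ D, ‖q.1‖ = 1) :
    ∃ G k : ℂ × ℝ × ℝ → ℂ, IsBoundedLipschitzOn G D ∧ IsBoundedLipschitzOn k D ∧
      ∀ Φ s ξ y, discNonlinearity t X W Φ s ξ y =
        ξ ^ 2 * G (s, ξ, y) + k (s, ξ, y) * Φ (discPoint X s ξ y) := by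
  obtain ⟨B, hB, hQ⟩ := exists_contDiff_cubicSymbol_mul_exp_eq t
  have hmain := isBoundedLipschitzOn_phase_discPoint hX hW hD hD1
  have hne : ∀ q ∈ D, phase X (q.1 ^ 2) * (1 + t * phase X (q.1 ^ 2)) ^ 2 ≠ 0 := fun q hq ↦
    phase_mul_ne_zero ht X (by rw [norm_pow, hD1 q hq, one_pow])
  let w : ℂ × ℝ × ℝ × ℂ → ℂ := fun p ↦ p.2.1 * (p.1 * (1 + t * p.1) ^ 2)⁻¹
  have hw : ∀ q ∈ D, ContDiffAt ℝ 1 w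
      (phase X (q.1 ^ 2), W (q.1 ^ 2), q.2.1, discPoint X q.1 q.2.1 q.2.2) := fun q hq ↦
    (ofRealCLM.contDiff.comp (contDiff_fst.comp contDiff_snd)).contDiffAt.mul
      (ContDiffAt.inv (by fun_prop) (hne q hq))
  refine ⟨_, _, hmain.contDiffAt_comp hD (f := fun p ↦ w p * B (p.1, p.2.2.1)) fun q hq ↦
      (hw q hq).mul (hB.comp (by fun_prop : ContDiff ℝ 1
        fun p : ℂ × ℝ × ℝ × ℂ ↦ (p.1, p.2.2.1))).contDiffAt,
    hmain.contDiffAt_comp hD (f := fun p ↦ w p * (p.2.2.2 ^ 3)⁻¹) fun q hq ↦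
      (hw q hq).mul (ContDiffAt.inv (by fun_prop)
        (pow_ne_zero 3 (discPoint_ne_zero X (hD1 q hq) _ _))), fun Φ s ξ y ↦ ?_⟩
  rw [discNonlinearity, hQ]
  ring

lemma norm_scaledDiff_comp_node_le {E : Type*} [NormedAddCommGroup E] [NormedSpace ℝ E] {m : ℕ}
    {f : ℂ → E} {M : ℝ} (hM : 0 ≤ M)
    (hf : ∀ s s', ‖s‖ = 1 → ‖s'‖ = 1 → ‖f s - f s'‖ ≤ M * ‖s - s'‖) (j : Node m) :
    ‖scaledDiff (fun i ↦ f (node i)) j‖ ≤ 7 * M := by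
  have hm : (0 : ℝ) < 2 * m + 1 := by positivity
  have hstep : (2 * m + 1) * ‖node (j + 1) - node j‖ ≤ 7 := by
    have h := Real.norm_exp_I_mul_ofReal_sub_one_le (x := 2 * Real.pi / (2 * m + 1))
    rw [Real.norm_of_nonneg (by positivity), le_div_iff₀' hm] at h
    rw [node_add, ← mul_sub_one, norm_mul, norm_node, one_mul, node_one]
    linarith [Real.pi_lt_d2]
  rw [norm_scaledDiff]
  calc (2 * m + 1) * ‖f (node (j + 1)) - f (node j)‖
      ≤ (2 * m + 1) * (M * ‖node (j + 1) - node j‖) := by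
        gcongr; exact hf _ _ (norm_node _) (norm_node _)
    _ = (2 * m + 1) * ‖node (j + 1) - node j‖ * M := by ring
    _ ≤ 7 * M := by gcongr

/-- The domain of the Bishop nonlinearity. -/
def nonlinearityDomain (L : ℝ) : Set (ℂ × ℝ × ℝ) :=
  Metric.sphere 0 1 ×ˢ Metric.closedBall 0 2 ×ˢ Metric.closedBall 0 (4 * L)

lemma mem_nonlinearityDomain {L : ℝ} {s : ℂ} {ξ y : ℝ} :
    (s, ξ, y) ∈ nonlinearityDomain L ↔ ‖s‖ = 1 ∧ |ξ| ≤ 2 ∧ |y| ≤ 4 * L := by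
  simp [nonlinearityDomain]

lemma isCompact_nonlinearityDomain (L : ℝ) : IsCompact (nonlinearityDomain L) :=
  (isCompact_sphere _ _).prod ((isCompact_closedBall _ _).prod (isCompact_closedBall _ _))

section

variable {K L M r : ℝ} {G N : ℂ × ℝ × ℝ → ℂ}

lemma norm_sq_mul_add_sub_le (hG : BoundedLipschitzOn M G (nonlinearityDomain L))
    (hN : BoundedLipschitzOn (M * r ^ 2) N (nonlinearityDomain L)) {ξ ξ' : ℝ} (hξ : |ξ| ≤ 2 * r)
    (hξ' : |ξ'| ≤ 2 * r) {s y s' y'} (h : (s, ξ, y) ∈ nonlinearityDomain L)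
    (h' : (s', ξ', y') ∈ nonlinearityDomain L) :
    ‖(ξ ^ 2 * G (s, ξ, y) + N (s, ξ, y)) - (ξ' ^ 2 * G (s', ξ', y') + N (s', ξ', y'))‖ ≤
      4 * M * r * |ξ - ξ'| + 5 * M * r ^ 2 * dist (s, ξ, y) (s', ξ', y') := by
  have := hG.nonneg
  have hr : 0 ≤ r := by linarith [abs_nonneg ξ]
  have hsq : ‖(ξ : ℂ) ^ 2 - ξ' ^ 2‖ ≤ 4 * r * |ξ - ξ'| := by
    rw [sq_sub_sq, norm_mul, ← ofReal_add, ← ofReal_sub, norm_real, norm_real]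
    exact mul_le_mul_of_nonneg_right ((norm_add_le _ _).trans (by
      rw [Real.norm_eq_abs, Real.norm_eq_abs]; linarith)) (abs_nonneg _)
  have hsq' : ‖(ξ' : ℂ) ^ 2‖ ≤ (2 * r) ^ 2 := by
    rw [norm_pow, norm_real]; exact pow_le_pow_left₀ (norm_nonneg _) hξ' 2
  calc _ = ‖((ξ : ℂ) ^ 2 - ξ' ^ 2) * G (s, ξ, y) + ξ' ^ 2 * (G (s, ξ, y) - G (s', ξ', y')) +
        (N (s, ξ, y) - N (s', ξ', y'))‖ := by ring_nf
    _ ≤ ‖(ξ : ℂ) ^ 2 - ξ' ^ 2‖ * ‖G (s, ξ, y)‖ + ‖(ξ' : ℂ) ^ 2‖ * ‖G (s, ξ, y) - G (s', ξ', y')‖ +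
        ‖N (s, ξ, y) - N (s', ξ', y')‖ := by
      rw [← norm_mul, ← norm_mul]; exact norm_add₃_le
    _ ≤ 4 * r * |ξ - ξ'| * M + (2 * r) ^ 2 * (M * dist (s, ξ, y) (s', ξ', y')) +
        M * r ^ 2 * dist (s, ξ, y) (s', ξ', y') := by
      gcongr
      exacts [hG.norm_le h, hG.norm_sub_le h h', hN.norm_sub_le h h']
    _ = _ := by ring

lemma isSmallNonlinearity_sq_mul_add {m : ℕ} (hr : r ≤ 1) (hK : 35 * M ≤ K)
    (hG : BoundedLipschitzOn M G (nonlinearityDomain L))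
    (hN : BoundedLipschitzOn (M * r ^ 2) N (nonlinearityDomain L)) :
    IsSmallNonlinearity K L r
      fun (j : Node m) ξ y ↦ (ξ ^ 2 * G (node j, ξ, y) + N (node j, ξ, y) : ℂ) := by
  have hM := hG.nonneg
  have hmem {s : ℂ} {ξ y : ℝ} (hs : ‖s‖ = 1) (hξ : |ξ| ≤ 2 * r) (hy : |y| ≤ 4 * L) :
      (s, ξ, y) ∈ nonlinearityDomain L := mem_nonlinearityDomain.2 ⟨hs, by linarith, hy⟩
  refine ⟨fun {ξ y} hξ hy j ↦ ?_, fun {ξ y ξ' y'} hξ hy hξ' hy' j ↦ ?_, fun {ξ y} hξ hy j ↦ ?_⟩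
  · have hq := hmem (norm_node j) hξ hy
    have hsq : ‖(ξ : ℂ) ^ 2‖ ≤ (2 * r) ^ 2 := by
      rw [norm_pow, norm_real]; exact pow_le_pow_left₀ (norm_nonneg _) hξ 2
    calc _ ≤ ‖(ξ : ℂ) ^ 2‖ * ‖G (node j, ξ, y)‖ + ‖N (node j, ξ, y)‖ := by
          rw [← norm_mul]; exact norm_add_le _ _
      _ ≤ (2 * r) ^ 2 * M + M * r ^ 2 := by
          gcongr
          exacts [hG.norm_le hq, hN.norm_le hq]
      _ = 5 * M * r ^ 2 := by ring
      _ ≤ K * r ^ 2 := by gcongr; linarith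
  · have hr0 : 0 ≤ r := by linarith [abs_nonneg ξ]
    have hdist : dist (node j, ξ, y) (node j, ξ', y') ≤ |ξ - ξ'| + |y - y'| := by
      simp only [Prod.dist_eq, dist_self, Real.dist_eq]
      exact max_le (by positivity) (max_le_add_of_nonneg (abs_nonneg _) (abs_nonneg _))
    calc _ ≤ 4 * M * r * |ξ - ξ'| + 5 * M * r ^ 2 * (|ξ - ξ'| + |y - y'|) :=
          (norm_sq_mul_add_sub_le hG hN hξ hξ' (hmem (norm_node j) hξ hy)
            (hmem (norm_node j) hξ' hy')).trans (by gcongr)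
      _ = (4 * M + 5 * M * r) * r * |ξ - ξ'| + 5 * M * r ^ 2 * |y - y'| := by ring
      _ ≤ K * r * |ξ - ξ'| + K * r ^ 2 * |y - y'| := by
          gcongr <;> nlinarith
  · calc _ ≤ 7 * (5 * M * r ^ 2) := norm_scaledDiff_comp_node_le (by positivity)
          (f := fun s ↦ (ξ ^ 2 * G (s, ξ, y) + N (s, ξ, y) : ℂ)) (fun s s' hs hs' ↦ by
            have hle := norm_sq_mul_add_sub_le hG hN hξ hξ (hmem hs hξ hy) (hmem hs' hξ hy)
            have hdist : dist (s, ξ, y) (s', ξ, y) = ‖s - s'‖ := by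
              simp [dist_eq_norm]
            rwa [sub_self, abs_zero, mul_zero, zero_add, hdist] at hle) j
      _ = 35 * M * r ^ 2 := by ring
      _ ≤ K * r ^ 2 := by gcongr

end

lemma exists_isSmallNonlinearity_discNonlinearity (ht : |t| < 1)
    (hX : IsBoundedLipschitzOn X (Metric.sphere 0 1))
    (hW : IsBoundedLipschitzOn W (Metric.sphere 0 1)) (L : ℝ) :
    ∃ K ≥ 1, ∀ r ≤ 1, ∀ Φ : ℂ → ℂ,
      BoundedLipschitzOn (r ^ 2) Φ (Metric.closedBall 0 (Real.exp (4 * L))) → ∀ m : ℕ,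
      IsSmallNonlinearity K L r fun j : Node m ↦ discNonlinearity t X W Φ (node j) := by
  have hD1 : ∀ q ∈ nonlinearityDomain L, ‖q.1‖ = 1 := fun q hq ↦
    (mem_nonlinearityDomain.1 hq).1
  have hD := isCompact_nonlinearityDomain L
  obtain ⟨G, k, ⟨M₁, hG⟩, ⟨M₂, hk⟩, hGk⟩ := exists_discNonlinearity_eq ht hX hW hD hD1
  obtain ⟨M₃, hz⟩ := (isBoundedLipschitzOn_phase_discPoint hX hW hD hD1).contDiffAt_comp hD
    (f := fun p ↦ p.2.2.2) fun q _ ↦ by fun_prop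
  have := hG.nonneg
  have := hk.nonneg
  have := hz.nonneg
  set M := M₁ + 2 * M₂ * (1 + M₃)
  have hM₁ : M₁ ≤ M := le_add_of_nonneg_right (by positivity)
  refine ⟨1 + 35 * M, le_add_of_nonneg_right (by positivity), fun r hr1 Φ hΦ m ↦ ?_⟩
  have hmaps {q : ℂ × ℝ × ℝ} (hq : q ∈ nonlinearityDomain L) :
      discPoint X q.1 q.2.1 q.2.2 ∈ Metric.closedBall 0 (Real.exp (4 * L)) := by
    obtain ⟨hs, -, hy⟩ := mem_nonlinearityDomain.1 hq
    rw [mem_closedBall_zero_iff, norm_discPoint X hs, Real.exp_le_exp]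
    linarith [neg_abs_le q.2.2]
  have hΦz : BoundedLipschitzOn (r ^ 2 * (1 + M₃))
      (fun q : ℂ × ℝ × ℝ ↦ Φ (discPoint X q.1 q.2.1 q.2.2)) (nonlinearityDomain L) := by
    refine ⟨by positivity, fun hq ↦ (hΦ.norm_le (hmaps hq)).trans
      (le_mul_of_one_le_right (by positivity) (by linarith)), fun {q q'} hq hq' ↦ ?_⟩
    calc _ ≤ r ^ 2 * (M₃ * dist q q') := (hΦ.norm_sub_le (hmaps hq) (hmaps hq')).trans (by
          rw [dist_eq_norm]; gcongr; exact hz.norm_sub_le hq hq')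
      _ ≤ r ^ 2 * (1 + M₃) * dist q q' := by
          rw [← mul_assoc]; gcongr; linarith
  have hN := (hk.mul hΦz).mono (show _ ≤ M * r ^ 2 by
    simp only [M]; nlinarith [mul_nonneg (hG.nonneg) (sq_nonneg r)])
  have heq : (fun j : Node m ↦ discNonlinearity t X W Φ (node j)) = fun j ξ y ↦
      ξ ^ 2 * G (node j, ξ, y) + k (node j, ξ, y) * Φ (discPoint X (node j) ξ y) :=
    funext₃ fun j ↦ hGk Φ (node j)
  rw [heq]
  exact isSmallNonlinearity_sq_mul_add (m := m) hr1
    (le_add_of_nonneg_left zero_le_one) (hG.mono hM₁) hN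

end DiscNonlinearity

section AttachedDisc

open Metric

variable {t : ℝ} {X W : ℂ → ℝ} {E b : ℂ → ℂ}

/-- The part over the disc of radius `ρ` of the graph of `cubicPoly t + Φ`. -/
def perturbedGraph (t : ℝ) (Φ : ℂ → ℂ) (ρ : ℝ) : Set (ℂ × ℂ) :=
  (fun z ↦ (z, cubicPoly t z + Φ z)) '' closedBall 0 ρ

lemma exists_forall_norm_node_sq_le {f : ℂ → ℝ} (hf : IsBoundedLipschitzOn f (sphere 0 1)) :
    ∃ M ≥ 0, ∀ (m : ℕ) (j : Node m),
      |f (node j ^ 2)| ≤ M ∧ |scaledDiff (fun i ↦ f (node i ^ 2)) j| ≤ M := by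
  have hmaps : Set.MapsTo (fun s : ℂ ↦ s ^ 2) (sphere 0 1) (sphere 0 1) := fun s hs ↦ by
    rw [mem_sphere_zero_iff_norm] at hs ⊢
    rw [norm_pow, hs, one_pow]
  obtain ⟨M, hM⟩ := hf.comp (isBoundedLipschitzOn_of_contDiffAt (isCompact_sphere _ _)
    fun _ _ ↦ by fun_prop) hmaps
  have hmem {s : ℂ} (hs : ‖s‖ = 1) : s ∈ sphere 0 1 := mem_sphere_zero_iff_norm.2 hs
  have := hM.nonneg
  exact ⟨7 * M, by positivity, fun m j ↦
    ⟨(hM.norm_le (hmem (norm_node j))).trans (by linarith), norm_scaledDiff_comp_node_le hM.nonneg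
      (fun s s' hs hs' ↦ dist_eq_norm s s' ▸ hM.norm_sub_le (hmem hs) (hmem hs')) j⟩⟩

lemma re_bishopTerm_mem_sobolevBall {m : ℕ} {K L r : ℝ} {H : Node m → ℝ → ℝ → ℂ}
    {x₀ ξ : Node m → ℝ} (hH : IsSmallNonlinearity K L r H) (hK : 1 ≤ K) (hL : 1 ≤ L) (hr : 0 ≤ r)
    (hr0 : r * (14 * K * L ^ 2) ≤ 1) (hx₀ : x₀ ∈ sobolevBall m L) (hξ : ξ ∈ sobolevBall m r) :
    (fun j ↦ (bishopTerm H x₀ ξ j).re) ∈ sobolevBall m 1 := by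
  have hKL : 1 ≤ K * L ^ 2 := one_le_mul_of_one_le_of_one_le hK (one_le_pow₀ hL)
  have hr1 : r ≤ 1 := by nlinarith
  have hK0 : 0 ≤ K := by linarith
  have hle : 4 * K * L * r ^ 2 ≤ 1 := by
    calc 4 * K * L * r ^ 2 = 4 * K * r ^ 2 * L := by ring
      _ ≤ 4 * K * r ^ 2 * L ^ 2 := by gcongr; exact le_self_pow₀ hL two_ne_zero
      _ = r * (r * (4 * K * L ^ 2)) := by ring
      _ ≤ r * (r * (14 * K * L ^ 2)) := by gcongr; norm_num
      _ ≤ 1 := (mul_le_of_le_one_right hr hr0).trans hr1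
  constructor
  · refine (rms_le_rms fun j ↦ abs_re_le_norm _).trans
      ((hH.rms_bishopTerm_le hK0 (hr1.trans hL) hx₀ hξ).trans (le_trans ?_ hle))
    rw [mul_right_comm]
    exact le_trans (by nlinarith [mul_nonneg hK0 (sq_nonneg r)])
      (le_mul_of_one_le_right (by positivity) hL)
  · refine le_trans (rms_le_rms fun j ↦ ?_)
      ((hH.rms_scaledDiff_bishopTerm_le hK0 hL hr (hr1.trans hL) hx₀ hξ).trans hle)
    rw [norm_scaledDiff, norm_scaledDiff, ← sub_re]
    gcongr
    exact abs_re_le_norm _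

/-- Discs through the origin, depending on polynomials of degree `≤ m`, whose boundary meets the
perturbed graph at the `2 * m + 1` nodes, with bounds uniform in `m`. -/
theorem IsModelDisc.exists_attachedDisc_node_mem (h : IsModelDisc t X W E b) (ht : |t| < 1) :
    ∃ ε > 0, ∃ ρ > 0, ∃ R > 0, ∀ Φ : ℂ → ℂ, BoundedLipschitzOn ε Φ (closedBall 0 ρ) → ∀ m : ℕ,
      ∃ x ∈ sobolevBall m R, ∃ v ∈ sobolevBall m R, ∀ j : Node m, attachedDisc E b (node j,
        (schwarzPoly m x).eval (node j), (schwarzPoly m v).eval (node j)) ∈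
          perturbedGraph t Φ ρ := by
  have hg : IsBoundedLipschitzOn (fun ζ ↦ (2 * W ζ)⁻¹) (sphere 0 1) :=
    h.isBoundedLipschitzOn_weight.contDiffAt_comp (isCompact_sphere _ _)
      (f := fun w : ℝ ↦ (2 * w)⁻¹) fun ζ hζ ↦ ContDiffAt.inv (by fun_prop)
        (mul_pos two_pos (h.weight_pos (mem_sphere_zero_iff_norm.1 hζ))).ne'
  obtain ⟨M₁, hM₁, hX⟩ := exists_forall_norm_node_sq_le h.isBoundedLipschitzOn_angle
  obtain ⟨M₂, hM₂, hg⟩ := exists_forall_norm_node_sq_le hg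
  set L := 1 + M₁ + M₂
  have hL : 1 ≤ L := by linarith
  obtain ⟨K, hK, hH⟩ := exists_isSmallNonlinearity_discNonlinearity ht h.isBoundedLipschitzOn_angle
    h.isBoundedLipschitzOn_weight L
  have hKL : 1 ≤ K * L ^ 2 := one_le_mul_of_one_le_of_one_le hK (one_le_pow₀ hL)
  set r := 1 / (14 * K * L ^ 2)
  have hr : 0 < r := by positivity
  have hr0 : r * (14 * K * L ^ 2) ≤ 1 := (div_mul_cancel₀ 1 (by positivity)).le
  have hr1 : r ≤ 1 := by nlinarith
  refine ⟨r ^ 2, by positivity, Real.exp (4 * L), Real.exp_pos _, 2 * L, by positivity,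
    fun Φ hΦ m ↦ ?_⟩
  specialize hH r hr1 Φ hΦ m
  have hx₀ : (fun j : Node m ↦ X (node j ^ 2)) ∈ sobolevBall m L :=
    ⟨rms_le_of_forall_norm_le (by linarith) fun j ↦ (hX m j).1.trans (by linarith),
      rms_le_of_forall_norm_le (by linarith) fun j ↦ (hX m j).2.trans (by linarith)⟩
  obtain ⟨ξ, hξ, hfix⟩ := exists_eq_mul_conjugateDefect_bishopTerm hK hL hr.le hr0 hx₀
    (fun j ↦ (hg m j).1.trans (by linarith)) (fun j ↦ (hg m j).2.trans (by linarith)) hH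
  have hx := add_mem_sobolevBall hx₀ hξ
  have hv := re_bishopTerm_mem_sobolevBall hH hK hL hr.le hr0 hx₀ hξ
  refine ⟨_, ⟨hx.1.trans (by linarith), hx.2.trans (by linarith)⟩, _,
    ⟨hv.1.trans (by linarith), hv.2.trans (by linarith)⟩, fun j ↦ ?_⟩
  rw [eval_schwarzPoly_node, eval_schwarzPoly_node]
  have hdisc := h.attachedDisc_eq ht (norm_node j) (congrFun hfix j)
  refine ⟨_, ?_, hdisc.symm⟩
  rw [mem_closedBall_zero_iff, norm_discPoint X (norm_node j), Real.exp_le_exp]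
  linarith [neg_abs_le (conjugate m ((fun j ↦ X (node j ^ 2)) + ξ) j),
    abs_conjugate_add_le (hr1.trans hL) hx₀ hξ j]

lemma exists_norm_sub_node_le (m : ℕ) {s : ℂ} (hs : ‖s‖ = 1) :
    ∃ j : Node m, ‖s - node j‖ ≤ 7 / (2 * m + 1) := by
  have hm : (0 : ℝ) < 2 * m + 1 := by positivity
  have := Real.pi_pos
  set a := 2 * Real.pi / (2 * m + 1)
  have ha : 0 < a := by positivity
  set k : ℤ := ⌊arg s / a⌋
  refine ⟨(k : Node m), ?_⟩
  have hnode : node (k : Node m) = exp (I * (k * a : ℝ)) := by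
    refine (ZMod.stdAddChar_coe (N := 2 * m + 1) k).trans (congrArg exp ?_)
    simp only [a]
    push_cast
    ring
  have hs' : s = node (k : Node m) * exp (I * (arg s - k * a : ℝ)) := by
    have h := norm_mul_exp_arg_mul_I s
    rw [hs, ofReal_one, one_mul] at h
    rw [hnode, ← exp_add, ← mul_add, ← ofReal_add, add_sub_cancel, mul_comm, h]
  have hlow := (le_div_iff₀ ha).1 (Int.floor_le (arg s / a))
  have hupp := (div_lt_iff₀ ha).1 (Int.lt_floor_add_one (arg s / a))
  calc ‖s - node (k : Node m)‖ = ‖exp (I * (arg s - k * a : ℝ)) - 1‖ := by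
        conv_lhs => rw [hs', ← mul_sub_one, norm_mul, norm_node, one_mul]
    _ ≤ arg s - k * a := Real.norm_exp_I_mul_ofReal_sub_one_le.trans_eq
        (Real.norm_of_nonneg (sub_nonneg.2 hlow))
    _ ≤ a := by linarith
    _ ≤ 7 / (2 * m + 1) := div_le_div_of_nonneg_right (by linarith [Real.pi_lt_d2]) hm.le

lemma exists_differentiable_attachedDisc_eq :
    ∃ A : (ℂ × ℂ × ℂ) × ℂ × ℂ → ℂ × ℂ, Differentiable ℂ A ∧
      ∀ E b q, attachedDisc E b q = A (q, E (q.1 ^ 2), b (q.1 ^ 2)) :=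
  ⟨fun p ↦ (p.1.1 * exp (I * p.1.2.1),
    p.1.1 * exp (3 * I * p.1.2.1 + p.2.1) * (1 + p.1.2.2 * p.2.2)), by fun_prop, fun _ _ _ ↦ rfl⟩

lemma continuousOn_attachedDisc (hE : DiffContOnCl ℂ E (ball 0 1))
    (hb : DiffContOnCl ℂ b (ball 0 1)) :
    ContinuousOn (attachedDisc E b) {q | ‖q.1‖ ≤ 1} := by
  obtain ⟨A, hA, heq⟩ := exists_differentiable_attachedDisc_eq
  have hsq : Set.MapsTo (fun q : ℂ × ℂ × ℂ ↦ q.1 ^ 2) {q | ‖q.1‖ ≤ 1} (closure (ball 0 1)) :=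
    fun q hq ↦ by
      rw [closure_ball _ one_ne_zero, mem_closedBall_zero_iff, norm_pow]
      exact pow_le_one₀ (norm_nonneg _) hq
  refine (hA.continuous.comp_continuousOn (continuousOn_id.prodMk
    ((hE.continuousOn.comp (by fun_prop) hsq).prodMk
      (hb.continuousOn.comp (by fun_prop) hsq)))).congr fun q _ ↦ heq E b q

lemma diffContOnCl_attachedDisc (hE : DiffContOnCl ℂ E (ball 0 1))
    (hb : DiffContOnCl ℂ b (ball 0 1)) {S V : ℂ → ℂ} (hS : Differentiable ℂ S)
    (hV : Differentiable ℂ V) :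
    DiffContOnCl ℂ (fun s ↦ attachedDisc E b (s, S s, V s)) (ball 0 1) where
  differentiableOn := by
    obtain ⟨A, hA, heq⟩ := exists_differentiable_attachedDisc_eq
    have hsq : Set.MapsTo (fun s : ℂ ↦ s ^ 2) (ball 0 1) (ball 0 1) := fun s hs ↦ by
      rw [mem_ball_zero_iff] at hs ⊢
      rw [norm_pow]
      exact pow_lt_one₀ (norm_nonneg _) hs two_ne_zero
    have hSV := (differentiable_id.prodMk (hS.prodMk hV)).differentiableOn (s := ball 0 1)
    exact (hA.comp_differentiableOn (hSV.prodMk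
      ((hE.differentiableOn.comp (by fun_prop) hsq).prodMk
        (hb.differentiableOn.comp (by fun_prop) hsq)))).congr fun s _ ↦ heq E b _
  continuousOn := by
    refine (continuousOn_attachedDisc hE hb).comp
      (continuous_id.prodMk (hS.continuous.prodMk hV.continuous)).continuousOn fun s hs ↦ ?_
    rwa [closure_ball _ one_ne_zero, mem_closedBall_zero_iff] at hs

lemma norm_eval_schwarzPoly_node_le {m : ℕ} {R : ℝ} {x : Node m → ℝ} (hx : x ∈ sobolevBall m R)
    (j : Node m) : ‖(schwarzPoly m x).eval (node j)‖ ≤ 4 * R := by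
  rw [eval_schwarzPoly_node]
  refine (norm_add_le _ _).trans ?_
  rw [norm_mul, norm_I, mul_one, norm_real, norm_real]
  have h := abs_le_of_mem_sobolevBall hx j
  have h' := abs_le_of_mem_sobolevBall (conjugate_mem_sobolevBall hx) j
  rw [← Real.norm_eq_abs] at h h'
  linarith

lemma norm_eval_schwarzPoly_sub_node_le {m : ℕ} (hm : 1 ≤ m) {R : ℝ} {x : Node m → ℝ}
    (hx : x ∈ sobolevBall m R) {s : ℂ} (hs : ‖s‖ = 1) {j : Node m}
    (hj : ‖s - node j‖ ≤ 7 / (2 * m + 1)) :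
    ‖(schwarzPoly m x).eval s - (schwarzPoly m x).eval (node j)‖ ≤ 7 * R / √m := by
  have hR : 0 ≤ R := (rms_nonneg _).trans hx.1
  have hm0 : 0 < √(m : ℝ) := Real.sqrt_pos.2 (by exact_mod_cast hm)
  have hle : √m * (7 / (2 * m + 1)) ≤ 7 / √m := by
    rw [← mul_div_assoc, div_le_div_iff₀ (by positivity) hm0]
    nlinarith [Real.mul_self_sqrt (Nat.cast_nonneg (α := ℝ) m)]
  calc _ ≤ rms (scaledDiff x) * √m * ‖s - node j‖ :=
        norm_eval_schwarzPoly_sub_le x hs.le (norm_node j).le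
    _ ≤ R * √m * (7 / (2 * m + 1)) := by gcongr; exact hx.2
    _ = R * (√m * (7 / (2 * m + 1))) := mul_assoc _ _ _
    _ ≤ R * (7 / √m) := by gcongr
    _ = 7 * R / √m := by ring

lemma exists_forall_exists_node_norm_sub_lt {R δ : ℝ} (hR : 0 ≤ R) (hδ : 0 < δ) :
    ∃ m : ℕ, ∀ s : ℂ, ‖s‖ = 1 → ∃ j : Node m, ‖s - node j‖ < δ ∧ ∀ x ∈ sobolevBall m R,
      ‖(schwarzPoly m x).eval s - (schwarzPoly m x).eval (node j)‖ < δ := by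
  have hlim : Filter.Tendsto (fun m : ℕ ↦ 7 * (R + 1) / √m) Filter.atTop (nhds 0) :=
    (Real.tendsto_sqrt_atTop.comp tendsto_natCast_atTop_atTop).const_div_atTop _
  obtain ⟨m, hmδ, hm⟩ := ((hlim.eventually_lt_const hδ).and
    (Filter.eventually_ge_atTop 1)).exists
  refine ⟨m, fun s hs ↦ ?_⟩
  obtain ⟨j, hj⟩ := exists_norm_sub_node_le m hs
  refine ⟨j, hj.trans_lt (lt_of_le_of_lt (div_le_div₀ (by positivity) (by linarith)
    (by positivity) ?_) hmδ), fun x hx ↦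
      (norm_eval_schwarzPoly_sub_node_le hm hx hs hj).trans_lt (lt_of_le_of_lt ?_ hmδ)⟩
  · nlinarith [Real.sq_sqrt (Nat.cast_nonneg (α := ℝ) m)]
  · gcongr
    linarith

/-- By the bounds uniform in `m`, the part of the boundary of the disc between consecutive nodes is
close to the perturbed graph when `m` is large. -/
lemma exists_forall_norm_attachedDisc_le (hE : DiffContOnCl ℂ E (ball 0 1))
    (hb : DiffContOnCl ℂ b (ball 0 1)) {P : ℂ × ℂ → ℂ} (hP : Continuous P) {R C η : ℝ}
    (hR : 0 ≤ R) (hη : 0 < η) :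
    ∃ m : ℕ, ∀ x ∈ sobolevBall m R, ∀ v ∈ sobolevBall m R,
      (∀ j : Node m, ‖P (attachedDisc E b (node j, (schwarzPoly m x).eval (node j),
        (schwarzPoly m v).eval (node j)))‖ ≤ C) → ∀ s, ‖s‖ = 1 →
      ‖P (attachedDisc E b (s, (schwarzPoly m x).eval s, (schwarzPoly m v).eval s))‖ ≤ C + η := by
  set D : Set (ℂ × ℂ × ℂ) :=
    closedBall 0 1 ×ˢ closedBall 0 (4 * R + 1) ×ˢ closedBall 0 (4 * R + 1)
  have hD : IsCompact D := (isCompact_closedBall _ _).prod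
    ((isCompact_closedBall _ _).prod (isCompact_closedBall _ _))
  have huc := hD.uniformContinuousOn_of_continuous (hP.comp_continuousOn
    ((continuousOn_attachedDisc hE hb).mono fun q hq ↦ mem_closedBall_zero_iff.1 hq.1))
  obtain ⟨δ, hδ, hclose⟩ := Metric.uniformContinuousOn_iff.1 huc η hη
  obtain ⟨m, hm⟩ := exists_forall_exists_node_norm_sub_lt hR (lt_min hδ one_pos)
  refine ⟨m, fun x hx v hv hnode s hs ↦ ?_⟩
  obtain ⟨j, hj, hnear⟩ := hm s hs
  obtain ⟨hxδ, hx1⟩ := lt_min_iff.1 (hnear x hx)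
  obtain ⟨hvδ, hv1⟩ := lt_min_iff.1 (hnear v hv)
  have hxj := norm_eval_schwarzPoly_node_le hx j
  have hvj := norm_eval_schwarzPoly_node_le hv j
  have hmem : (s, (schwarzPoly m x).eval s, (schwarzPoly m v).eval s) ∈ D := by
    simp only [D, Set.mem_prod, mem_closedBall_zero_iff]
    exact ⟨hs.le, by linarith [(norm_sub_norm_le _ _).trans hx1.le],
      by linarith [(norm_sub_norm_le _ _).trans hv1.le]⟩
  have hmem' : (node j, (schwarzPoly m x).eval (node j), (schwarzPoly m v).eval (node j)) ∈ D := by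
    simp only [D, Set.mem_prod, mem_closedBall_zero_iff]
    exact ⟨(norm_node j).le, by linarith, by linarith⟩
  have hdist := hclose _ hmem _ hmem' (by
    rw [Prod.dist_eq, Prod.dist_eq, dist_eq_norm, dist_eq_norm, dist_eq_norm]
    exact max_lt (lt_min_iff.1 hj).1 (max_lt hxδ hvδ))
  rw [dist_eq_norm] at hdist
  exact (norm_le_norm_add_norm_sub' _ _).trans (add_le_add (hnode j) hdist.le)

/-- The maximum principle for the discs of `exists_attachedDisc_node_mem`, in the limit `m → ∞`. -/
theorem IsModelDisc.exists_forall_norm_zero_le (h : IsModelDisc t X W E b) (ht : |t| < 1) :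
    ∃ ε > 0, ∃ ρ > 0, ∀ Φ : ℂ → ℂ, BoundedLipschitzOn ε Φ (closedBall 0 ρ) →
      ∀ P : ℂ × ℂ → ℂ, Differentiable ℂ P → ∀ C, (∀ q ∈ perturbedGraph t Φ ρ, ‖P q‖ ≤ C) →
        ‖P 0‖ ≤ C := by
  obtain ⟨ε, hε, ρ, hρ, R, hR, hdisc⟩ := h.exists_attachedDisc_node_mem ht
  refine ⟨ε, hε, ρ, hρ, fun Φ hΦ P hP C hC ↦ le_of_forall_pos_le_add fun η hη ↦ ?_⟩
  have hE := h.diffContOnCl_exponent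
  have hb := h.diffContOnCl_direction
  obtain ⟨m, hm⟩ := exists_forall_norm_attachedDisc_le hE hb hP.continuous (C := C) hR.le hη
  obtain ⟨x, hx, v, hv, hmem⟩ := hdisc Φ hΦ m
  have hdiff := diffContOnCl_attachedDisc hE hb (schwarzPoly m x).differentiable
    (schwarzPoly m v).differentiable
  have hmax := norm_le_of_forall_mem_frontier_norm_le isBounded_ball (hP.comp_diffContOnCl hdiff)
    (C := C + η) (fun s hs ↦ hm x hx v hv (fun j ↦ hC _ (hmem j)) s
      (mem_sphere_zero_iff_norm.1 (frontier_ball (0 : ℂ) one_ne_zero ▸ hs)))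
    (subset_closure (mem_ball_self one_pos))
  simpa [attachedDisc, Prod.mk_zero_zero] using hmax

end AttachedDisc

/-! ### The three sheets of the cubic symbol -/

/-- The cube roots of unity in `ℂ`. -/
noncomputable def cubeRoots : Finset ℂ := nthRootsFinset 3 1

/-- The solution `s` of `cubicSymbol t s = cubicSymbol t σ` with `1 + t s = ω (1 + t σ)`, for a cube
root of unity `ω`. The sheet of `ω = 1` is `σ` itself. -/
noncomputable def sheet (t : ℝ) (ω σ : ℂ) : ℂ := (ω * (1 + t * σ) - 1) / t

/-- The points `c` for which `c⁻¹` is not a value of the cubic symbol on the closed unit disc. -/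
def exteriorDomain (t : ℝ) : Set ℂ := {c | ∀ σ : ℂ, ‖σ‖ ≤ 1 → c * cubicSymbol t σ ≠ 1}

lemma mem_cubeRoots {ω : ℂ} : ω ∈ cubeRoots ↔ ω ^ 3 = 1 :=
  mem_nthRootsFinset (by norm_num) 1

lemma one_mem_cubeRoots : 1 ∈ cubeRoots := mem_cubeRoots.2 (one_pow 3)

lemma norm_of_mem_cubeRoots {ω : ℂ} (hω : ω ∈ cubeRoots) : ‖ω‖ = 1 :=
  norm_eq_one_of_pow_eq_one (mem_cubeRoots.1 hω) three_ne_zero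

lemma ne_zero_of_mem_cubeRoots {ω : ℂ} (hω : ω ∈ cubeRoots) : ω ≠ 0 := by
  rintro rfl
  simp [mem_cubeRoots] at hω

lemma inv_mem_cubeRoots {ω : ℂ} (hω : ω ∈ cubeRoots) : ω⁻¹ ∈ cubeRoots := by
  rw [mem_cubeRoots, inv_pow, mem_cubeRoots.1 hω, inv_one]

lemma card_cubeRoots : cubeRoots.card = 3 :=
  (Complex.isPrimitiveRoot_exp 3 three_ne_zero).card_nthRootsFinset

lemma sum_cubeRoots_pow {k : ℕ} (hk : ¬ 3 ∣ k) : ∑ ω ∈ cubeRoots, ω ^ k = 0 := by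
  have hprim := Complex.isPrimitiveRoot_exp 3 three_ne_zero
  set ω₀ := exp (2 * Real.pi * I / (3 : ℕ))
  have hω₀ : ω₀ ≠ 0 := hprim.ne_zero three_ne_zero
  have hmem : ∀ ω, ω₀ * ω ∈ cubeRoots ↔ ω ∈ cubeRoots := fun ω ↦ by
    rw [mem_cubeRoots, mem_cubeRoots, mul_pow, hprim.pow_eq_one, one_mul]
  have hrot : ∑ ω ∈ cubeRoots, (ω₀ * ω) ^ k = ∑ ω ∈ cubeRoots, ω ^ k :=
    Finset.sum_equiv (Equiv.mulLeft₀ ω₀ hω₀) (fun ω ↦ (hmem ω).symm) fun _ _ ↦ rfl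
  simp only [mul_pow, ← Finset.mul_sum] at hrot
  have hk₀ : ω₀ ^ k ≠ 1 := fun h ↦ hk (hprim.dvd_of_pow_eq_one k h)
  exact (mul_left_eq_self₀.1 hrot).resolve_left hk₀

lemma sum_cubeRoots : ∑ ω ∈ cubeRoots, ω = 0 := by
  simpa using sum_cubeRoots_pow (k := 1) (by norm_num)

lemma norm_one_sub_of_mem_cubeRoots {ω : ℂ} (hω : ω ∈ cubeRoots) (hω1 : ω ≠ 1) :
    ‖1 - ω‖ = √3 := by
  have hquad : ω ^ 2 + ω + 1 = 0 := by
    refine (mul_eq_zero.1 ?_).resolve_left (sub_ne_zero.2 hω1)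
    linear_combination mem_cubeRoots.1 hω
  have hsq : (1 - ω) ^ 2 = -3 * ω := by linear_combination hquad
  have hnorm : ‖1 - ω‖ ^ 2 = 3 := by
    rw [← norm_pow, hsq, norm_mul, norm_of_mem_cubeRoots hω]
    norm_num
  rw [← hnorm, Real.sqrt_sq (norm_nonneg _)]

lemma three_mul_mul_cubicSymbol (t : ℝ) (σ : ℂ) :
    3 * t * cubicSymbol t σ = (1 + t * σ) ^ 3 - 1 := by
  rw [cubicSymbol]
  ring

lemma cubicSymbol_zero (t : ℝ) : cubicSymbol t 0 = 0 := by
  simp [cubicSymbol]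

lemma continuous_cubicSymbol (t : ℝ) : Continuous (cubicSymbol t) := by
  unfold cubicSymbol
  fun_prop

lemma hasStrictDerivAt_cubicSymbol (t : ℝ) (σ : ℂ) :
    HasStrictDerivAt (cubicSymbol t) ((1 + t * σ) ^ 2) σ := by
  have hid := hasStrictDerivAt_id σ
  refine ((hid.add ((hid.pow 2).const_mul (t : ℂ))).add
    ((hid.pow 3).const_mul ((t : ℂ) ^ 2 / 3))).congr_deriv ?_
  simp only [id_eq]
  ring

variable {t : ℝ} {σ s ω : ℂ}

lemma one_add_mul_ne_zero (ht : |t| < 1) (hσ : ‖σ‖ ≤ 1) : 1 + t * σ ≠ 0 := by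
  intro h
  have hnorm : |t| * ‖σ‖ = 1 := by
    rw [← Real.norm_eq_abs, ← Complex.norm_real, ← norm_mul, eq_neg_of_add_eq_zero_right h,
      norm_neg, norm_one]
  nlinarith [abs_nonneg t]

lemma one_add_mul_sheet (ht : t ≠ 0) (ω σ : ℂ) : 1 + t * sheet t ω σ = ω * (1 + t * σ) := by
  rw [sheet, mul_div_cancel₀ _ (ofReal_ne_zero.2 ht)]
  ring

lemma sheet_one (ht : t ≠ 0) (σ : ℂ) : sheet t 1 σ = σ := by
  rw [sheet, one_mul, add_sub_cancel_left, mul_div_cancel_left₀ _ (ofReal_ne_zero.2 ht)]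

lemma cubicSymbol_sheet (ht : t ≠ 0) (hω : ω ∈ cubeRoots) (σ : ℂ) :
    cubicSymbol t (sheet t ω σ) = cubicSymbol t σ := by
  refine mul_left_cancel₀ (mul_ne_zero three_ne_zero (ofReal_ne_zero.2 ht)) ?_
  rw [three_mul_mul_cubicSymbol, three_mul_mul_cubicSymbol, one_add_mul_sheet ht, mul_pow,
    mem_cubeRoots.1 hω, one_mul]

lemma hasDerivAt_sheet (ht : t ≠ 0) (ω σ : ℂ) : HasDerivAt (sheet t ω) ω σ := by
  have ht' : (t : ℂ) ≠ 0 := ofReal_ne_zero.2 ht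
  refine ((((((hasDerivAt_id σ).const_mul (t : ℂ)).const_add 1).const_mul ω).sub_const
    1).div_const (t : ℂ)).congr_deriv ?_
  field_simp

lemma sheet_sub (ht : t ≠ 0) (hω : ω ≠ 0) (τ σ : ℂ) :
    sheet t ω τ - σ = ω * (τ - sheet t ω⁻¹ σ) := by
  have ht' : (t : ℂ) ≠ 0 := ofReal_ne_zero.2 ht
  simp only [sheet]
  field_simp
  ring

lemma sqrt_three_le_norm_sheet (ht : 0 < t) (hω : ω ∈ cubeRoots) (hω1 : ω ≠ 1) (σ : ℂ) :
    √3 ≤ t * (‖sheet t ω σ‖ + ‖σ‖) := by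
  have hsplit : 1 - ω = ω * (t * σ) - t * sheet t ω σ := by
    linear_combination one_add_mul_sheet ht.ne' ω σ
  rw [← norm_one_sub_of_mem_cubeRoots hω hω1, hsplit]
  refine (norm_sub_le _ _).trans_eq ?_
  rw [norm_mul, norm_mul, norm_mul, norm_of_mem_cubeRoots hω, norm_real, Real.norm_of_nonneg ht.le]
  ring

lemma exists_eq_sheet (ht : t ≠ 0) (h : cubicSymbol t s = cubicSymbol t σ) :
    ∃ ω ∈ cubeRoots, s = sheet t ω σ := by
  have ht' : (t : ℂ) ≠ 0 := ofReal_ne_zero.2 ht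
  have hcube : (1 + t * s) ^ 3 = (1 + t * σ) ^ 3 := by
    linear_combination 3 * t * h - three_mul_mul_cubicSymbol t s + three_mul_mul_cubicSymbol t σ
  rcases eq_or_ne (1 + t * σ) 0 with hσ | hσ
  · refine ⟨1, one_mem_cubeRoots, ?_⟩
    rw [hσ, zero_pow three_ne_zero] at hcube
    rw [sheet_one ht]
    refine mul_left_cancel₀ ht' ?_
    linear_combination (pow_eq_zero_iff three_ne_zero).1 hcube - hσ
  · refine ⟨(1 + t * s) / (1 + t * σ), ?_, ?_⟩
    · rw [mem_cubeRoots, div_pow, hcube, div_self (pow_ne_zero 3 hσ)]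
    · rw [sheet, div_mul_cancel₀ _ hσ, add_sub_cancel_left, mul_div_cancel_left₀ _ ht']

lemma eq_of_cubicSymbol_eq (ht : 0 < t) (hsum : t * (‖s‖ + ‖σ‖) < √3)
    (h : cubicSymbol t s = cubicSymbol t σ) : s = σ := by
  obtain ⟨ω, hω, rfl⟩ := exists_eq_sheet ht.ne' h
  rcases eq_or_ne ω 1 with rfl | hω1
  · exact sheet_one ht.ne' σ
  · exact absurd hsum (sqrt_three_le_norm_sheet ht hω hω1 σ).not_gt

lemma cubicSymbol_ne_zero (ht : 0 < t) (hσ : σ ≠ 0) (hlt : t * ‖σ‖ < √3) :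
    cubicSymbol t σ ≠ 0 := by
  intro h
  refine hσ (eq_of_cubicSymbol_eq ht (σ := 0) (by simpa using hlt) ?_)
  rw [h, cubicSymbol_zero]

lemma sheet_ne_zero (ht : t ≠ 0) (hω : ω ∈ cubeRoots) (hσ : cubicSymbol t σ ≠ 0) :
    sheet t ω σ ≠ 0 := by
  intro h
  rw [← cubicSymbol_sheet ht hω, h, cubicSymbol_zero] at hσ
  exact hσ rfl

lemma sum_div_sheet (ht : t ≠ 0) (hσ : cubicSymbol t σ ≠ 0) :
    ∑ ω ∈ cubeRoots, ω / sheet t ω σ = (1 + t * σ) ^ 2 / cubicSymbol t σ := by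
  have ht' : (t : ℂ) ≠ 0 := ofReal_ne_zero.2 ht
  have hterm : ∀ ω ∈ cubeRoots, ω / sheet t ω σ =
      ((1 + t * σ) ^ 2 + ω ^ 2 * (1 + t * σ) + ω) / (3 * cubicSymbol t σ) := fun ω hω ↦ by
    have hs : sheet t ω σ ≠ 0 := sheet_ne_zero ht hω hσ
    have hcube := mem_cubeRoots.1 hω
    rw [div_eq_div_iff hs (mul_ne_zero three_ne_zero hσ)]
    refine mul_left_cancel₀ ht' ?_
    linear_combination ω * three_mul_mul_cubicSymbol t σ -
      ((1 + t * σ) ^ 2 + ω ^ 2 * (1 + t * σ) + ω) * one_add_mul_sheet ht ω σ -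
      (1 + t * σ) ^ 2 * hcube
  rw [Finset.sum_congr rfl hterm, ← Finset.sum_div, Finset.sum_add_distrib, Finset.sum_add_distrib,
    ← Finset.sum_mul, sum_cubeRoots, sum_cubeRoots_pow (k := 2) (by norm_num), Finset.sum_const,
    card_cubeRoots]
  field_simp
  ring

/-! ### The maximum principle on the exterior domain -/

lemma image_cubicSymbol_closedBall_mem_nhds (ht : |t| < 1) (hσ : ‖σ‖ < 1) :
    cubicSymbol t '' Metric.closedBall 0 1 ∈ nhds (cubicSymbol t σ) := by
  have hderiv : (1 + t * σ) ^ 2 ≠ 0 := pow_ne_zero 2 (one_add_mul_ne_zero ht hσ.le)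
  rw [← (hasStrictDerivAt_cubicSymbol t σ).map_nhds_eq hderiv]
  exact Filter.image_mem_map (Filter.mem_of_superset
    (Metric.isOpen_ball.mem_nhds (mem_ball_zero_iff.2 hσ)) Metric.ball_subset_closedBall)

lemma zero_mem_exteriorDomain (t : ℝ) : 0 ∈ exteriorDomain t := fun σ _ ↦ by simp

lemma isOpen_exteriorDomain (t : ℝ) : IsOpen (exteriorDomain t) := by
  have hcompl : (exteriorDomain t)ᶜ =
      Prod.fst '' {p : ℂ × Metric.closedBall (0 : ℂ) 1 | p.1 * cubicSymbol t p.2 = 1} := by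
    ext c
    simp [exteriorDomain]
  rw [← isClosed_compl_iff, hcompl]
  have : CompactSpace (Metric.closedBall (0 : ℂ) 1) :=
    isCompact_iff_compactSpace.1 (isCompact_closedBall _ _)
  exact isClosedMap_fst_of_compactSpace _ (isClosed_eq (continuous_fst.mul
    ((continuous_cubicSymbol t).comp (continuous_subtype_val.comp continuous_snd)))
    continuous_const)

lemma isBounded_exteriorDomain (ht : |t| < 1) : Bornology.IsBounded (exteriorDomain t) := by
  have hnhds := image_cubicSymbol_closedBall_mem_nhds ht (σ := 0) (by simp)
  rw [cubicSymbol_zero, Metric.mem_nhds_iff] at hnhds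
  obtain ⟨r, hr, hball⟩ := hnhds
  refine isBounded_iff_forall_norm_le.2 ⟨r⁻¹, fun c hc ↦ not_lt.1 fun hlt ↦ ?_⟩
  have hc0 : c ≠ 0 := norm_pos_iff.1 ((inv_pos.2 hr).trans hlt)
  obtain ⟨σ, hσ, hσc⟩ := hball (mem_ball_zero_iff.2 (by
    rw [norm_inv]
    exact inv_lt_of_inv_lt₀ hr hlt) : c⁻¹ ∈ Metric.ball (0 : ℂ) r)
  exact hc σ (mem_closedBall_zero_iff.1 hσ) (by rw [hσc, mul_inv_cancel₀ hc0])

lemma exists_eq_inv_cubicSymbol_of_mem_frontier (ht : |t| < 1) {c : ℂ}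
    (hc : c ∈ frontier (exteriorDomain t)) : ∃ τ, ‖τ‖ = 1 ∧ c = (cubicSymbol t τ)⁻¹ := by
  rw [(isOpen_exteriorDomain t).frontier_eq] at hc
  obtain ⟨τ, hτ, hone⟩ : ∃ τ : ℂ, ‖τ‖ ≤ 1 ∧ c * cubicSymbol t τ = 1 := by
    simpa [exteriorDomain] using hc.2
  refine ⟨τ, hτ.eq_of_not_lt fun hlt ↦ ?_, eq_inv_of_mul_eq_one_left hone⟩
  have hc0 : c ≠ 0 := left_ne_zero_of_mul_eq_one hone
  have hinv : Filter.Tendsto (·⁻¹) (nhds c) (nhds (cubicSymbol t τ)) := by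
    rw [eq_inv_of_mul_eq_one_right hone]
    exact tendsto_inv₀ hc0
  obtain ⟨y, ⟨⟨s, hs, hsy⟩, hy0⟩, hy⟩ := mem_closure_iff_nhds.1 hc.1 _ (Filter.inter_mem
    (hinv (image_cubicSymbol_closedBall_mem_nhds ht hlt)) (isOpen_ne.mem_nhds hc0))
  exact hy s (mem_closedBall_zero_iff.1 hs) (by rw [hsy, mul_inv_cancel₀ hy0])

lemma norm_le_of_mem_exteriorDomain (ht : |t| < 1) {f : ℂ → ℂ} (hf : Differentiable ℂ f) {C : ℝ}
    (hC : ∀ τ : ℂ, ‖τ‖ = 1 → ‖f (cubicSymbol t τ)⁻¹‖ ≤ C) {c : ℂ} (hc : c ∈ exteriorDomain t) :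
    ‖f c‖ ≤ C := by
  refine Complex.norm_le_of_forall_mem_frontier_norm_le (isBounded_exteriorDomain ht)
    hf.diffContOnCl (fun z hz ↦ ?_) (subset_closure hc)
  obtain ⟨τ, hτ, rfl⟩ := exists_eq_inv_cubicSymbol_of_mem_frontier ht hz
  exact hC τ hτ

lemma inv_cubicSymbol_mem_exteriorDomain (ht : 0 < t) (hσ : 1 < ‖σ‖) (hlt : t * (1 + ‖σ‖) < √3) :
    (cubicSymbol t σ)⁻¹ ∈ exteriorDomain t := by
  intro s hs h
  have hσ0 : cubicSymbol t σ ≠ 0 := fun h0 ↦ by simp [h0] at h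
  have hs_eq : s = σ := eq_of_cubicSymbol_eq ht (by nlinarith) ((inv_mul_eq_one₀ hσ0).1 h).symm
  exact hs.not_gt (hs_eq ▸ hσ)

/-! ### Representing measures that annihilate a subspace -/

section RepresentingFunctional

variable {X : Type*} [TopologicalSpace X]

lemma convex_setOf_forall_re_neg : Convex ℝ {g : C(X, ℂ) | ∀ x, (g x).re < 0} := by
  have hinter : {g : C(X, ℂ) | ∀ x, (g x).re < 0} =
      ⋂ x, {g | reCLM (ContinuousMap.evalCLM ℝ x g) < 0} := by
    ext g
    simp
  rw [hinter]
  exact convex_iInter fun x ↦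
    convex_halfSpace_lt ((reCLM ∘L ContinuousMap.evalCLM ℝ x).toLinearMap.isLinear) 0

variable [CompactSpace X]

lemma isOpen_setOf_forall_re_neg : IsOpen {g : C(X, ℂ) | ∀ x, (g x).re < 0} := by
  have hmaps : {g : C(X, ℂ) | ∀ x, (g x).re < 0} =
      {g : C(X, ℂ) | Set.MapsTo g Set.univ {z | z.re < 0}} := by
    simp [Set.MapsTo]
  rw [hmaps]
  exact ContinuousMap.isOpen_setOfPred_mapsTo isCompact_univ
    (isOpen_lt continuous_re continuous_const)

/-- The continuous functions whose real part is the real part of an element of `S`. -/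
def sameRePart (S : Submodule ℂ C(X, ℂ)) : Submodule ℝ C(X, ℂ) where
  carrier := {g | ∃ h ∈ S, ∀ x, (g x).re = (h x).re}
  add_mem' := by
    rintro g₁ g₂ ⟨h₁, hh₁, hre₁⟩ ⟨h₂, hh₂, hre₂⟩
    exact ⟨h₁ + h₂, S.add_mem hh₁ hh₂, fun x ↦ by simp [hre₁, hre₂]⟩
  zero_mem' := ⟨0, S.zero_mem, fun _ ↦ rfl⟩
  smul_mem' := by
    rintro r g ⟨h, hh, hre⟩
    exact ⟨(r : ℂ) • h, S.smul_mem _ hh, fun x ↦ by simp [hre]⟩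

lemma exists_continuousLinearMap_re_eq_zero [Nonempty X] {S : Submodule ℂ C(X, ℂ)}
    (hS : ∀ g ∈ S, ∃ x, 0 ≤ (g x).re) :
    ∃ f : C(X, ℂ) →L[ℂ] ℂ, 0 < (f 1).re ∧ ∀ g ∈ sameRePart S, (f g).re = 0 := by
  have hdisj : Disjoint {g : C(X, ℂ) | ∀ x, (g x).re < 0} (sameRePart S) := by
    rw [Set.disjoint_left]
    rintro g hneg ⟨h, hh, hre⟩
    obtain ⟨x, hx⟩ := hS h hh
    exact (hre x ▸ hneg x).not_ge hx
  obtain ⟨f, u, hneg, hu⟩ := RCLike.geometric_hahn_banach_open (𝕜 := ℂ)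
    convex_setOf_forall_re_neg isOpen_setOf_forall_re_neg (sameRePart S).convex hdisj
  have hu0 : u ≤ 0 := by simpa using hu 0 (sameRePart S).zero_mem
  refine ⟨f, ?_, fun g hg ↦ by_contra fun hne ↦ ?_⟩
  · have hneg_one := hneg (-1) fun _ ↦ by simp
    simp only [map_neg, RCLike.re_to_complex] at hneg_one
    linarith
  · have hle := hu _ ((sameRePart S).smul_mem ((u - 1) / (f g).re) hg)
    rw [← Complex.coe_smul, map_smul, smul_eq_mul, RCLike.re_to_complex, re_ofReal_mul,
      div_mul_cancel₀ _ hne] at hle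
    linarith

lemma exists_continuousLinearMap_eq_zero [Nonempty X] {S : Submodule ℂ C(X, ℂ)}
    (hS : ∀ g ∈ S, ∃ x, 0 ≤ (g x).re) :
    ∃ Λ : C(X, ℂ) →L[ℂ] ℂ, Λ 1 = 1 ∧ (∀ g, Λ (star g) = conj (Λ g)) ∧ ∀ g ∈ S, Λ g = 0 := by
  obtain ⟨f, hpos, hre⟩ := exists_continuousLinearMap_re_eq_zero hS
  have him {g : C(X, ℂ)} (hg : ∀ x, (g x).im = 0) : (f g).im = 0 := by
    have := hre (I • g) ⟨0, S.zero_mem, fun x ↦ by simp [hg]⟩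
    simpa using this
  have hstar (g : C(X, ℂ)) : f (star g) = conj (f g) := by
    have hadd := him (g := g + star g) fun x ↦ by simp
    have hsub := him (g := I • (g - star g)) fun x ↦ by simp
    simp only [map_add, map_smul, map_sub, smul_eq_mul, add_im, mul_im, sub_re, sub_im, I_re, I_im,
      zero_mul, one_mul, zero_add] at hadd hsub
    exact Complex.ext (by rw [conj_re]; linarith) (by rw [conj_im]; linarith)
  have hone : f 1 = (f 1).re := Complex.ext rfl (him fun _ ↦ by simp)
  have hne : f 1 ≠ 0 := by
    rw [hone]
    exact ofReal_ne_zero.2 hpos.ne'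
  refine ⟨(f 1)⁻¹ • f, ?_, fun g ↦ ?_, fun g hg ↦ ?_⟩
  · exact inv_mul_cancel₀ hne
  · rw [smul_apply, smul_apply, smul_eq_mul, smul_eq_mul, hstar, map_mul, map_inv₀, hone,
      conj_ofReal]
  · have hfg : f g = 0 := by
      have hrot := hre (I • g) ⟨I • g, S.smul_mem I hg, fun _ ↦ rfl⟩
      exact Complex.ext (hre g ⟨g, hg, fun _ ↦ rfl⟩) (by simpa using hrot)
    rw [smul_apply, hfg, smul_zero]

end RepresentingFunctional

/-! ### Harmonic measure of the exterior domain, seen on the unit circle -/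

local instance fact_zero_lt_two_pi : Fact (0 < 2 * Real.pi) := ⟨Real.two_pi_pos⟩

local notation "𝕋" => AddCircle (2 * Real.pi)

/-- The inclusion of the unit circle into `ℂ`, in the parametrization `β ↦ exp (-β I)`. -/
noncomputable def coord : C(𝕋, ℂ) := fourier (-1)

/-- A functional on the continuous functions on the unit circle which, transported by the
inverse of the cubic symbol, is a representing measure of the point `0` of the exterior domain. -/
structure IsHarmonicMeasure (t : ℝ) (Λ : C(𝕋, ℂ) →L[ℂ] ℂ) : Prop where
  pos : 0 < t
  lt : t < √3 / 2
  map_one : Λ 1 = 1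
  map_star (g : C(𝕋, ℂ)) : Λ (star g) = conj (Λ g)
  map_eq_zero {G : ℂ → ℂ} (hG : Differentiable ℂ G) (hG0 : G 0 = 0)
    {g : C(𝕋, ℂ)} (hg : ∀ x, g x = G (cubicSymbol t (coord x))⁻¹) : Λ g = 0

lemma norm_coord (x : 𝕋) : ‖coord x‖ = 1 := by
  rw [coord, fourier_apply]
  exact Circle.norm_coe _

lemma coord_coe (β : ℝ) : coord (β : 𝕋) = exp (-(β * I)) := by
  rw [coord, fourier_coe_apply]
  congr 1
  push_cast
  field_simp

lemma coord_pow (n : ℕ) : coord ^ n = fourier (-n : ℤ) := by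
  ext x
  rw [coord, ContinuousMap.pow_apply, fourier_apply, fourier_apply, ← Circle.coe_pow,
    AddCircle.toCircle_zsmul, AddCircle.toCircle_zsmul, ← zpow_natCast, ← zpow_mul, neg_one_mul]

lemma exists_coord_eq {τ : ℂ} (hτ : ‖τ‖ = 1) : ∃ x, coord x = τ := by
  obtain ⟨θ, rfl⟩ := (norm_eq_one_iff τ).1 hτ
  exact ⟨(-θ : ℝ), by rw [coord_coe, ofReal_neg, neg_mul, neg_neg]⟩

lemma sqrt_three_lt_two : √3 < 2 := by
  rw [Real.sqrt_lt' two_pos]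
  norm_num

/-- The restrictions to the unit circle of the functions `G ∘ (cubicSymbol t)⁻¹`, where `G` is
entire and `G 0 = 0`. -/
def entireVanishing (t : ℝ) : Submodule ℂ C(𝕋, ℂ) where
  carrier := {g | ∃ G : ℂ → ℂ, Differentiable ℂ G ∧ G 0 = 0 ∧
    ∀ x, g x = G (cubicSymbol t (coord x))⁻¹}
  add_mem' := by
    rintro g₁ g₂ ⟨G₁, hG₁, hG₁0, hg₁⟩ ⟨G₂, hG₂, hG₂0, hg₂⟩
    exact ⟨G₁ + G₂, hG₁.add hG₂, by simp [hG₁0, hG₂0], fun x ↦ by simp [hg₁, hg₂]⟩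
  zero_mem' := ⟨0, differentiable_const 0, rfl, fun _ ↦ rfl⟩
  smul_mem' := by
    rintro c g ⟨G, hG, hG0, hg⟩
    exact ⟨c • G, hG.const_smul c, by simp [hG0], fun x ↦ by simp [hg]⟩

/-- If `Re G < 0` on the image of the circle, then `exp ∘ G` contradicts the maximum principle,
because `exp (G 0) = 1`. -/
lemma exists_re_nonneg_of_mem_entireVanishing {t : ℝ} (ht : |t| < 1)
    {g : C(𝕋, ℂ)} (hg : g ∈ entireVanishing t) : ∃ x, 0 ≤ (g x).re := by
  obtain ⟨G, hG, hG0, hgG⟩ := hg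
  obtain ⟨x₀, -, hmax⟩ := isCompact_univ.exists_isMaxOn Set.univ_nonempty
    (continuous_re.comp g.continuous).continuousOn
  have hcircle {τ : ℂ} (hτ : ‖τ‖ = 1) :
      ‖exp (G (cubicSymbol t τ)⁻¹)‖ ≤ Real.exp (g x₀).re := by
    obtain ⟨x, rfl⟩ := exists_coord_eq hτ
    rw [norm_exp, ← hgG]
    exact Real.exp_le_exp.2 (hmax (Set.mem_univ x))
  have hcenter := norm_le_of_mem_exteriorDomain ht hG.cexp (fun τ hτ ↦ hcircle hτ)
    (zero_mem_exteriorDomain t)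
  rw [hG0, exp_zero, norm_one, Real.one_le_exp_iff] at hcenter
  exact ⟨x₀, hcenter⟩

lemma exists_isHarmonicMeasure {t : ℝ} (ht0 : 0 < t) (ht : t < √3 / 2) :
    ∃ Λ, IsHarmonicMeasure t Λ := by
  have ht1 : |t| < 1 := by
    rw [abs_of_pos ht0]
    linarith [sqrt_three_lt_two]
  obtain ⟨Λ, hone, hstar, hzero⟩ := exists_continuousLinearMap_eq_zero fun g hg ↦
    exists_re_nonneg_of_mem_entireVanishing ht1 hg
  exact ⟨Λ, ht0, ht, hone, hstar, fun hG hG0 _ hg ↦ hzero _ ⟨_, hG, hG0, hg⟩⟩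

/-! ### Moments of the harmonic measure -/

section PowerSums

variable {t : ℝ} {σ ω : ℂ}

lemma inv_sheet_eq (ht : t ≠ 0) (hω : ω ∈ cubeRoots) (hσ : cubicSymbol t σ ≠ 0) :
    (sheet t ω σ)⁻¹ =
      (cubicSymbol t σ)⁻¹ * (1 + t * sheet t ω σ + (t * sheet t ω σ) ^ 2 / 3) := by
  have hs := sheet_ne_zero ht hω hσ
  rw [← cubicSymbol_sheet ht hω] at hσ ⊢
  rw [inv_eq_iff_eq_inv, mul_inv, inv_inv, ← div_eq_mul_inv, eq_div_iff]
  · rw [cubicSymbol]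
    ring
  · rintro h
    exact hσ (by rw [cubicSymbol]; linear_combination sheet t ω σ * h)

lemma inv_sheet_pow_add_three (ht : t ≠ 0) (hω : ω ∈ cubeRoots) (hσ : cubicSymbol t σ ≠ 0)
    (n : ℕ) : (sheet t ω σ)⁻¹ ^ (n + 3) = (cubicSymbol t σ)⁻¹ * ((sheet t ω σ)⁻¹ ^ (n + 2) +
      t * (sheet t ω σ)⁻¹ ^ (n + 1) + t ^ 2 / 3 * (sheet t ω σ)⁻¹ ^ n) := by
  have hcancel := inv_mul_cancel₀ (sheet_ne_zero ht hω hσ)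
  have heq := inv_sheet_eq ht hω hσ
  set s := sheet t ω σ
  set c := (cubicSymbol t σ)⁻¹
  linear_combination s⁻¹ ^ (n + 2) * heq +
    c * s⁻¹ ^ n * (t * s⁻¹ + t ^ 2 / 3 * (s⁻¹ * s + 1)) * hcancel

lemma sum_mul_sheet (ht : t ≠ 0) (σ : ℂ) : ∑ ω ∈ cubeRoots, t * sheet t ω σ = -3 := by
  have hexp (ω : ℂ) : t * sheet t ω σ = ω * (1 + t * σ) - 1 := by
    rw [← one_add_mul_sheet ht, add_sub_cancel_left]
  simp [hexp, Finset.sum_sub_distrib, ← Finset.sum_mul, sum_cubeRoots, card_cubeRoots]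

lemma sum_mul_sheet_sq (ht : t ≠ 0) (σ : ℂ) :
    ∑ ω ∈ cubeRoots, (t * sheet t ω σ) ^ 2 = 3 := by
  have hexp (ω : ℂ) : (t * sheet t ω σ) ^ 2 =
      ω ^ 2 * (1 + t * σ) ^ 2 - ω * (2 * (1 + t * σ)) + 1 := by
    rw [← add_sub_cancel_left 1 (t * sheet t ω σ), one_add_mul_sheet ht]
    ring
  simp [hexp, Finset.sum_add_distrib, Finset.sum_sub_distrib, ← Finset.sum_mul, sum_cubeRoots,
    sum_cubeRoots_pow (k := 2) (by norm_num), card_cubeRoots]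

lemma sum_inv_sheet (ht : t ≠ 0) (hσ : cubicSymbol t σ ≠ 0) :
    ∑ ω ∈ cubeRoots, (sheet t ω σ)⁻¹ = (cubicSymbol t σ)⁻¹ := by
  rw [Finset.sum_congr rfl fun ω hω ↦ inv_sheet_eq ht hω hσ, ← Finset.mul_sum,
    Finset.sum_add_distrib, Finset.sum_add_distrib, ← Finset.sum_div, sum_mul_sheet ht,
    sum_mul_sheet_sq ht, Finset.sum_const, card_cubeRoots]
  norm_num

lemma sum_inv_sheet_sq (ht : t ≠ 0) (hσ : cubicSymbol t σ ≠ 0) :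
    ∑ ω ∈ cubeRoots, (sheet t ω σ)⁻¹ ^ 2 =
      (cubicSymbol t σ)⁻¹ ^ 2 + 2 * t * (cubicSymbol t σ)⁻¹ := by
  have hsq {ω : ℂ} (hω : ω ∈ cubeRoots) : (sheet t ω σ)⁻¹ ^ 2 =
      (cubicSymbol t σ)⁻¹ * ((sheet t ω σ)⁻¹ + t + t / 3 * (t * sheet t ω σ)) := by
    have hcancel := inv_mul_cancel₀ (sheet_ne_zero ht hω hσ)
    have heq := inv_sheet_eq ht hω hσ
    set s := sheet t ω σ
    set c := (cubicSymbol t σ)⁻¹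
    linear_combination s⁻¹ * heq + c * t * (1 + t * s / 3) * hcancel
  rw [Finset.sum_congr rfl fun ω hω ↦ hsq hω, ← Finset.mul_sum, Finset.sum_add_distrib,
    Finset.sum_add_distrib, ← Finset.mul_sum, sum_inv_sheet ht hσ, sum_mul_sheet ht,
    Finset.sum_const, card_cubeRoots, nsmul_eq_mul]
  push_cast
  ring

/-- The polynomial in `c = (cubicSymbol t σ)⁻¹` whose value is the sum of the `n`-th powers of the
inverses of the three sheets over `σ`, given by the recursion of Newton's identities. -/
noncomputable def sheetPowerSum (t : ℝ) : ℕ → ℂ[X]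
  | 0 => 3
  | 1 => X
  | 2 => X ^ 2 + C (2 * t : ℂ) * X
  | n + 3 => X * (sheetPowerSum t (n + 2) + C (t : ℂ) * sheetPowerSum t (n + 1) +
      C (t ^ 2 / 3 : ℂ) * sheetPowerSum t n)

lemma eval_zero_sheetPowerSum (t : ℝ) (n : ℕ) : (sheetPowerSum t (n + 1)).eval 0 = 0 := by
  match n with
  | 0 | 1 | n + 2 => simp [sheetPowerSum]

lemma eval_sheetPowerSum (ht : t ≠ 0) (hσ : cubicSymbol t σ ≠ 0) (n : ℕ) :
    (sheetPowerSum t n).eval (cubicSymbol t σ)⁻¹ = ∑ ω ∈ cubeRoots, (sheet t ω σ)⁻¹ ^ n := by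
  induction n using Nat.strong_induction_on with
  | _ n ih =>
    match n, ih with
    | 0, _ => simp [sheetPowerSum, card_cubeRoots]
    | 1, _ => simp [sheetPowerSum, sum_inv_sheet ht hσ]
    | 2, _ => simp [sum_inv_sheet_sq ht hσ, sheetPowerSum, -inv_pow]
    | n + 3, ih =>
      rw [Finset.sum_congr rfl fun ω hω ↦ inv_sheet_pow_add_three ht hω hσ n, ← Finset.mul_sum,
        Finset.sum_add_distrib, Finset.sum_add_distrib, ← Finset.mul_sum, ← Finset.mul_sum,
        ← ih (n + 2) (by lia), ← ih (n + 1) (by lia), ← ih n (by lia)]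
      simp [sheetPowerSum]

end PowerSums

lemma inverse_apply {X : Type*} [TopologicalSpace X] {f : C(X, ℂ)} (hf : ∀ x, f x ≠ 0) (x : X) :
    Ring.inverse f x = (f x)⁻¹ := by
  have hunit : IsUnit f := ContinuousMap.isUnit_iff_forall_ne_zero f |>.2 hf
  refine eq_inv_of_mul_eq_one_left ?_
  rw [← ContinuousMap.mul_apply, Ring.inverse_mul_cancel f hunit, ContinuousMap.one_apply]

lemma smul_inverse_one_sub_smul_apply {X : Type*} [TopologicalSpace X] {f : C(X, ℂ)} {s : ℂ}
    (hs : s ≠ 0) (hf : ∀ x, s ≠ f x) (x : X) :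
    (s⁻¹ • Ring.inverse (1 - s⁻¹ • f)) x = (s - f x)⁻¹ := by
  have hfactor (y : X) : (1 - s⁻¹ • f) y = s⁻¹ * (s - f y) := by
    simp [mul_sub, hs]
  rw [ContinuousMap.smul_apply, inverse_apply fun y ↦ by
    rw [hfactor]
    exact mul_ne_zero (inv_ne_zero hs) (sub_ne_zero.2 (hf y)), hfactor, smul_eq_mul, mul_inv,
    mul_inv_cancel_left₀ (inv_ne_zero hs)]

lemma smul_inverse_mul_inverse_apply {X : Type*} [TopologicalSpace X] {f : C(X, ℂ)} {τ : ℂ}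
    (hf : ∀ x, f x ≠ 0) (hfτ : ∀ x, f x ≠ τ) (x : X) :
    (τ • Ring.inverse f * Ring.inverse (1 - τ • Ring.inverse f)) x = τ / (f x - τ) := by
  have hfactor (y : X) : (1 - τ • Ring.inverse f) y = (f y)⁻¹ * (f y - τ) := by
    simp [mul_sub, hf y, inverse_apply hf, mul_comm τ]
  rw [ContinuousMap.mul_apply, inverse_apply (f := 1 - τ • Ring.inverse f) fun y ↦ by
    rw [hfactor]
    exact mul_ne_zero (inv_ne_zero (hf y)) (sub_ne_zero.2 (hfτ y)), hfactor,
    ContinuousMap.smul_apply, inverse_apply hf, smul_eq_mul, mul_assoc, mul_inv,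
    mul_inv_cancel_left₀ (inv_ne_zero (hf x)), div_eq_mul_inv]

section Moments

/-- The sheet of `ω` as a function on the unit circle. -/
noncomputable def sheetMap (t : ℝ) (ω : ℂ) : C(𝕋, ℂ) :=
  ⟨fun x ↦ sheet t ω (coord x), by unfold sheet; fun_prop⟩

/-- The moduli of the sheets `ω ≠ 1` on the unit circle are at least the inverse of this number. -/
noncomputable def innerRadius (t : ℝ) : ℝ := t / (√3 - t)

/-- The `n`-th moment of a functional on the unit circle. -/
noncomputable def moment (Λ : C(𝕋, ℂ) →L[ℂ] ℂ) (n : ℕ) : ℂ := Λ (coord ^ n)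

/-- The generating function of the moments. -/
noncomputable def momentSeries (Λ : C(𝕋, ℂ) →L[ℂ] ℂ) (y : ℂ) : ℂ := ∑' n : ℕ, moment Λ n * y ^ n

/-- The logarithmic potential `y ↦ Λ (-log (1 - y • coord))`, as a power series. -/
noncomputable def logPotential (Λ : C(𝕋, ℂ) →L[ℂ] ℂ) (y : ℂ) : ℂ :=
  ∑' n : ℕ, moment Λ (n + 1) / (n + 1) * y ^ (n + 1)

variable {t : ℝ} {Λ : C(𝕋, ℂ) →L[ℂ] ℂ} {ω τ y : ℂ}

lemma innerRadius_pos (ht0 : 0 < t) (ht : t < √3 / 2) : 0 < innerRadius t :=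
  div_pos ht0 (by linarith)

lemma innerRadius_lt_one (ht0 : 0 < t) (ht : t < √3 / 2) : innerRadius t < 1 :=
  (div_lt_one (by linarith)).2 (by linarith)

lemma inv_innerRadius (ht : t ≠ 0) : (innerRadius t)⁻¹ = √3 / t - 1 := by
  rw [innerRadius, inv_div]
  field_simp

lemma inv_innerRadius_le_norm_sheet (ht : 0 < t) (hω : ω ∈ cubeRoots.erase 1) (hτ : ‖τ‖ = 1) :
    (innerRadius t)⁻¹ ≤ ‖sheet t ω τ‖ := by
  have hle := sqrt_three_le_norm_sheet ht (Finset.mem_of_mem_erase hω)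
    (Finset.ne_of_mem_erase hω) τ
  rw [inv_innerRadius ht.ne', sub_le_iff_le_add, div_le_iff₀' ht, ← hτ]
  exact hle

lemma cubicSymbol_ne_zero_of_norm_eq_one (ht0 : 0 < t) (ht : t < √3) (hτ : ‖τ‖ = 1) :
    cubicSymbol t τ ≠ 0 :=
  cubicSymbol_ne_zero ht0 (norm_ne_zero_iff.1 (hτ ▸ one_ne_zero)) (by rwa [hτ, mul_one])

lemma norm_inverse_sheetMap_le (ht0 : 0 < t) (ht : t < √3 / 2) (hω : ω ∈ cubeRoots.erase 1) :
    ‖Ring.inverse (sheetMap t ω)‖ ≤ innerRadius t := by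
  have hq := innerRadius_pos ht0 ht
  have hle (x : 𝕋) : (innerRadius t)⁻¹ ≤ ‖sheetMap t ω x‖ :=
    inv_innerRadius_le_norm_sheet ht0 hω (norm_coord x)
  refine (ContinuousMap.norm_le _ hq.le).2 fun x ↦ ?_
  rw [inverse_apply fun x ↦ norm_pos_iff.1 ((inv_pos.2 hq).trans_le (hle x)), norm_inv]
  exact inv_le_of_inv_le₀ hq (hle x)

lemma momentSeries_eq_map_inverse (hy : ‖y‖ < 1) :
    momentSeries Λ y = Λ (Ring.inverse (1 - y • coord)) := by
  have hnorm : ‖y • coord‖ < 1 := by rwa [norm_smul, coord, fourier_norm, mul_one]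
  have hsum := Λ.hasSum (hasSum_geom_series_inverse _ hnorm)
  rw [momentSeries, ← hsum.tsum_eq]
  refine tsum_congr fun n ↦ ?_
  rw [_root_.smul_pow, map_smul, smul_eq_mul, mul_comm, moment]

namespace IsHarmonicMeasure

variable (h : IsHarmonicMeasure t Λ)
include h

lemma innerRadius_pos : 0 < innerRadius t := CubicHull.innerRadius_pos h.pos h.lt

lemma innerRadius_lt_one : innerRadius t < 1 := CubicHull.innerRadius_lt_one h.pos h.lt

lemma norm_inverse_sheetMap_le (hω : ω ∈ cubeRoots.erase 1) :
    ‖Ring.inverse (sheetMap t ω)‖ ≤ innerRadius t :=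
  CubicHull.norm_inverse_sheetMap_le h.pos h.lt hω

lemma inverse_sheetMap_apply (hω : ω ∈ cubeRoots) (x : 𝕋) :
    Ring.inverse (sheetMap t ω) x = (sheet t ω (coord x))⁻¹ :=
  inverse_apply (fun x ↦ sheet_ne_zero h.pos.ne' hω (cubicSymbol_ne_zero_of_norm_eq_one h.pos
    (by linarith [h.lt, Real.sqrt_nonneg 3]) (norm_coord x))) x

/-- Newton's power sums of the three inverse sheets are polynomials in `(cubicSymbol t σ)⁻¹`, so `Λ`
annihilates them. -/
lemma conj_moment_succ (n : ℕ) : conj (moment Λ (n + 1)) =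
    -∑ ω ∈ cubeRoots.erase 1, Λ (Ring.inverse (sheetMap t ω) ^ (n + 1)) := by
  have hzero := h.map_eq_zero (sheetPowerSum t (n + 1)).differentiable
    (eval_zero_sheetPowerSum t n) (g := star (coord ^ (n + 1)) +
      ∑ ω ∈ cubeRoots.erase 1, Ring.inverse (sheetMap t ω) ^ (n + 1)) fun x ↦ by
    rw [eval_sheetPowerSum h.pos.ne' (cubicSymbol_ne_zero_of_norm_eq_one h.pos
      (by linarith [h.lt, Real.sqrt_nonneg 3]) (norm_coord x)),
      ← Finset.add_sum_erase _ _ one_mem_cubeRoots, sheet_one h.pos.ne',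
      ContinuousMap.add_apply, ContinuousMap.star_apply,
      inv_eq_conj (norm_coord x), ContinuousMap.coe_sum, Finset.sum_apply, ContinuousMap.pow_apply,
      ← starRingEnd_apply, map_pow]
    refine congrArg _ (Finset.sum_congr rfl fun ω hω ↦ ?_)
    rw [ContinuousMap.pow_apply, h.inverse_sheetMap_apply (Finset.mem_of_mem_erase hω)]
  rw [map_add, map_sum, h.map_star] at hzero
  exact eq_neg_of_add_eq_zero_left hzero

lemma exists_norm_moment_le : ∃ B, 0 ≤ B ∧ ∀ n, ‖moment Λ n‖ ≤ B * innerRadius t ^ n := by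
  refine ⟨2 * ‖Λ‖, by positivity, fun n ↦ ?_⟩
  match n with
  | 0 =>
    have hone := Λ.le_opNorm 1
    rw [norm_one] at hone
    rw [moment, pow_zero, pow_zero]
    linarith [norm_nonneg Λ]
  | n + 1 =>
    have hterm {ω : ℂ} (hω : ω ∈ cubeRoots.erase 1) :
        ‖Λ (Ring.inverse (sheetMap t ω) ^ (n + 1))‖ ≤ ‖Λ‖ * innerRadius t ^ (n + 1) :=
      (Λ.le_opNorm _).trans (by
        gcongr
        exact (norm_pow_le _ _).trans
          (pow_le_pow_left₀ (norm_nonneg _) (h.norm_inverse_sheetMap_le hω) _))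
    rw [← norm_conj, h.conj_moment_succ, norm_neg]
    refine (norm_sum_le_of_le _ fun ω hω ↦ hterm hω).trans_eq ?_
    rw [Finset.sum_const, Finset.card_erase_of_mem one_mem_cubeRoots, card_cubeRoots, nsmul_eq_mul]
    push_cast
    ring

lemma summable_moment_mul_pow (hy : innerRadius t * ‖y‖ < 1) :
    Summable fun n ↦ moment Λ n * y ^ n := by
  obtain ⟨B, -, hB⟩ := h.exists_norm_moment_le
  have hnonneg := mul_nonneg h.innerRadius_pos.le (norm_nonneg y)
  refine .of_norm_bounded ((summable_geometric_of_lt_one hnonneg hy).mul_left B) fun n ↦ ?_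
  rw [norm_mul, norm_pow, mul_pow, ← mul_assoc]
  gcongr
  exact hB n

lemma hasDerivAt_logPotential (hy : innerRadius t * ‖y‖ < 1) :
    HasDerivAt (logPotential Λ) (∑' n : ℕ, moment Λ (n + 1) * y ^ n) y := by
  obtain ⟨B, hB0, hB⟩ := h.exists_norm_moment_le
  have hq := h.innerRadius_pos
  obtain ⟨r, hyr, hr⟩ := exists_between (show ‖y‖ < (innerRadius t)⁻¹ by
    rwa [← one_div, lt_div_iff₀' hq])
  have hr0 : 0 < r := (norm_nonneg y).trans_lt hyr
  have hqr : innerRadius t * r < 1 := by rwa [← one_div, lt_div_iff₀' hq] at hr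
  refine hasDerivAt_tsum_of_isPreconnected
    (g := fun n z ↦ moment Λ (n + 1) / (n + 1) * z ^ (n + 1))
    (g' := fun n z ↦ moment Λ (n + 1) * z ^ n)
    (u := fun n ↦ B * innerRadius t * (innerRadius t * r) ^ n) (t := Metric.ball 0 r) (y₀ := 0)
    ((summable_geometric_of_lt_one (by positivity) hqr).mul_left _) Metric.isOpen_ball
    (convex_ball 0 r).isPreconnected (fun n z _ ↦ ?_) (fun n z hz ↦ ?_)
    (Metric.mem_ball_self hr0) (by simp) (mem_ball_zero_iff.2 hyr)
  · refine ((hasDerivAt_pow (n + 1) z).const_mul _).congr_deriv ?_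
    have hn : (n + 1 : ℂ) ≠ 0 := Nat.cast_add_one_ne_zero n
    rw [Nat.cast_add_one, Nat.add_sub_cancel, ← mul_assoc, div_mul_cancel₀ _ hn]
  · calc ‖moment Λ (n + 1) * z ^ n‖ ≤ B * innerRadius t ^ (n + 1) * r ^ n := by
          rw [norm_mul, norm_pow]
          gcongr
          · exact hB (n + 1)
          · exact (mem_ball_zero_iff.1 hz).le
      _ = B * innerRadius t * (innerRadius t * r) ^ n := by ring

lemma momentSeries_eq_one_add (hy : innerRadius t * ‖y‖ < 1) :
    momentSeries Λ y = 1 + y * ∑' n : ℕ, moment Λ (n + 1) * y ^ n := by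
  rw [momentSeries, (h.summable_moment_mul_pow hy).tsum_eq_zero_add, moment, pow_zero, h.map_one,
    pow_zero, mul_one, ← tsum_mul_left]
  refine congrArg _ (tsum_congr fun n ↦ ?_)
  ring

end IsHarmonicMeasure

end Moments

section CircleMean

/-- The mean value on the circle, as a continuous linear functional. -/
noncomputable def circleMean : C(𝕋, ℂ) →L[ℂ] ℂ :=
  MeasureTheory.L1.integralCLM' ℂ ∘L ContinuousMap.toLp 1 AddCircle.haarAddCircle ℂ

lemma circleMean_apply (g : C(𝕋, ℂ)) : circleMean g = ∫ x, g x ∂AddCircle.haarAddCircle := by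
  rw [← MeasureTheory.integral_congr_ae (ContinuousMap.coeFn_toLp (p := 1)
    AddCircle.haarAddCircle (𝕜 := ℂ) g), ← MeasureTheory.L1.integral_eq_integral,
    MeasureTheory.L1.integral_eq' ℂ]
  rfl

lemma circleMean_fourier_mul_fourier (j k : ℤ) :
    circleMean (fourier (-j) * fourier k) = if j = k then 1 else 0 := by
  have hcoeff := congrFun (fourierCoeff_fourier (T := 2 * Real.pi) k) j
  rw [Pi.single_apply] at hcoeff
  rw [circleMean_apply, ← hcoeff]
  rfl

lemma circleMean_fourier_mul {c : ℤ → ℂ} {w : C(𝕋, ℂ)}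
    (hw : HasSum (fun k ↦ c k • fourier k) w) (j : ℤ) : circleMean (fourier (-j) * w) = c j := by
  have hsum := circleMean.hasSum (hw.mul_left (fourier (-j)))
  have hterm (k : ℤ) : circleMean (fourier (-j) * c k • fourier k) = if k = j then c j else 0 := by
    rw [mul_smul_comm, map_smul, circleMean_fourier_mul_fourier, smul_eq_mul, mul_ite, mul_one,
      mul_zero]
    simp only [eq_comm]
    split_ifs with hkj
    · rw [hkj]
    · rfl
  simp only [hterm] at hsum
  exact hsum.unique (hasSum_ite_eq j (c j))

lemma circleMean_mul_eq {Λ : C(𝕋, ℂ) →L[ℂ] ℂ} {w : C(𝕋, ℂ)}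
    (hw : HasSum (fun k : ℤ ↦ Λ (fourier (-k)) • fourier k) w) (g : C(𝕋, ℂ)) :
    circleMean (g * w) = Λ g := by
  have heq : circleMean ∘L (ContinuousLinearMap.mul ℂ C(𝕋, ℂ)).flip w = Λ := by
    refine ContinuousLinearMap.ext_on (s := Set.range fourier) ?_ ?_
    · rw [dense_iff_closure_eq, ← Submodule.topologicalClosure_coe, span_fourier_closure_eq_top,
        Submodule.top_coe]
    · rintro _ ⟨k, rfl⟩
      simpa [mul_comm] using circleMean_fourier_mul hw (-k)
  exact DFunLike.congr_fun heq g

end CircleMean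

section Density

lemma star_fourier (n : ℤ) : star (fourier n : C(𝕋, ℂ)) = fourier (-n) := by
  ext x
  rw [ContinuousMap.star_apply, fourier_neg, star_def]

/-- The density of a harmonic measure with respect to the normalized arc length on the unit circle,
extended holomorphically to a neighbourhood of the circle. -/
noncomputable def density (Λ : C(𝕋, ℂ) →L[ℂ] ℂ) (t : ℝ) (σ : ℂ) : ℂ :=
  ∑ ω ∈ cubeRoots, ω * σ * (sheet t ω σ)⁻¹ * momentSeries Λ (sheet t ω σ)⁻¹

lemma inv_mem_erase_one {ω : ℂ} (hω : ω ∈ cubeRoots.erase 1) : ω⁻¹ ∈ cubeRoots.erase 1 :=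
  Finset.mem_erase.2 ⟨inv_ne_one.2 (Finset.ne_of_mem_erase hω),
    inv_mem_cubeRoots (Finset.mem_of_mem_erase hω)⟩

namespace IsHarmonicMeasure

variable {t : ℝ} {Λ : C(𝕋, ℂ) →L[ℂ] ℂ} {ω τ : ℂ} (h : IsHarmonicMeasure t Λ)
include h

lemma norm_smul_inverse_sheetMap_lt_one (hω : ω ∈ cubeRoots.erase 1) (hτ : ‖τ‖ = 1) :
    ‖τ • Ring.inverse (sheetMap t ω)‖ < 1 := by
  rw [norm_smul, hτ, one_mul]
  exact (h.norm_inverse_sheetMap_le hω).trans_lt h.innerRadius_lt_one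

lemma norm_inv_sheet_lt_one (hω : ω ∈ cubeRoots.erase 1) (hτ : ‖τ‖ = 1) :
    ‖(sheet t ω τ)⁻¹‖ < 1 := by
  rw [norm_inv]
  exact inv_lt_one_of_one_lt₀ (((one_lt_inv₀ h.innerRadius_pos).2 h.innerRadius_lt_one).trans_le
    (inv_innerRadius_le_norm_sheet h.pos hω hτ))

/-- Both sides are `ω τ / (sheet t ω τ - σ)` at `σ = coord x`, by the symmetry `sheet_sub`. -/
lemma smul_inverse_one_sub_smul_coord (hω : ω ∈ cubeRoots.erase 1) (hτ : ‖τ‖ = 1) :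
    (ω * τ * (sheet t ω τ)⁻¹) • Ring.inverse (1 - (sheet t ω τ)⁻¹ • coord) =
      -(τ • Ring.inverse (sheetMap t ω⁻¹) *
        Ring.inverse (1 - τ • Ring.inverse (sheetMap t ω⁻¹))) := by
  have hω0 := ne_zero_of_mem_cubeRoots (Finset.mem_of_mem_erase hω)
  have hω' := inv_mem_erase_one hω
  have hpos := inv_pos.2 h.innerRadius_pos
  have hs : sheet t ω τ ≠ 0 :=
    norm_pos_iff.1 (hpos.trans_le (inv_innerRadius_le_norm_sheet h.pos hω hτ))
  have hs' (x : 𝕋) : sheetMap t ω⁻¹ x ≠ 0 :=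
    norm_pos_iff.1 (hpos.trans_le (inv_innerRadius_le_norm_sheet h.pos hω' (norm_coord x)))
  have hsub (x : 𝕋) : sheet t ω τ ≠ coord x := fun h0 ↦ by
    have hlt := h.norm_inv_sheet_lt_one hω hτ
    rw [h0, norm_inv, norm_coord, inv_one] at hlt
    exact lt_irrefl _ hlt
  have hsub' (x : 𝕋) : sheetMap t ω⁻¹ x ≠ τ := fun h0 ↦ hsub x (sub_eq_zero.1 (by
    rw [sheet_sub h.pos.ne' hω0, ← h0]
    exact mul_eq_zero_of_right _ (sub_self _)))
  ext x
  rw [mul_smul, ContinuousMap.smul_apply, smul_inverse_one_sub_smul_apply hs hsub,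
    ContinuousMap.neg_apply, smul_inverse_mul_inverse_apply hs' hsub', sheet_sub h.pos.ne' hω0,
    ← neg_sub τ, div_neg, neg_neg, smul_eq_mul, mul_inv, mul_mul_mul_comm, mul_inv_cancel₀ hω0,
    one_mul]
  exact (div_eq_mul_inv _ _).symm

lemma hasSum_map_inverse_sheetMap_pow (hω : ω ∈ cubeRoots.erase 1) (hτ : ‖τ‖ = 1) :
    HasSum (fun n : ℕ ↦ -Λ (Ring.inverse (sheetMap t ω⁻¹) ^ (n + 1)) * τ ^ (n + 1))
      (ω * τ * (sheet t ω τ)⁻¹ * momentSeries Λ (sheet t ω τ)⁻¹) := by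
  have hgeom := (Λ.hasSum ((hasSum_geom_series_inverse _ (h.norm_smul_inverse_sheetMap_lt_one
    (inv_mem_erase_one hω) hτ)).mul_left (τ • Ring.inverse (sheetMap t ω⁻¹)))).neg
  rw [← map_neg, ← h.smul_inverse_one_sub_smul_coord hω hτ, map_smul,
    ← momentSeries_eq_map_inverse (h.norm_inv_sheet_lt_one hω hτ)] at hgeom
  refine hgeom.congr_fun fun n ↦ ?_
  rw [← pow_succ', _root_.smul_pow, map_smul, smul_eq_mul]
  ring

lemma hasSum_conj_moment_mul_pow (hτ : ‖τ‖ = 1) :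
    HasSum (fun n : ℕ ↦ conj (moment Λ (n + 1)) * τ ^ (n + 1))
      (∑ ω ∈ cubeRoots.erase 1, ω * τ * (sheet t ω τ)⁻¹ * momentSeries Λ (sheet t ω τ)⁻¹) := by
  refine (hasSum_sum fun ω hω ↦ h.hasSum_map_inverse_sheetMap_pow hω hτ).congr_fun fun n ↦ ?_
  rw [h.conj_moment_succ, ← Finset.sum_neg_distrib, Finset.sum_mul]
  exact Finset.sum_nbij' (·⁻¹) (·⁻¹) (fun _ ↦ inv_mem_erase_one) (fun _ ↦ inv_mem_erase_one)
    (by simp) (by simp) (by simp)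

lemma summable_moment_mul_inv_pow (hτ : ‖τ‖ = 1) : Summable fun n ↦ moment Λ n * τ⁻¹ ^ n :=
  h.summable_moment_mul_pow (by rw [norm_inv, hτ, inv_one, mul_one]; exact h.innerRadius_lt_one)

lemma density_eq_of_norm_eq_one (hτ : ‖τ‖ = 1) :
    density Λ t τ = momentSeries Λ τ⁻¹ + conj (momentSeries Λ τ⁻¹) - 1 := by
  have hτ0 : τ ≠ 0 := norm_ne_zero_iff.1 (hτ ▸ one_ne_zero)
  have hconj : conj (momentSeries Λ τ⁻¹) =
      1 + ∑' n : ℕ, conj (moment Λ (n + 1)) * τ ^ (n + 1) := by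
    have hsum := summable_conj.2 (h.summable_moment_mul_inv_pow hτ)
    rw [momentSeries, conj_tsum, hsum.tsum_eq_zero_add]
    simp [moment, h.map_one, inv_eq_conj hτ]
  rw [hconj, (h.hasSum_conj_moment_mul_pow hτ).tsum_eq, density,
    ← Finset.add_sum_erase _ _ one_mem_cubeRoots, sheet_one h.pos.ne', one_mul, mul_inv_cancel₀ hτ0]
  ring

lemma exists_hasSum_smul_fourier : ∃ w : C(𝕋, ℂ),
    HasSum (fun k : ℤ ↦ Λ (fourier (-k)) • fourier k) w ∧ ∀ x, w x = density Λ t (coord x) := by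
  obtain ⟨B, -, hB⟩ := h.exists_norm_moment_le
  have hsummable : Summable fun n : ℕ ↦ moment Λ n • (fourier n : C(𝕋, ℂ)) := by
    refine .of_norm_bounded ((summable_geometric_of_lt_one h.innerRadius_pos.le
      h.innerRadius_lt_one).mul_left B) fun n ↦ ?_
    rw [norm_smul, fourier_norm, mul_one]
    exact hB n
  obtain ⟨w, hw⟩ := hsummable
  have hstar := ((hasSum_nat_add_iff' 1).2 hw).star
  refine ⟨_, HasSum.of_nat_of_neg_add_one (hw.congr_fun fun n ↦ ?_) (hstar.congr_fun fun n ↦ ?_),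
    fun x ↦ ?_⟩
  · rw [moment, coord_pow]
  · rw [star_smul, ← starRingEnd_apply, moment, ← h.map_star, coord_pow, star_fourier, star_fourier]
    push_cast
    rfl
  · have hwx : w x = momentSeries Λ (coord x)⁻¹ := by
      refine (((ContinuousMap.evalCLM ℂ x).hasSum hw).congr_fun fun n ↦ ?_).tsum_eq.symm
      rw [map_smul, smul_eq_mul, ContinuousMap.evalCLM_apply, inv_eq_conj (norm_coord x), ← map_pow,
        ← ContinuousMap.pow_apply, coord_pow, ← fourier_neg, neg_neg]
    rw [h.density_eq_of_norm_eq_one (norm_coord x), ← hwx]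
    simp only [Finset.range_one, Finset.sum_singleton, moment, pow_zero, h.map_one, Nat.cast_zero,
      one_smul, star_sub, ContinuousMap.add_apply, ContinuousMap.sub_apply,
      ContinuousMap.star_apply, star_def, fourier_zero, _root_.map_one]
    ring

lemma integral_mul_density (g : C(𝕋, ℂ)) :
    ∫ x, g x * density Λ t (coord x) ∂AddCircle.haarAddCircle = Λ g := by
  obtain ⟨w, hw, hdensity⟩ := h.exists_hasSum_smul_fourier
  rw [← circleMean_mul_eq hw, circleMean_apply]
  simp only [ContinuousMap.mul_apply, hdensity]

end IsHarmonicMeasure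

end Density

/-! ### The uniformizer of the exterior domain -/

section Uniformizer

/-- The open annulus `q < |σ| < q⁻¹`. -/
def annulus (q : ℝ) : Set ℂ := {σ | q < ‖σ‖ ∧ ‖σ‖ < q⁻¹}

/-- The sum of the logarithmic potential over the inverses of the three sheets. -/
noncomputable def exponent (Λ : C(𝕋, ℂ) →L[ℂ] ℂ) (t : ℝ) (σ : ℂ) : ℂ :=
  ∑ ω ∈ cubeRoots, logPotential Λ (sheet t ω σ)⁻¹

/-- The polynomial of `(cubicSymbol t σ)⁻¹` that approximates the exponent by truncating the
logarithmic potential. -/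
noncomputable def exponentPoly (Λ : C(𝕋, ℂ) →L[ℂ] ℂ) (t : ℝ) (N : ℕ) : ℂ[X] :=
  ∑ n ∈ Finset.range N, C (moment Λ (n + 1) / (n + 1)) * sheetPowerSum t (n + 1)

/-- The conformal map of the exterior domain onto a disc around `0`, in the coordinate `σ` of the
domain with `c = (cubicSymbol t σ)⁻¹`. It extends holomorphically across the unit circle. -/
noncomputable def uniformizer (Λ : C(𝕋, ℂ) →L[ℂ] ℂ) (t : ℝ) (σ : ℂ) : ℂ :=
  exp (exponent Λ t σ) / cubicSymbol t σ

lemma isOpen_annulus (q : ℝ) : IsOpen (annulus q) :=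
  (isOpen_lt continuous_const continuous_norm).inter (isOpen_lt continuous_norm continuous_const)

lemma mem_annulus_of_norm_eq_one {q : ℝ} {τ : ℂ} (hq0 : 0 < q) (hq : q < 1) (hτ : ‖τ‖ = 1) :
    τ ∈ annulus q :=
  ⟨hτ ▸ hq, hτ ▸ (one_lt_inv₀ hq0).2 hq⟩

lemma uniformizer_ne_zero {Λ : C(𝕋, ℂ) →L[ℂ] ℂ} {t : ℝ} {σ : ℂ} (hσ : cubicSymbol t σ ≠ 0) :
    uniformizer Λ t σ ≠ 0 :=
  div_ne_zero (exp_ne_zero _) hσ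

namespace IsHarmonicMeasure

variable {t : ℝ} {Λ : C(𝕋, ℂ) →L[ℂ] ℂ} {ω σ : ℂ} (h : IsHarmonicMeasure t Λ)
include h

lemma mem_annulus (hσ : ‖σ‖ = 1) : σ ∈ annulus (innerRadius t) :=
  mem_annulus_of_norm_eq_one h.innerRadius_pos h.innerRadius_lt_one hσ

lemma mul_one_add_norm_lt (hσ : σ ∈ annulus (innerRadius t)) : t * (1 + ‖σ‖) < √3 := by
  have hlt := hσ.2
  rw [inv_innerRadius h.pos.ne', lt_sub_iff_add_lt', lt_div_iff₀' h.pos] at hlt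
  exact hlt

lemma ne_zero_of_mem_annulus (hσ : σ ∈ annulus (innerRadius t)) : σ ≠ 0 :=
  norm_pos_iff.1 (h.innerRadius_pos.trans hσ.1)

lemma cubicSymbol_ne_zero (hσ : σ ∈ annulus (innerRadius t)) : cubicSymbol t σ ≠ 0 :=
  CubicHull.cubicSymbol_ne_zero h.pos (h.ne_zero_of_mem_annulus hσ)
    (by linarith [h.mul_one_add_norm_lt hσ, h.pos])

lemma one_lt_norm_sheet (hσ : σ ∈ annulus (innerRadius t)) (hω : ω ∈ cubeRoots) (hω1 : ω ≠ 1) :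
    1 < ‖sheet t ω σ‖ := by
  have hlt := h.mul_one_add_norm_lt hσ
  have hle := sqrt_three_le_norm_sheet h.pos hω hω1 σ
  exact lt_of_add_lt_add_right (lt_of_mul_lt_mul_left (hlt.trans_le hle) h.pos.le)

lemma innerRadius_lt_norm_sheet (hσ : σ ∈ annulus (innerRadius t)) (hω : ω ∈ cubeRoots) :
    innerRadius t < ‖sheet t ω σ‖ := by
  rcases eq_or_ne ω 1 with rfl | hω1
  · rw [sheet_one h.pos.ne']
    exact hσ.1
  · exact h.innerRadius_lt_one.trans (h.one_lt_norm_sheet hσ hω hω1)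

lemma innerRadius_mul_norm_inv_sheet_lt_one (hσ : σ ∈ annulus (innerRadius t))
    (hω : ω ∈ cubeRoots) : innerRadius t * ‖(sheet t ω σ)⁻¹‖ < 1 := by
  have hlt := h.innerRadius_lt_norm_sheet hσ hω
  rw [norm_inv, ← div_eq_mul_inv]
  exact (div_lt_one (h.innerRadius_pos.trans hlt)).2 hlt

lemma hasDerivAt_exponent (hσ : σ ∈ annulus (innerRadius t)) :
    HasDerivAt (exponent Λ t) ((1 + t * σ) ^ 2 / cubicSymbol t σ - density Λ t σ / σ) σ := by
  have hterm {ω : ℂ} (hω : ω ∈ cubeRoots) := (h.hasDerivAt_logPotential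
    (h.innerRadius_mul_norm_inv_sheet_lt_one hσ hω)).comp σ ((hasDerivAt_sheet h.pos.ne' ω σ).inv
      (sheet_ne_zero h.pos.ne' hω (h.cubicSymbol_ne_zero hσ)))
  refine (HasDerivAt.fun_sum fun ω hω ↦ hterm hω).congr_deriv ?_
  rw [← sum_div_sheet h.pos.ne' (h.cubicSymbol_ne_zero hσ), density, Finset.sum_div,
    ← Finset.sum_sub_distrib]
  refine Finset.sum_congr rfl fun ω hω ↦ ?_
  rw [h.momentSeries_eq_one_add (h.innerRadius_mul_norm_inv_sheet_lt_one hσ hω)]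
  have hσ0 := h.ne_zero_of_mem_annulus hσ
  field_simp
  ring

lemma hasDerivAt_uniformizer (hσ : σ ∈ annulus (innerRadius t)) :
    HasDerivAt (uniformizer Λ t) (-(density Λ t σ / σ) * uniformizer Λ t σ) σ := by
  have hQ := h.cubicSymbol_ne_zero hσ
  refine ((h.hasDerivAt_exponent hσ).cexp.div (hasStrictDerivAt_cubicSymbol t σ).hasDerivAt
    hQ).congr_deriv ?_
  rw [uniformizer]
  field_simp
  ring

lemma differentiableOn_uniformizer :
    DifferentiableOn ℂ (uniformizer Λ t) (annulus (innerRadius t)) :=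
  fun _ hσ ↦ (h.hasDerivAt_uniformizer hσ).differentiableAt.differentiableWithinAt

lemma differentiableOn_density : DifferentiableOn ℂ (density Λ t) (annulus (innerRadius t)) := by
  have hη := h.differentiableOn_uniformizer
  refine ((differentiableOn_id.mul (hη.deriv (isOpen_annulus _))).neg.div hη fun σ hσ ↦
    uniformizer_ne_zero (h.cubicSymbol_ne_zero hσ)).congr fun σ hσ ↦ ?_
  have hσ0 := h.ne_zero_of_mem_annulus hσ
  have hη : uniformizer Λ t σ ≠ 0 := uniformizer_ne_zero (h.cubicSymbol_ne_zero hσ)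
  simp only [Pi.div_apply, Pi.neg_apply, Pi.mul_apply, id, (h.hasDerivAt_uniformizer hσ).deriv]
  field_simp

lemma norm_inv_sheet_le_one (hσ : σ ∈ annulus (innerRadius t)) (hσ1 : 1 ≤ ‖σ‖)
    (hω : ω ∈ cubeRoots) : ‖(sheet t ω σ)⁻¹‖ ≤ 1 := by
  rw [norm_inv]
  refine inv_le_one_of_one_le₀ ?_
  rcases eq_or_ne ω 1 with rfl | hω1
  · rwa [sheet_one h.pos.ne']
  · exact (h.one_lt_norm_sheet hσ hω hω1).le

lemma summable_norm_moment_succ : Summable fun n : ℕ ↦ ‖moment Λ (n + 1)‖ := by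
  have hsum := (h.summable_moment_mul_pow (y := 1) (by simpa using h.innerRadius_lt_one)).norm
  simpa using (summable_nat_add_iff 1).2 hsum

lemma tendstoUniformlyOn_exponentPoly :
    TendstoUniformlyOn (fun N σ ↦ (exponentPoly Λ t N).eval (cubicSymbol t σ)⁻¹) (exponent Λ t)
      Filter.atTop {σ ∈ annulus (innerRadius t) | 1 ≤ ‖σ‖} := by
  have hbound (n : ℕ) {y : ℂ} (hy : ‖y‖ ≤ 1) :
      ‖moment Λ (n + 1) / (n + 1) * y ^ (n + 1)‖ ≤ ‖moment Λ (n + 1)‖ := by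
    rw [norm_mul, norm_pow, norm_div]
    refine (mul_le_of_le_one_right (by positivity) (pow_le_one₀ (norm_nonneg _) hy)).trans
      (div_le_self (norm_nonneg _) ?_)
    rw [← Nat.cast_add_one, norm_natCast, Nat.one_le_cast]
    exact n.succ_pos
  have hpartial := tendstoUniformlyOn_tsum_nat (s := {σ ∈ annulus (innerRadius t) | 1 ≤ ‖σ‖})
    (f := fun n σ ↦ ∑ ω ∈ cubeRoots, moment Λ (n + 1) / (n + 1) * (sheet t ω σ)⁻¹ ^ (n + 1))
    (h.summable_norm_moment_succ.mul_left 3) fun n σ hσ ↦ by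
      refine (norm_sum_le_of_le _ fun ω hω ↦
        hbound n (h.norm_inv_sheet_le_one hσ.1 hσ.2 hω)).trans_eq ?_
      rw [Finset.sum_const, card_cubeRoots, nsmul_eq_mul, Nat.cast_ofNat]
  refine (hpartial.congr (.of_forall fun N σ hσ ↦ ?_)).congr_right fun σ hσ ↦ ?_
  · simp only [exponentPoly, eval_finsetSum, eval_mul, eval_C,
      eval_sheetPowerSum h.pos.ne' (h.cubicSymbol_ne_zero hσ.1), Finset.mul_sum]
  · exact Summable.tsum_finsetSum fun ω hω ↦ h.summable_norm_moment_succ.of_norm_bounded fun n ↦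
      hbound n (h.norm_inv_sheet_le_one hσ.1 hσ.2 hω)

end IsHarmonicMeasure

end Uniformizer

section BoundaryValues

/-- The primitive of the density, which is the argument of the boundary values of the
uniformizer. -/
noncomputable def boundaryAngle (Λ : C(𝕋, ℂ) →L[ℂ] ℂ) (t β : ℝ) : ℝ :=
  ∫ b in (0 : ℝ)..β, (density Λ t (coord b)).re

lemma hasDerivAt_coord (β : ℝ) : HasDerivAt (fun b : ℝ ↦ coord (b : 𝕋)) (-I * coord β) β := by
  simp only [coord_coe]
  refine (((hasDerivAt_id β).ofReal_comp.mul_const I).neg.cexp).congr_deriv ?_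
  simp only [Pi.neg_apply, id, ofReal_one]
  ring

lemma coord_zero : coord 0 = 1 := by
  rw [← QuotientAddGroup.mk_zero]
  simpa using coord_coe 0

namespace IsHarmonicMeasure

variable {t : ℝ} {Λ : C(𝕋, ℂ) →L[ℂ] ℂ} {σ τ : ℂ} {n : WithTop ℕ∞} (h : IsHarmonicMeasure t Λ)
include h

lemma coord_mem_annulus (x : 𝕋) : coord x ∈ annulus (innerRadius t) := h.mem_annulus (norm_coord x)

lemma abs_lt_one : |t| < 1 := by
  rw [abs_of_pos h.pos]
  linarith [h.lt, sqrt_three_lt_two]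

lemma contDiff_comp_coord {f : ℂ → ℂ} (hf : DifferentiableOn ℂ f (annulus (innerRadius t))) :
    ContDiff ℝ n fun β : ℝ ↦ f (coord β) := by
  refine ((hf.contDiffOn (isOpen_annulus _)).restrict_scalars ℝ).comp_contDiff ?_
    fun β ↦ h.coord_mem_annulus β
  simp only [coord_coe]
  exact (ofRealCLM.contDiff.mul contDiff_const).neg.cexp

lemma contDiff_density_coord : ContDiff ℝ n fun β : ℝ ↦ (density Λ t (coord β)).re :=
  reCLM.contDiff.comp (h.contDiff_comp_coord h.differentiableOn_density)

lemma ofReal_re_density (hτ : ‖τ‖ = 1) : ((density Λ t τ).re : ℂ) = density Λ t τ := by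
  rw [h.density_eq_of_norm_eq_one hτ, ← conj_eq_iff_re]
  simp only [map_sub, map_add, conj_conj, _root_.map_one, add_comm]

lemma hasDerivAt_boundaryAngle (β : ℝ) :
    HasDerivAt (boundaryAngle Λ t) (density Λ t (coord β)).re β :=
  (h.contDiff_density_coord (n := 0)).continuous.integral_hasStrictDerivAt 0 β |>.hasDerivAt

lemma uniformizer_coord (β : ℝ) :
    uniformizer Λ t (coord β) = uniformizer Λ t 1 * exp (I * boundaryAngle Λ t β) := by
  have hderiv (b : ℝ) : HasDerivAt
      (fun b : ℝ ↦ uniformizer Λ t (coord b) * exp (-(I * boundaryAngle Λ t b))) 0 b := by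
    refine (((h.hasDerivAt_uniformizer (h.coord_mem_annulus b)).comp b (hasDerivAt_coord b)).mul
      ((h.hasDerivAt_boundaryAngle b).ofReal_comp.const_mul I).neg.cexp).congr_deriv ?_
    rw [h.ofReal_re_density (norm_coord _)]
    have hne := h.ne_zero_of_mem_annulus (h.coord_mem_annulus b)
    field_simp
    simp
  have hconst := is_const_of_deriv_eq_zero (fun b ↦ (hderiv b).differentiableAt)
    (fun b ↦ (hderiv b).deriv) β 0
  rwa [exp_neg, ← div_eq_mul_inv, div_eq_iff (exp_ne_zero _), boundaryAngle,
    intervalIntegral.integral_same, ofReal_zero, mul_zero, neg_zero, exp_zero, mul_one,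
    QuotientAddGroup.mk_zero, coord_zero] at hconst

lemma norm_uniformizer_eq (hτ : ‖τ‖ = 1) : ‖uniformizer Λ t τ‖ = ‖uniformizer Λ t 1‖ := by
  obtain ⟨x, rfl⟩ := exists_coord_eq hτ
  obtain ⟨β, rfl⟩ := QuotientAddGroup.mk_surjective x
  rw [h.uniformizer_coord, norm_mul, mul_comm I, norm_exp_ofReal_mul_I, mul_one]

/-- On the boundary the approximations `c * exp (p c)`, with `p` the truncated exponent, are almost
bounded by the constant modulus of the uniformizer. -/
lemma norm_uniformizer_le (hσ : σ ∈ annulus (innerRadius t)) (hσ1 : 1 < ‖σ‖) :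
    ‖uniformizer Λ t σ‖ ≤ ‖uniformizer Λ t 1‖ := by
  have hle {ε : ℝ} (hε : 0 < ε) : ‖uniformizer Λ t σ‖ ≤ Real.exp ε * ‖uniformizer Λ t 1‖ := by
    have hpoint := (h.tendstoUniformlyOn_exponentPoly.tendsto_at ⟨hσ, hσ1.le⟩).cexp.div_const
      (cubicSymbol t σ)
    refine le_of_tendsto hpoint.norm ?_
    filter_upwards [Metric.tendstoUniformlyOn_iff.1 h.tendstoUniformlyOn_exponentPoly ε hε]
      with N hN
    have hmax := norm_le_of_mem_exteriorDomain (f := fun c ↦ c * exp ((exponentPoly Λ t N).eval c))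
      (C := Real.exp ε * ‖uniformizer Λ t 1‖) h.abs_lt_one
      (differentiable_id.mul (exponentPoly Λ t N).differentiable.cexp) (fun τ hτ ↦ ?_)
      (inv_cubicSymbol_mem_exteriorDomain h.pos hσ1 (h.mul_one_add_norm_lt hσ))
    · rwa [div_eq_inv_mul]
    · have hre := hN τ ⟨h.mem_annulus hτ, hτ.ge⟩
      rw [dist_comm, dist_eq_norm] at hre
      replace hre := (re_le_norm _).trans hre.le
      rw [sub_re, sub_le_iff_le_add] at hre
      rw [← h.norm_uniformizer_eq hτ, uniformizer, norm_mul, norm_div, norm_exp, norm_exp, norm_inv,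
        div_eq_inv_mul, mul_left_comm, ← Real.exp_add]
      gcongr
  have hlim : Filter.Tendsto (fun ε ↦ Real.exp ε * ‖uniformizer Λ t 1‖)
      (nhdsWithin 0 (Set.Ioi 0)) (nhds ‖uniformizer Λ t 1‖) :=
    tendsto_nhdsWithin_of_tendsto_nhds (Continuous.tendsto' (by fun_prop) _ _ (by simp))
  exact ge_of_tendsto hlim (Filter.eventually_of_mem self_mem_nhdsWithin fun ε hε ↦ hle hε)

end IsHarmonicMeasure

end BoundaryValues

section HopfLemma

lemma eq_one_and_re_neg_of_re_mul_pow_nonpos {c : ℂ} {k : ℕ} (hc : c ≠ 0) (hk : k ≠ 0)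
    (h : ∀ u : ℂ, 0 < u.re → (c * u ^ k).re ≤ 0) : k = 1 ∧ c.re < 0 := by
  set φ : ℝ := arg c / (k + 1) with hφ
  have harg : arg c = (k + 1) * φ := by rw [hφ]; field_simp
  have hφ_le : Real.pi / 2 ≤ |φ| := not_lt.1 fun hlt ↦ by
    have hcos : 0 < Real.cos φ := Real.cos_pos_of_mem_Ioo (abs_lt.1 hlt)
    have hpow : c * exp ((-φ : ℝ) * I) ^ k = ‖c‖ * exp (φ * I) := by
      conv_lhs => rw [← norm_mul_exp_arg_mul_I c, harg]
      rw [mul_assoc, ← exp_nat_mul, ← exp_add]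
      push_cast
      ring_nf
    have hre := h (exp ((-φ : ℝ) * I)) (by rwa [exp_ofReal_mul_I_re, Real.cos_neg])
    rw [hpow, re_ofReal_mul, exp_ofReal_mul_I_re] at hre
    exact hre.not_gt (mul_pos (norm_pos_iff.2 hc) hcos)
  have hk1 : (1 : ℝ) ≤ k := Nat.one_le_cast.2 (Nat.one_le_iff_ne_zero.2 hk)
  have harg_abs : |arg c| = (k + 1) * |φ| := by rw [harg, abs_mul, abs_of_pos (by positivity)]
  have hpi := Real.pi_pos
  have harg_le := abs_arg_le_pi c
  have hk_eq : (k : ℝ) = 1 := by nlinarith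
  have harg_pi : arg c = Real.pi := by
    refine (abs_eq hpi.le).1 (by rw [hk_eq] at harg_abs; linarith) |>.resolve_right fun hneg ↦ ?_
    linarith [neg_pi_lt_arg c]
  exact ⟨Nat.cast_eq_one.1 hk_eq, (arg_eq_pi_iff.1 harg_pi).1⟩

/-- The boundary point lemma of Hopf for the half plane to the right of `z₀`. -/
lemma re_deriv_div_neg_of_norm_le {f : ℂ → ℂ} {z₀ : ℂ} (hf : AnalyticAt ℂ f z₀) (hf0 : f z₀ ≠ 0)
    (hconst : ¬∀ᶠ z in nhds z₀, f z = f z₀)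
    (hle : ∀ᶠ z in nhds z₀, z₀.re < z.re → ‖f z‖ ≤ ‖f z₀‖) : (deriv f z₀ / f z₀).re < 0 := by
  obtain ⟨k, g, hg, hg0, hfg⟩ :=
    (hf.sub analyticAt_const).exists_eventuallyEq_pow_smul_nonzero_iff.2 (by
      simpa [sub_eq_zero] using hconst)
  have hk : k ≠ 0 := by
    rintro rfl
    have := hfg.self_of_nhds
    simp [hg0.symm] at this
  have hre (u : ℂ) (hu : 0 < u.re) : (g z₀ / f z₀ * u ^ k).re ≤ 0 := by
    have hray : Filter.Tendsto (fun r : ℝ ↦ z₀ + r * u) (nhdsWithin 0 (Set.Ioi 0)) (nhds z₀) :=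
      tendsto_nhdsWithin_of_tendsto_nhds (Continuous.tendsto' (by fun_prop) _ _ (by simp))
    refine le_of_tendsto ((continuous_re.tendsto _).comp
      (((hg.continuousAt.tendsto.comp hray).div_const _).mul_const _)) ?_
    filter_upwards [hray.eventually hfg, hray.eventually hle, self_mem_nhdsWithin]
      with r heq hnorm (hr : 0 < r)
    have hfactor : f (z₀ + r * u) =
        f z₀ * (1 + (r ^ k : ℝ) * (g (z₀ + r * u) / f z₀ * u ^ k)) := by
      rw [sub_eq_iff_eq_add'.1 heq, add_sub_cancel_left, smul_eq_mul]
      push_cast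
      field_simp
      ring
    have hle_one := hnorm (by simpa using mul_pos hr hu)
    rw [hfactor, norm_mul, mul_le_iff_le_one_right (norm_pos_iff.2 hf0)] at hle_one
    have hre := (re_le_norm _).trans hle_one
    rw [add_re, one_re, add_le_iff_nonpos_right, re_ofReal_mul] at hre
    exact nonpos_of_mul_nonpos_right hre (pow_pos hr k)
  obtain ⟨rfl, hneg⟩ := eq_one_and_re_neg_of_re_mul_pow_nonpos (div_ne_zero hg0 hf0) hk hre
  have hderiv : HasDerivAt f (g z₀) z₀ := by
    refine ((((hasDerivAt_id z₀).sub_const z₀).mul hg.differentiableAt.hasDerivAt).const_add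
      (f z₀)).congr_of_eventuallyEq ?_ |>.congr_deriv (by simp)
    filter_upwards [hfg] with z hz
    rw [sub_eq_iff_eq_add'.1 hz, pow_one]
    rfl
  rwa [hderiv.deriv]

end HopfLemma

namespace IsHarmonicMeasure

variable {t : ℝ} {Λ : C(𝕋, ℂ) →L[ℂ] ℂ} {τ : ℂ} (h : IsHarmonicMeasure t Λ)
include h

lemma exp_mem_annulus {s : ℂ} : exp s ∈ annulus (innerRadius t) ↔
    s.re ∈ Set.Ioo (Real.log (innerRadius t)) (Real.log (innerRadius t)⁻¹) := by
  have hq := h.innerRadius_pos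
  rw [annulus, Set.mem_ofPred, norm_exp, Set.mem_Ioo, Real.log_lt_iff_lt_exp hq,
    Real.lt_log_iff_exp_lt (inv_pos.2 hq)]

lemma hasDerivAt_uniformizer_exp {s : ℂ} (hs : exp s ∈ annulus (innerRadius t)) :
    HasDerivAt (fun z ↦ uniformizer Λ t (exp z))
      (-density Λ t (exp s) * uniformizer Λ t (exp s)) s := by
  refine ((h.hasDerivAt_uniformizer hs).comp s (hasDerivAt_exp s)).congr_deriv ?_
  rw [neg_mul, neg_mul, neg_mul, mul_right_comm, div_mul_cancel₀ _ (exp_ne_zero s)]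

lemma analyticOnNhd_uniformizer_exp :
    AnalyticOnNhd ℂ (fun z ↦ uniformizer Λ t (exp z)) (exp ⁻¹' annulus (innerRadius t)) :=
  DifferentiableOn.analyticOnNhd
    (fun _ hs ↦ (h.hasDerivAt_uniformizer_exp hs).differentiableAt.differentiableWithinAt)
    ((isOpen_annulus _).preimage continuous_exp)

lemma not_eventually_uniformizer_exp_eq {s : ℂ} (hs : exp s ∈ annulus (innerRadius t)) :
    ¬∀ᶠ z in nhds s, uniformizer Λ t (exp z) = uniformizer Λ t (exp s) := by
  intro hconst
  have hstrip : IsPreconnected (exp ⁻¹' annulus (innerRadius t)) := by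
    have hre : exp ⁻¹' annulus (innerRadius t) =
        reLm ⁻¹' Set.Ioo (Real.log (innerRadius t)) (Real.log (innerRadius t)⁻¹) :=
      Set.ext fun z ↦ h.exp_mem_annulus
    rw [hre]
    exact ((convex_Ioo _ _).linear_preimage reLm).isPreconnected
  have heq := h.analyticOnNhd_uniformizer_exp.eqOn_of_preconnected_of_eventuallyEq
    analyticOnNhd_const hstrip hs hconst
  have hzero {z : ℂ} (hz : exp z ∈ annulus (innerRadius t)) : density Λ t (exp z) = 0 := by
    have hnhds := ((isOpen_annulus _).preimage continuous_exp).mem_nhds hz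
    have hderiv := (h.hasDerivAt_uniformizer_exp hz).unique
      ((hasDerivAt_const z _).congr_of_eventuallyEq (heq.eventuallyEq_of_mem hnhds))
    simpa [uniformizer_ne_zero (h.cubicSymbol_ne_zero hz)] using hderiv
  have hmean := h.integral_mul_density 1
  have hcoord (x : 𝕋) : density Λ t (coord x) = 0 := by
    obtain ⟨β, rfl⟩ := QuotientAddGroup.mk_surjective x
    have hmem := h.coord_mem_annulus β
    rw [coord_coe] at hmem ⊢
    exact hzero hmem
  simp [hcoord, h.map_one] at hmean

lemma density_re_pos (hτ : ‖τ‖ = 1) : 0 < (density Λ t τ).re := by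
  obtain ⟨x, rfl⟩ := exists_coord_eq hτ
  obtain ⟨β, rfl⟩ := QuotientAddGroup.mk_surjective x
  have hmem := h.coord_mem_annulus β
  rw [coord_coe] at hmem hτ ⊢
  have hη := uniformizer_ne_zero (Λ := Λ) (h.cubicSymbol_ne_zero hmem)
  have hneg := re_deriv_div_neg_of_norm_le (h.analyticOnNhd_uniformizer_exp _ hmem) hη
    (h.not_eventually_uniformizer_exp_eq hmem) ?_
  · rw [(h.hasDerivAt_uniformizer_exp hmem).deriv, mul_div_cancel_right₀ _ hη, neg_re] at hneg
    exact neg_neg_iff_pos.1 hneg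
  filter_upwards [((isOpen_annulus _).preimage continuous_exp).mem_nhds hmem] with z hz hlt
  rw [h.norm_uniformizer_eq hτ]
  refine h.norm_uniformizer_le hz ?_
  rw [norm_exp]
  simpa using hlt

end IsHarmonicMeasure

/-! ### Existence of the model disc -/

section FourierSeries

lemma periodic_deriv {E : Type*} [NormedAddCommGroup E] [NormedSpace ℝ E] {f : ℝ → E} {T : ℝ}
    (hf : Function.Periodic f T) : Function.Periodic (deriv f) T := fun x ↦ by
  rw [← deriv_comp_add_const, hf.funext]

variable {T : ℝ} [hT : Fact (0 < T)]

lemma norm_fourierCoeff_le (f : C(AddCircle T, ℂ)) (n : ℤ) : ‖fourierCoeff f n‖ ≤ ‖f‖ := by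
  refine (MeasureTheory.norm_integral_le_of_norm_le_const (C := ‖f‖)
    (.of_forall fun x ↦ ?_)).trans_eq (by simp)
  rw [norm_smul, fourier_apply, Circle.norm_coe, one_mul]
  exact f.norm_coe_le_norm x

lemma fourierCoeff_lift_of_hasDerivAt {f f' : ℝ → ℂ} (hf : ∀ x, HasDerivAt f (f' x) x)
    (hf' : Continuous f') (hper : Function.Periodic f T) (hper' : Function.Periodic f' T) (n : ℤ) :
    fourierCoeff hper'.lift n = 2 * Real.pi * I * n / T * fourierCoeff hper.lift n := by
  have hparts := intervalIntegral.integral_mul_deriv_eq_deriv_mul (a := 0) (b := T)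
    (fun x _ ↦ hasDerivAt_fourier_neg T n x) (fun x _ ↦ hf x)
    (Continuous.intervalIntegrable (by fun_prop) _ _) (hf'.intervalIntegrable _ _)
  rw [hper.eq, AddCircle.coe_period, QuotientAddGroup.mk_zero, sub_self, zero_sub] at hparts
  rw [fourierCoeff_eq_intervalIntegral _ n 0, fourierCoeff_eq_intervalIntegral _ n 0]
  simp only [zero_add, Function.Periodic.lift_coe, smul_eq_mul]
  rw [hparts, ← intervalIntegral.integral_neg, mul_smul_comm, ← intervalIntegral.integral_const_mul]
  congr 2 with x
  ring

lemma summable_fourierCoeff_lift {f : ℝ → ℂ} (hf : ContDiff ℝ 2 f) (hper : Function.Periodic f T) :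
    Summable (fourierCoeff hper.lift) := by
  have hT0 := hT.out
  have hf1 : ContDiff ℝ 1 (deriv f) := (contDiff_succ_iff_deriv.1 hf).2.2
  have hf2 : Continuous (deriv (deriv f)) := hf1.continuous_deriv le_rfl
  have hper1 := periodic_deriv hper
  have hper2 := periodic_deriv hper1
  let f2 : C(AddCircle T, ℂ) := ⟨hper2.lift, continuous_quot_lift _ hf2⟩
  have hcoeff (n : ℤ) : fourierCoeff f2 n =
      (2 * Real.pi * I * n / T) ^ 2 * fourierCoeff hper.lift n := by
    refine (fourierCoeff_lift_of_hasDerivAt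
      (fun x ↦ (hf1.differentiable one_ne_zero x).hasDerivAt) hf2 hper1 hper2 n).trans ?_
    rw [fourierCoeff_lift_of_hasDerivAt
      (fun x ↦ (hf.differentiable two_ne_zero x).hasDerivAt) hf1.continuous hper, ← mul_assoc,
      ← pow_two]
  refine .of_norm_bounded_eventually
    (((Real.summable_one_div_int_pow.2 one_lt_two).mul_left ((T / (2 * Real.pi)) ^ 2 * ‖f2‖))) ?_
  filter_upwards [(Set.finite_singleton (0 : ℤ)).compl_mem_cofinite] with n hn
  have hn0 : (n : ℝ) ≠ 0 := Int.cast_ne_zero.2 hn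
  have hbound : (2 * Real.pi * |(n : ℝ)| / T) ^ 2 * ‖fourierCoeff hper.lift n‖ ≤ ‖f2‖ := by
    refine le_of_eq_of_le ?_ (norm_fourierCoeff_le f2 n)
    rw [hcoeff]
    simp [abs_of_pos, hT0, Real.pi_pos]
  calc ‖fourierCoeff hper.lift n‖
      = (T / (2 * Real.pi)) ^ 2 *
          ((2 * Real.pi * |(n : ℝ)| / T) ^ 2 * ‖fourierCoeff hper.lift n‖) * (1 / (n : ℝ) ^ 2) := by
        rw [← sq_abs (n : ℝ)]
        field_simp
    _ ≤ _ := by gcongr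

lemma exists_diffContOnCl_of_fourierCoeff_eq_zero {f : C(AddCircle T, ℂ)}
    (hf : Summable (fourierCoeff f)) (hneg : ∀ n < 0, fourierCoeff f n = 0) :
    ∃ H : ℂ → ℂ, DiffContOnCl ℂ H (Metric.ball 0 1) ∧ ∀ x : AddCircle T, H (x.toCircle) = f x := by
  have hnorm : Summable fun n : ℕ ↦ ‖fourierCoeff f n‖ :=
    (hf.comp_injective Nat.cast_injective).norm
  have hterm (n : ℕ) {z : ℂ} (hz : ‖z‖ ≤ 1) : ‖fourierCoeff f n * z ^ n‖ ≤ ‖fourierCoeff f n‖ := by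
    rw [norm_mul, norm_pow]
    exact mul_le_of_le_one_right (norm_nonneg _) (pow_le_one₀ (norm_nonneg _) hz)
  refine ⟨fun z ↦ ∑' n : ℕ, fourierCoeff f n * z ^ n, ⟨?_, ?_⟩, fun x ↦ ?_⟩
  · exact differentiableOn_tsum_of_summable_norm hnorm (fun n ↦ by fun_prop) Metric.isOpen_ball
      fun n z hz ↦ hterm n (mem_ball_zero_iff.1 hz).le
  · rw [closure_ball _ one_ne_zero]
    exact continuousOn_tsum (fun n ↦ by fun_prop) hnorm
      fun n z hz ↦ hterm n (mem_closedBall_zero_iff.1 hz)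
  · have hsum := has_pointwise_sum_fourier_series_of_summable hf x
    rw [← Function.Injective.hasSum_iff (Nat.cast_injective (R := ℤ)) fun n hn ↦ ?_] at hsum
    · refine (hsum.congr_fun fun n ↦ ?_).tsum_eq
      simp [fourier_apply, AddCircle.toCircle_zsmul]
    · rw [hneg n, zero_smul]
      by_contra! h0
      exact hn ⟨n.toNat, Int.toNat_of_nonneg h0⟩

end FourierSeries

section Periodic

lemma isBoundedLipschitzOn_comp_arg {f : ℝ → ℝ} (hf : ContDiff ℝ 1 f)
    (hper : Function.Periodic f (2 * Real.pi)) :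
    IsBoundedLipschitzOn (fun ζ : ℂ ↦ f (arg ζ)) (Metric.sphere 0 1) := by
  refine isBoundedLipschitzOn_of_contDiffAt (isCompact_sphere 0 1) fun ζ hζ ↦ ?_
  have hζ0 : ζ ≠ 0 := ne_zero_of_mem_unit_sphere ⟨ζ, hζ⟩
  have hrot : (fun ω ↦ f (arg ω)) =ᶠ[nhds ζ] fun ω ↦ f (arg ζ + (log (ω / ζ)).im) := by
    filter_upwards [isOpen_ne.mem_nhds hζ0] with ω hω
    have hangle := arg_mul_coe_angle hζ0 (div_ne_zero hω hζ0)
    rw [mul_div_cancel₀ _ hζ0, ← Real.Angle.coe_add] at hangle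
    rw [log_im]
    exact congrArg hper.lift hangle
  have hlog : ContDiffAt ℝ 1 (fun ω ↦ log (ω / ζ)) ζ := by
    refine ((contDiffAt_log ?_).restrict_scalars ℝ).comp ζ (contDiffAt_id.div_const ζ)
    rw [div_self hζ0]
    exact one_mem_slitPlane
  exact (hf.contDiffAt.comp ζ (contDiffAt_const.add
    (imCLM.contDiff.contDiffAt.comp ζ hlog))).congr_of_eventuallyEq hrot

/-- `f - id` is periodic, hence bounded, so that `f` is onto. -/
lemma exists_contDiff_inverse {f f' : ℝ → ℝ} {T : ℝ} {n : WithTop ℕ∞} (hT : T ≠ 0)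
    (hf : ContDiff ℝ n f) (hderiv : ∀ x, HasDerivAt f (f' x) x) (hpos : ∀ x, 0 < f' x)
    (hper : ∀ x, f (x + T) = f x + T) :
    ∃ g, ContDiff ℝ n g ∧ Function.LeftInverse g f ∧ Function.RightInverse g f := by
  have hsub : Function.Periodic (fun x ↦ f x - x) T := fun x ↦ by
    simp only [hper, add_sub_add_right_eq_sub]
  obtain ⟨M, hM⟩ := (hsub.isBounded_of_continuous hT
    (hf.continuous.sub continuous_id)).exists_norm_le
  replace hM (x : ℝ) : -M ≤ f x - x ∧ f x - x ≤ M := abs_le.1 (hM _ ⟨x, rfl⟩)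
  have hsurj : Function.Surjective f := hf.continuous.surjective
    (Filter.tendsto_atTop_mono (fun x ↦ show x + -M ≤ f x by linarith [(hM x).1])
      (Filter.tendsto_atTop_add_const_right _ (-M) Filter.tendsto_id))
    (Filter.tendsto_atBot_mono (fun x ↦ show f x ≤ x + M by linarith [(hM x).2])
      (Filter.tendsto_atBot_add_const_right _ M Filter.tendsto_id))
  let e := ((strictMono_of_hasDerivAt_pos hderiv hpos).orderIsoOfSurjective f hsurj).toHomeomorph
  exact ⟨e.symm, e.contDiff_symm_deriv (fun x ↦ (hpos x).ne') hderiv hf, e.symm_apply_apply,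
    e.apply_symm_apply⟩

end Periodic

section BoundaryExtension

lemma exp_arg_mul_I {ζ : ℂ} (hζ : ‖ζ‖ = 1) : exp (arg ζ * I) = ζ := by
  simpa [hζ] using norm_mul_exp_arg_mul_I ζ

lemma exists_diffContOnCl_eq_comp_arg {f : ℝ → ℂ} (hf : ContDiff ℝ 2 f)
    (hper : Function.Periodic f (2 * Real.pi)) (hneg : ∀ n < 0, fourierCoeff hper.lift n = 0) :
    ∃ H : ℂ → ℂ, DiffContOnCl ℂ H (Metric.ball 0 1) ∧ ∀ ⦃ζ : ℂ⦄, ‖ζ‖ = 1 → H ζ = f (arg ζ) := by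
  obtain ⟨H, hH, hcircle⟩ := exists_diffContOnCl_of_fourierCoeff_eq_zero
    (f := ⟨hper.lift, continuous_quot_lift _ hf.continuous⟩)
    (summable_fourierCoeff_lift hf hper) hneg
  refine ⟨H, hH, fun ζ hζ ↦ ?_⟩
  have harg : (AddCircle.toCircle (arg ζ : 𝕋) : ℂ) = ζ := by
    rw [AddCircle.toCircle_apply_mk, div_self Real.two_pi_pos.ne', one_mul, Circle.coe_exp]
    exact exp_arg_mul_I hζ
  exact (congrArg H harg).symm.trans (hcircle (arg ζ))

end BoundaryExtension

section BoundaryExponent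

/-- The logarithm of the boundary values of `cubicSymbol t * uniformizer Λ t`, normalized so that
it vanishes along with the argument of the uniformizer. -/
noncomputable def boundaryExponent (Λ : C(𝕋, ℂ) →L[ℂ] ℂ) (t : ℝ) (x : 𝕋) : ℂ :=
  exponent Λ t (coord x) - log (uniformizer Λ t 1)

namespace IsHarmonicMeasure

variable {t : ℝ} {Λ : C(𝕋, ℂ) →L[ℂ] ℂ} (h : IsHarmonicMeasure t Λ)
include h

lemma continuous_comp_coord {f : ℂ → ℂ} (hf : ContinuousOn f (annulus (innerRadius t))) :
    Continuous fun x ↦ f (coord x) :=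
  hf.comp_continuous coord.continuous h.coord_mem_annulus

lemma differentiableOn_exponent : DifferentiableOn ℂ (exponent Λ t) (annulus (innerRadius t)) :=
  fun _ hσ ↦ (h.hasDerivAt_exponent hσ).differentiableAt.differentiableWithinAt

lemma continuous_boundaryExponent : Continuous (boundaryExponent Λ t) :=
  (h.continuous_comp_coord h.differentiableOn_exponent.continuousOn).sub continuous_const

lemma exp_boundaryExponent_div (β : ℝ) : exp (boundaryExponent Λ t β) / cubicSymbol t (coord β) =
    exp (I * boundaryAngle Λ t β) := by
  have hη1 : uniformizer Λ t 1 ≠ 0 :=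
    uniformizer_ne_zero (h.cubicSymbol_ne_zero (h.mem_annulus norm_one))
  rw [boundaryExponent, exp_sub, exp_log hη1, div_right_comm, ← uniformizer, h.uniformizer_coord,
    mul_div_cancel_left₀ _ hη1]

lemma hasDerivAt_boundaryExponent (β : ℝ) : HasDerivAt (fun b : ℝ ↦ boundaryExponent Λ t b)
    (-I * (coord β * (1 + t * coord β) ^ 2 / cubicSymbol t (coord β) -
      (density Λ t (coord β)).re)) β := by
  refine (((h.hasDerivAt_exponent (h.coord_mem_annulus β)).comp β
    (hasDerivAt_coord β)).sub_const _).congr_deriv ?_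
  rw [h.ofReal_re_density (norm_coord _)]
  have hne := h.ne_zero_of_mem_annulus (h.coord_mem_annulus β)
  field_simp

/-- Truncating the exponent turns `g` into an entire function of `(cubicSymbol t (coord x))⁻¹` that
vanishes at `0`. -/
lemma map_boundaryExponent_mul_pow {n : ℕ} (hn : n ≠ 0) {g : C(𝕋, ℂ)}
    (hg : ∀ x, g x = boundaryExponent Λ t x *
      (exp (boundaryExponent Λ t x) / cubicSymbol t (coord x)) ^ n) : Λ g = 0 := by
  set k := log (uniformizer Λ t 1)
  let q : C(𝕋, ℂ) := ⟨fun x ↦ (cubicSymbol t (coord x))⁻¹, h.continuous_comp_coord <|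
    ContinuousOn.inv₀ (by unfold cubicSymbol; fun_prop) fun _ ↦ h.cubicSymbol_ne_zero⟩
  let e : C(𝕋, ℂ) := ⟨boundaryExponent Λ t, h.continuous_boundaryExponent⟩
  let approx (N : ℕ) : C(𝕋, ℂ) := ⟨fun x ↦ (exponentPoly Λ t N).eval (q x) - k, by fun_prop⟩
  let Φ (u : C(𝕋, ℂ)) : C(𝕋, ℂ) := u * (q * (⟨exp, continuous_exp⟩ : C(ℂ, ℂ)).comp u) ^ n
  have hΦ : Continuous Φ :=
    continuous_id.mul ((continuous_const.mul (ContinuousMap.continuous_postcomp _)).pow n)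
  have happrox : Filter.Tendsto approx Filter.atTop (nhds e) := by
    rw [ContinuousMap.tendsto_iff_tendstoUniformly, Metric.tendstoUniformly_iff]
    intro ε hε
    filter_upwards [Metric.tendstoUniformlyOn_iff.1 h.tendstoUniformlyOn_exponentPoly ε hε]
      with N hN x
    simpa [approx, e, q, boundaryExponent, k]
      using hN (coord x) ⟨h.coord_mem_annulus x, (norm_coord x).ge⟩
  have hzero (N : ℕ) : Λ (Φ (approx N)) = 0 := by
    refine h.map_eq_zero (G := fun c ↦ ((exponentPoly Λ t N).eval c - k) *
      (c * exp ((exponentPoly Λ t N).eval c - k)) ^ n) ?_ (by simp [hn]) fun x ↦ rfl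
    have := (exponentPoly Λ t N).differentiable
    fun_prop
  have hlim := (Λ.continuous.tendsto _).comp ((hΦ.tendsto e).comp happrox)
  have hge : Φ e = g := by
    ext x
    rw [hg, div_eq_inv_mul]
    rfl
  rw [← hge]
  exact tendsto_nhds_unique hlim (tendsto_const_nhds.congr fun N ↦ (hzero N).symm)

lemma intervalIntegral_mul_density (g : C(𝕋, ℂ)) :
    ∫ β in (0 : ℝ)..2 * Real.pi, (density Λ t (coord β)).re • g β = 2 * Real.pi * Λ g := by
  have hcircle := AddCircle.intervalIntegral_preimage (2 * Real.pi) 0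
    fun x : 𝕋 ↦ g x * density Λ t (coord x)
  rw [← h.integral_mul_density, AddCircle.integral_haarAddCircle, ← hcircle, zero_add, real_smul,
    ofReal_inv, ofReal_mul, ofReal_ofNat, mul_inv_cancel_left₀ (by simp [Real.pi_ne_zero])]
  simp only [real_smul, h.ofReal_re_density (norm_coord _), mul_comm]

lemma boundaryAngle_two_pi : boundaryAngle Λ t (2 * Real.pi) = 2 * Real.pi := by
  have hmean := h.intervalIntegral_mul_density 1
  simp only [ContinuousMap.one_apply, real_smul, mul_one, h.map_one] at hmean
  rw [intervalIntegral.integral_ofReal] at hmean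
  exact_mod_cast hmean

lemma boundaryAngle_add_two_pi (β : ℝ) :
    boundaryAngle Λ t (β + 2 * Real.pi) = boundaryAngle Λ t β + 2 * Real.pi := by
  have hper : Function.Periodic (fun b : ℝ ↦ (density Λ t (coord b)).re) (2 * Real.pi) := fun b ↦ by
    simp only [AddCircle.coe_add_period]
  have hint (a b : ℝ) : IntervalIntegrable (fun b : ℝ ↦ (density Λ t (coord b)).re)
      MeasureTheory.volume a b :=
    (h.contDiff_density_coord (n := 0)).continuous.intervalIntegrable a b
  conv_rhs => rw [← h.boundaryAngle_two_pi]
  rw [boundaryAngle, boundaryAngle, boundaryAngle,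
    ← intervalIntegral.integral_add_adjacent_intervals (hint 0 β) (hint _ _),
    hper.intervalIntegral_add_eq β 0, zero_add]

lemma contDiff_boundaryAngle (n : ℕ) : ContDiff ℝ n (boundaryAngle Λ t) := by
  refine ContDiff.of_le (n := n + 1) ?_ le_self_add
  rw [contDiff_succ_iff_deriv]
  refine ⟨fun β ↦ (h.hasDerivAt_boundaryAngle β).differentiableAt, by simp, ?_⟩
  rw [funext fun β ↦ (h.hasDerivAt_boundaryAngle β).deriv]
  exact h.contDiff_density_coord

lemma exists_boundaryAngle_inverse (n : ℕ) : ∃ θ : ℝ → ℝ, ContDiff ℝ n θ ∧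
    Function.LeftInverse θ (boundaryAngle Λ t) ∧ Function.RightInverse θ (boundaryAngle Λ t) :=
  exists_contDiff_inverse Real.two_pi_pos.ne' (h.contDiff_boundaryAngle n)
    h.hasDerivAt_boundaryAngle (fun _ ↦ h.density_re_pos (norm_coord _)) h.boundaryAngle_add_two_pi

lemma intervalIntegral_eq_map {f : ℝ → ℂ} (hf : Continuous f) {g : C(𝕋, ℂ)}
    (hg : ∀ β : ℝ, g β = f (boundaryAngle Λ t β)) :
    ∫ x in (0 : ℝ)..2 * Real.pi, f x = 2 * Real.pi * Λ g := by
  have hsub := intervalIntegral.integral_deriv_smul_comp (a := 0) (b := 2 * Real.pi)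
    (fun β _ ↦ h.hasDerivAt_boundaryAngle β)
    (h.contDiff_density_coord (n := 0)).continuous.continuousOn hf
  rw [h.boundaryAngle_two_pi, boundaryAngle, intervalIntegral.integral_same] at hsub
  rw [← hsub, ← h.intervalIntegral_mul_density]
  simp only [hg, Function.comp_apply]

lemma fourierCoeff_lift_boundaryExponent {θ : ℝ → ℝ} (hθ : Continuous θ)
    (hleft : Function.LeftInverse θ (boundaryAngle Λ t))
    (hper : Function.Periodic (fun x ↦ boundaryExponent Λ t (θ x)) (2 * Real.pi)) {n : ℤ}
    (hn : n < 0) : fourierCoeff hper.lift n = 0 := by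
  obtain ⟨m, rfl⟩ := Int.exists_eq_neg_ofNat hn.le
  have hm : m ≠ 0 := by simpa [pos_iff_ne_zero] using hn
  let g : C(𝕋, ℂ) := ⟨fun x ↦ boundaryExponent Λ t x *
    (exp (boundaryExponent Λ t x) / cubicSymbol t (coord x)) ^ m,
    h.continuous_boundaryExponent.mul <| (h.continuous_boundaryExponent.cexp.div
      (by unfold cubicSymbol; fun_prop)
      fun x ↦ h.cubicSymbol_ne_zero (h.coord_mem_annulus x)).pow m⟩
  have hint := h.intervalIntegral_eq_map
    (f := fun x ↦ fourier (m : ℤ) (x : 𝕋) • boundaryExponent Λ t (θ x)) (g := g)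
    ((by fun_prop : Continuous fun x : ℝ ↦ fourier (m : ℤ) (x : 𝕋)).smul
      (h.continuous_boundaryExponent.comp (AddCircle.continuous_mk' _ |>.comp hθ))) fun β ↦ ?_
  · rw [fourierCoeff_eq_intervalIntegral _ _ 0]
    simp only [zero_add, neg_neg, Function.Periodic.lift_coe]
    rw [hint, h.map_boundaryExponent_mul_pow hm fun x ↦ rfl, mul_zero, smul_zero]
  · rw [hleft, fourier_coe_apply, ContinuousMap.coe_mk, h.exp_boundaryExponent_div, ← exp_nat_mul,
      smul_eq_mul, mul_comm]
    congr 2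
    push_cast
    field_simp

end IsHarmonicMeasure

end BoundaryExponent

section ModelDiscExistence

lemma phase_half_sub_arg (θ : ℝ → ℝ) {ζ : ℂ} (hζ : ‖ζ‖ = 1) :
    phase (fun ω ↦ (θ (arg ω) - arg ω) / 2) ζ = coord (θ (arg ζ)) := by
  rw [phase, coord_coe]
  nth_rw 1 [← exp_arg_mul_I hζ]
  rw [← exp_conj, ← exp_add]
  congr 1
  simp only [map_mul, conj_ofReal, conj_I]
  push_cast
  ring

namespace IsHarmonicMeasure

variable {t : ℝ} {Λ : C(𝕋, ℂ) →L[ℂ] ℂ} (h : IsHarmonicMeasure t Λ) {θ : ℝ → ℝ}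
include h

lemma inverse_add_two_pi (hleft : Function.LeftInverse θ (boundaryAngle Λ t))
    (hright : Function.RightInverse θ (boundaryAngle Λ t)) (x : ℝ) :
    θ (x + 2 * Real.pi) = θ x + 2 * Real.pi := by
  rw [← hleft (θ x + 2 * Real.pi), h.boundaryAngle_add_two_pi, hright]

lemma hasDerivAt_boundaryExponent_inverse (hθ : Continuous θ)
    (hright : Function.RightInverse θ (boundaryAngle Λ t)) (x : ℝ) :
    HasDerivAt (fun x ↦ boundaryExponent Λ t (θ x))
      (-I * (coord (θ x) * (1 + t * coord (θ x)) ^ 2 / cubicSymbol t (coord (θ x)) /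
        (density Λ t (coord (θ x))).re - 1)) x := by
  have hpos := h.density_re_pos (norm_coord (θ x))
  have hderiv := HasDerivAt.of_local_left_inverse hθ.continuousAt (h.hasDerivAt_boundaryAngle (θ x))
    hpos.ne' (.of_forall hright)
  refine ((h.hasDerivAt_boundaryExponent (θ x)).scomp x hderiv).congr_deriv ?_
  rw [real_smul, ofReal_inv, mul_left_comm, inv_mul_eq_div, sub_div,
    div_self (ofReal_ne_zero.2 hpos.ne')]

end IsHarmonicMeasure

theorem exists_isModelDisc {t : ℝ} (ht0 : 0 < t) (ht : t < √3 / 2) :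
    ∃ X W E b, IsModelDisc t X W E b := by
  obtain ⟨Λ, h⟩ := exists_isHarmonicMeasure ht0 ht
  obtain ⟨θ, hθ, hleft, hright⟩ := h.exists_boundaryAngle_inverse 3
  have hθ_add := h.inverse_add_two_pi hleft hright
  set f : ℝ → ℂ := fun x ↦ boundaryExponent Λ t (θ x) with hf_def
  have hf_deriv := h.hasDerivAt_boundaryExponent_inverse hθ.continuous hright
  have hf : ContDiff ℝ 3 f :=
    ((h.contDiff_comp_coord h.differentiableOn_exponent).sub contDiff_const).comp hθ
  have hf' : ContDiff ℝ 2 (deriv f) := (contDiff_succ_iff_deriv.1 hf).2.2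
  have hper : Function.Periodic f (2 * Real.pi) := fun x ↦ by
    simp only [hf_def, hθ_add, AddCircle.coe_add_period]
  have hcoeff (n : ℤ) (hn : n < 0) : fourierCoeff hper.lift n = 0 :=
    h.fourierCoeff_lift_boundaryExponent hθ.continuous hleft hper hn
  obtain ⟨E, hE, hE_arg⟩ :=
    exists_diffContOnCl_eq_comp_arg (hf.of_le (by norm_num)) hper hcoeff
  obtain ⟨B, hB, hB_arg⟩ :=
    exists_diffContOnCl_eq_comp_arg hf' (periodic_deriv hper) fun n hn ↦ by
      rw [fourierCoeff_lift_of_hasDerivAt (fun x ↦ (hf_deriv x).differentiableAt.hasDerivAt)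
        hf'.continuous hper, hcoeff n hn, mul_zero]
  refine ⟨fun ζ ↦ (θ (arg ζ) - arg ζ) / 2, fun ζ ↦ (density Λ t (coord (θ (arg ζ)))).re, E,
    fun ζ ↦ 1 + I * B ζ, hE, diffContOnCl_const.add (hB.const_smul I), ?_, ?_,
    fun _ ↦ h.density_re_pos (norm_coord _), fun {ζ} hζ ↦ ?_, fun {ζ} hζ ↦ ?_⟩
  · refine isBoundedLipschitzOn_comp_arg (f := fun x ↦ (θ x - x) / 2)
      (((hθ.of_le (by norm_num)).sub contDiff_id).div_const 2) fun x ↦ ?_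
    simp only [hθ_add, add_sub_add_right_eq_sub]
  · refine isBoundedLipschitzOn_comp_arg (f := fun x ↦ (density Λ t (coord (θ x))).re)
      (h.contDiff_density_coord.comp (hθ.of_le (by norm_num))) fun x ↦ ?_
    simp only [hθ_add, AddCircle.coe_add_period]
  · have hexp := h.exp_boundaryExponent_div (θ (arg ζ))
    rw [hright, mul_comm I, exp_arg_mul_I hζ,
      div_eq_iff (h.cubicSymbol_ne_zero (h.coord_mem_annulus _))] at hexp
    rw [phase_half_sub_arg θ hζ, hE_arg hζ, hf_def, hexp, mul_right_comm, mul_conj', hζ]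
    simp
  · have hpos := ofReal_ne_zero.2 (h.density_re_pos (norm_coord (θ (arg ζ)))).ne'
    have hQ := h.cubicSymbol_ne_zero (h.coord_mem_annulus (θ (arg ζ)))
    rw [phase_half_sub_arg θ hζ, hB_arg hζ, (hf_deriv _).deriv, neg_mul, mul_neg, ← mul_assoc,
      I_mul_I]
    field_simp
    ring

end ModelDiscExistence

/-! ### Rescaling -/

section Rescaling

open Metric Filter Asymptotics Topology

variable {E F : Type*} [NormedAddCommGroup E] [NormedAddCommGroup F]

lemma eventually_forall_norm_translate_sub_lt {f : E → F} (hf : Continuous f) {K : Set E}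
    (hK : IsCompact K) {ε : ℝ} (hε : 0 < ε) : ∀ᶠ c in 𝓝 0, ∀ z ∈ K, ‖f (z + c) - f z‖ < ε :=
  hK.eventually_forall_of_forall_eventually fun z _ ↦ by
    have hcont : ContinuousAt (fun q : E × E ↦ ‖f (q.2 + q.1) - f q.2‖) (0, z) := by fun_prop
    exact hcont.tendsto.eventually_lt_const (by simpa using hε)

variable [NormedSpace ℝ E] [NormedSpace ℝ F]

lemma boundedLipschitzOn_of_norm_fderiv_le {f : E → F} {S : Set E} {M : ℝ} (hM : 0 ≤ M)
    (hS : Convex ℝ S) (hf : ∀ x ∈ S, DifferentiableAt ℝ f x) (hnorm : ∀ x ∈ S, ‖f x‖ ≤ M)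
    (hderiv : ∀ x ∈ S, ‖fderiv ℝ f x‖ ≤ M) : BoundedLipschitzOn M f S where
  nonneg := hM
  norm_le hx := hnorm _ hx
  norm_sub_le hx hy := by
    rw [dist_eq_norm]
    exact hS.norm_image_sub_le_of_norm_fderiv_le hf hderiv hy hx

lemma eventually_boundedLipschitzOn_translate_sub {f : E → F} (hf : ContDiff ℝ 1 f) {K : Set E}
    (hK : IsCompact K) (hconv : Convex ℝ K) {ε : ℝ} (hε : 0 < ε) :
    ∀ᶠ c in 𝓝 0, BoundedLipschitzOn ε (fun z ↦ f (z + c) - f z) K := by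
  have hdiff : Differentiable ℝ f := hf.differentiable one_ne_zero
  filter_upwards [eventually_forall_norm_translate_sub_lt hdiff.continuous hK hε,
    eventually_forall_norm_translate_sub_lt (hf.continuous_fderiv one_ne_zero) hK hε] with c hc hc'
  refine boundedLipschitzOn_of_norm_fderiv_le hε.le hconv (fun z _ ↦ by fun_prop)
    (fun z hz ↦ (hc z hz).le) fun z hz ↦ ?_
  rw [fderiv_fun_sub (by fun_prop) (by fun_prop), fderiv_comp_add_right]
  exact (hc' z hz).le

lemma isLittleO_iteratedFDeriv {f : E → F} {x : E} {k m : ℕ} (hf : ContDiffAt ℝ (k + m : ℕ) f x)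
    (hzero : ∀ j ≤ k + m, iteratedFDeriv ℝ j f x = 0) :
    iteratedFDeriv ℝ k f =o[𝓝 x] fun y ↦ ‖y - x‖ ^ m := by
  induction m generalizing k with
  | zero =>
    have h := (hf.continuousAt_iteratedFDeriv (k := k) le_rfl).tendsto
    rw [hzero k le_rfl] at h
    simpa using h
  | succ m ih =>
    obtain ⟨r, hr, hsmooth⟩ := eventually_nhds_iff_ball.1
      (hf.eventually (ENat.natCast_ne_coe_top _))
    have hderiv : fderiv ℝ (iteratedFDeriv ℝ k f) =o[𝓝 x] fun y ↦ ‖y - x‖ ^ m := by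
      rw [← Nat.succ_add_eq_add_succ] at hf hzero
      refine isLittleO_iff.2 fun c hc ↦ ?_
      simpa only [norm_fderiv_iteratedFDeriv] using (ih hf hzero).bound hc
    have h := (convex_ball x r).isLittleO_pow_succ (mem_ball_self hr)
      (fun y hy ↦ ((hsmooth y hy).differentiableAt_iteratedFDeriv
        (by exact_mod_cast Nat.lt_add_of_pos_right m.succ_pos)).hasFDerivAt.hasFDerivWithinAt)
      (hderiv.mono nhdsWithin_le_nhds)
    rw [nhdsWithin_eq_nhds.2 (ball_mem_nhds x hr)] at h
    simpa [hzero k (Nat.le_add_right _ _)] using h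

lemma eventually_forall_mem_closedBall_smul {p : E → Prop} (hp : ∀ᶠ z in 𝓝 0, p z) (R : ℝ) :
    ∀ᶠ r : ℝ in 𝓝 0, ∀ z ∈ closedBall (0 : E) R, p (r • z) := by
  have habs : Absorbs ℝ {z | p z} (closedBall (0 : E) R) :=
    NormedSpace.isVonNBounded_closedBall ℝ E R hp
  exact habs.eventually_nhds_zero hp.self_of_nhds

lemma eventually_norm_le_mul_pow {f : E → F} {n : ℕ} (hf : ContDiffAt ℝ (n + 1 : ℕ) f 0)
    (hzero : ∀ j ≤ n + 1, iteratedFDeriv ℝ j f 0 = 0) {ε : ℝ} (hε : 0 < ε) :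
    ∀ᶠ z in 𝓝 0, DifferentiableAt ℝ f z ∧ ‖f z‖ ≤ ε * ‖z‖ ^ (n + 1) ∧
      ‖fderiv ℝ f z‖ ≤ ε * ‖z‖ ^ n := by
  have hval : ∀ᶠ z in 𝓝 0, ‖f z‖ ≤ ε * ‖z‖ ^ (n + 1) := by
    rw [← zero_add (n + 1)] at hf hzero
    simpa using (isLittleO_iteratedFDeriv hf hzero).bound hε
  have hderiv : ∀ᶠ z in 𝓝 0, ‖fderiv ℝ f z‖ ≤ ε * ‖z‖ ^ n := by
    rw [add_comm n 1] at hf hzero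
    simpa [norm_iteratedFDeriv_one] using (isLittleO_iteratedFDeriv hf hzero).bound hε
  have hdiff : ∀ᶠ z in 𝓝 0, DifferentiableAt ℝ f z :=
    (hf.eventually (ENat.natCast_ne_coe_top _)).mono fun z hz ↦
      hz.differentiableAt (by simp)
  exact hdiff.and (hval.and hderiv)

lemma eventually_boundedLipschitzOn_rescale {f : E → F} {n : ℕ}
    (hf : ContDiffAt ℝ (n + 1 : ℕ) f 0) (hzero : ∀ j ≤ n + 1, iteratedFDeriv ℝ j f 0 = 0)
    (R : ℝ) {ε : ℝ} (hε : 0 < ε) :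
    ∀ᶠ r : ℝ in 𝓝[>] 0,
      BoundedLipschitzOn ε (fun z ↦ (r ^ (n + 1))⁻¹ • f (r • z)) (closedBall 0 R) := by
  set M := 1 + |R|
  have hM : 1 ≤ M := le_add_of_nonneg_right (abs_nonneg R)
  have hc : 0 < ε / M ^ (n + 1) := by positivity
  filter_upwards [nhdsWithin_le_nhds (eventually_forall_mem_closedBall_smul
    (eventually_norm_le_mul_pow hf hzero hc) R), self_mem_nhdsWithin] with r hr (hr0 : 0 < r)
  have le_M {z : E} (hz : z ∈ closedBall 0 R) : ‖z‖ ≤ M := by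
    linarith [mem_closedBall_zero_iff.1 hz, le_abs_self R]
  have hdiff {z : E} (hz : z ∈ closedBall 0 R) : DifferentiableAt ℝ (fun z ↦ f (r • z)) z :=
    (hr z hz).1.comp z (by fun_prop)
  have hpow : (r ^ (n + 1))⁻¹ * r ^ (n + 1) = 1 := inv_mul_cancel₀ (by positivity)
  refine boundedLipschitzOn_of_norm_fderiv_le hε.le (convex_closedBall 0 R) (fun z hz ↦ ?_)
    (fun z hz ↦ ?_) fun z hz ↦ ?_
  · exact (hdiff hz).const_smul _
  · calc ‖(r ^ (n + 1))⁻¹ • f (r • z)‖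
        ≤ (r ^ (n + 1))⁻¹ * (ε / M ^ (n + 1) * ‖r • z‖ ^ (n + 1)) := by
          rw [norm_smul, Real.norm_of_nonneg (by positivity)]
          exact mul_le_mul_of_nonneg_left (hr z hz).2.1 (by positivity)
      _ = ε / M ^ (n + 1) * ‖z‖ ^ (n + 1) := by
          rw [norm_smul, Real.norm_of_nonneg hr0.le, mul_pow]
          linear_combination ε / M ^ (n + 1) * ‖z‖ ^ (n + 1) * hpow
      _ ≤ ε / M ^ (n + 1) * M ^ (n + 1) := by gcongr; exact le_M hz
      _ = ε := div_mul_cancel₀ _ (by positivity)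
  · rw [fderiv_fun_const_smul (hdiff hz), fderiv_comp_smul]
    calc ‖(r ^ (n + 1))⁻¹ • r • fderiv ℝ f (r • z)‖
        ≤ (r ^ (n + 1))⁻¹ * (r * (ε / M ^ (n + 1) * ‖r • z‖ ^ n)) := by
          rw [norm_smul, norm_smul, Real.norm_of_nonneg (by positivity), Real.norm_of_nonneg hr0.le]
          gcongr
          exact (hr z hz).2.2
      _ = ε / M ^ (n + 1) * ‖z‖ ^ n := by
          rw [norm_smul, Real.norm_of_nonneg hr0.le, mul_pow]
          linear_combination ε / M ^ (n + 1) * ‖z‖ ^ n * hpow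
      _ ≤ ε / M ^ (n + 1) * M ^ (n + 1) := by
          gcongr
          exact (pow_le_pow_left₀ (norm_nonneg z) (le_M hz) n).trans
            (pow_le_pow_right₀ hM n.le_succ)
      _ = ε := div_mul_cancel₀ _ (by positivity)

end Rescaling

section PolynomialHull

open Metric Filter Topology

lemma differentiable_eval_prod (p : MvPolynomial (Fin 2) ℂ) : Differentiable ℂ fun w : ℂ × ℂ ↦
    MvPolynomial.eval (fun i ↦ if i = 0 then w.1 else w.2) p := fun w ↦ by
  simp only [← MvPolynomial.coe_aeval_eq_eval]
  refine (AnalyticAt.aeval_mvPolynomial (fun i ↦ ?_) p).differentiableAt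
  split_ifs
  exacts [analyticAt_fst, analyticAt_snd]

lemma mem_polyHull2_of_forall_differentiable {K : Set (ℂ × ℂ)} (hK : Bornology.IsBounded K)
    {q : ℂ × ℂ} (hq : ∀ P : ℂ × ℂ → ℂ, Differentiable ℂ P →
      ∀ C, (∀ w ∈ K, ‖P w‖ ≤ C) → ‖P q‖ ≤ C) : q ∈ polyHull2 K := fun p ↦ by
  have hp := differentiable_eval_prod p
  have hbdd := (hK.isCompact_closure.bddAbove_image hp.continuous.norm.continuousOn).mono
    (Set.image_mono subset_closure)
  exact hq _ hp _ fun w hw ↦ le_csSup hbdd (Set.mem_image_of_mem _ hw)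

lemma eClosedBall_subset_closedBall (r : ℝ) : eClosedBall r ⊆ closedBall 0 |r| := fun q hq ↦ by
  have hq : ‖q.1‖ ^ 2 + ‖q.2‖ ^ 2 ≤ r ^ 2 := hq
  rw [mem_closedBall_zero_iff, ← abs_norm, ← sq_le_sq]
  rcases max_choice ‖q.1‖ ‖q.2‖ with h | h <;> rw [Prod.norm_def, h] <;>
    nlinarith [sq_nonneg ‖q.1‖, sq_nonneg ‖q.2‖]

lemma eClosedBall_mem_nhds {r : ℝ} (hr : 0 < r) : eClosedBall r ∈ 𝓝 0 := by
  have hcont : Continuous fun q : ℂ × ℂ ↦ ‖q.1‖ ^ 2 + ‖q.2‖ ^ 2 := by fun_prop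
  exact (hcont.tendsto 0).eventually_le_const (by simpa using pow_pos hr 2)

lemma exists_eOpenBall_subset {S : Set (ℂ × ℂ)} (hS : S ∈ 𝓝 0) : ∃ ρ > 0, eOpenBall ρ ⊆ S := by
  obtain ⟨ρ, hρ, hball⟩ := nhds_basis_closedBall.mem_iff.1 hS
  rw [← abs_of_pos hρ] at hball
  exact ⟨ρ, hρ, fun q hq ↦ hball (eClosedBall_subset_closedBall ρ (LT.lt.le (α := ℝ) hq))⟩

end PolynomialHull

section RescaledGraph

open Metric Filter Topology

/-- The nonisotropic dilation of `ℂ²` preserving the graph of `cubicPoly t`. -/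
noncomputable def cubicDilation (r : ℝ) (q : ℂ × ℂ) : ℂ × ℂ := (r • q.1, r ^ 3 • q.2)

/-- The perturbation `Φ` such that `cubicDilation r` maps the graph of `cubicPoly t + Φ`, translated
by `q`, into the graph of `cubicPoly t + F`. -/
noncomputable def rescaledPerturbation (t : ℝ) (F : ℂ → ℂ) (r : ℝ) (q : ℂ × ℂ) (z : ℂ) : ℂ :=
  (cubicPoly t (z + q.1) - cubicPoly t z) + ((r ^ 3)⁻¹ • F (r • (z + q.1)) + -q.2)

lemma contDiff_cubicPoly (t : ℝ) {n : WithTop ℕ∞} : ContDiff ℝ n (cubicPoly t) := by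
  have : ContDiff ℝ n (fun z : ℂ ↦ conj z) := conjCLE.contDiff
  unfold cubicPoly
  fun_prop

lemma cubicPoly_smul (t r : ℝ) (z : ℂ) : cubicPoly t (r • z) = r ^ 3 • cubicPoly t z := by
  simp only [cubicPoly, real_smul, map_mul, conj_ofReal, ofReal_pow]
  ring

lemma cubicDilation_add_graph (t : ℝ) (F : ℂ → ℂ) {r : ℝ} (hr : r ≠ 0) (q : ℂ × ℂ) (z : ℂ) :
    cubicDilation r (q + (z, cubicPoly t z + rescaledPerturbation t F r q z)) =
      (r • (z + q.1), cubicPoly t (r • (z + q.1)) + F (r • (z + q.1))) := by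
  have hF : F (r • (z + q.1)) = r ^ 3 • (r ^ 3)⁻¹ • F (r • (z + q.1)) :=
    (smul_inv_smul₀ (pow_ne_zero 3 hr) _).symm
  refine Prod.ext (congrArg (r • ·) (add_comm q.1 z)) ?_
  simp only [cubicDilation, rescaledPerturbation, Prod.snd_add]
  rw [cubicPoly_smul]
  conv_rhs => rw [hF, ← smul_add]
  congr 1
  ring

lemma mapsTo_add_closedBall {G : Type*} [SeminormedAddCommGroup G] (ρ : ℝ) {R : ℝ} {c : G}
    (hc : ‖c‖ ≤ R) : Set.MapsTo (· + c) (closedBall 0 ρ) (closedBall 0 (ρ + R)) := fun _ hz ↦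
  mem_closedBall_zero_iff.2 (norm_add_le_of_le (mem_closedBall_zero_iff.1 hz) hc)

lemma eventually_boundedLipschitzOn_rescaledPerturbation (t : ℝ) {F : ℂ → ℂ}
    (hF : ContDiffAt ℝ 3 F 0) (hzero : ∀ k ≤ 3, iteratedFDeriv ℝ k F 0 = 0) (ρ : ℝ) {ε : ℝ}
    (hε : 0 < ε) : ∀ᶠ r : ℝ in 𝓝[>] 0, ∀ᶠ q in 𝓝 0,
      BoundedLipschitzOn ε (rescaledPerturbation t F r q) (closedBall 0 ρ) := by
  filter_upwards [eventually_boundedLipschitzOn_rescale (n := 2) hF hzero (ρ + 1)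
    (div_pos hε three_pos)] with r hr
  have htranslate : ∀ᶠ q : ℂ × ℂ in 𝓝 0, BoundedLipschitzOn (ε / 3)
      (fun z ↦ cubicPoly t (z + q.1) - cubicPoly t z) (closedBall 0 ρ) :=
    (continuous_fst.tendsto (0 : ℂ × ℂ)).eventually
      (eventually_boundedLipschitzOn_translate_sub (contDiff_cubicPoly t)
        (isCompact_closedBall 0 ρ) (convex_closedBall 0 ρ) (div_pos hε three_pos))
  filter_upwards [htranslate, closedBall_mem_nhds 0 (show 0 < min 1 (ε / 3) by positivity)]
    with q hq hq_small
  have hq_small : ‖q‖ ≤ min 1 (ε / 3) := mem_closedBall_zero_iff.1 hq_small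
  have hmaps := mapsTo_add_closedBall ρ
    ((norm_fst_le q).trans (hq_small.trans (min_le_left _ _)))
  have hconst : ‖-q.2‖ ≤ ε / 3 := by
    rw [norm_neg]
    exact (norm_snd_le q).trans (hq_small.trans (min_le_right _ _))
  exact (hq.add ((hr.comp_isometry (isometry_add_right q.1) hmaps).add
    ((boundedLipschitzOn_const _ _).mono hconst))).mono (by linarith)

lemma IsModelDisc.polyHull2_mem_nhds {t : ℝ} {X W : ℂ → ℝ} {E b : ℂ → ℂ}
    (h : IsModelDisc t X W E b) (ht : |t| < 1) {F : ℂ → ℂ} (hF : ContDiffAt ℝ 3 F 0)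
    (hzero : ∀ k ≤ 3, iteratedFDeriv ℝ k F 0 = 0) {K : Set (ℂ × ℂ)}
    (hbdd : Bornology.IsBounded K) (hK : ∀ᶠ z in 𝓝 0, (z, cubicPoly t z + F z) ∈ K) :
    polyHull2 K ∈ 𝓝 0 := by
  obtain ⟨ε, hε, ρ, -, hdisc⟩ := h.exists_forall_norm_zero_le ht
  obtain ⟨r, hΦ, hgraph, hr⟩ := ((eventually_boundedLipschitzOn_rescaledPerturbation t hF hzero ρ
    hε).and ((eventually_nhdsWithin_of_eventually_nhds
      (eventually_forall_mem_closedBall_smul hK (ρ + 1))).and self_mem_nhdsWithin)).exists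
  have hr : r ≠ 0 := (Set.mem_Ioi.1 hr).ne'
  have hhull : ∀ᶠ q in 𝓝 0, cubicDilation r q ∈ polyHull2 K := by
    filter_upwards [hΦ, closedBall_mem_nhds 0 one_pos] with q hq hq_one
    refine mem_polyHull2_of_forall_differentiable hbdd fun P hP C hC ↦ ?_
    have hP' : Differentiable ℂ fun w ↦ P (cubicDilation r (q + w)) := by
      unfold cubicDilation
      fun_prop
    have h := hdisc _ hq _ hP' C
    simp only [perturbedGraph, Set.forall_mem_image, add_zero] at h
    refine h fun z hz ↦ ?_
    rw [cubicDilation_add_graph t F hr]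
    exact hC _ (hgraph _ (mapsTo_add_closedBall ρ
      ((norm_fst_le q).trans (mem_closedBall_zero_iff.1 hq_one)) hz))
  have hinv : Tendsto (cubicDilation r⁻¹) (𝓝 0) (𝓝 0) := by
    have hcont : Continuous (cubicDilation r⁻¹) := by unfold cubicDilation; fun_prop
    exact hcont.tendsto' _ _ (by simp [cubicDilation])
  filter_upwards [hinv.eventually hhull] with q hq
  simpa [cubicDilation, hr] using hq

lemma eventually_graph_mem_Mset_inter (t : ℝ) {U : Set ℂ} (hU : U ∈ 𝓝 0) {F : ℂ → ℂ}
    (hF : ContinuousAt F 0) (hF0 : F 0 = 0) {δ : ℝ} (hδ : 0 < δ) :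
    ∀ᶠ z in 𝓝 0, (z, cubicPoly t z + F z) ∈ Mset t U F ∩ eClosedBall δ := by
  have hgraph : Tendsto (fun z ↦ (z, cubicPoly t z + F z)) (𝓝 0) (𝓝 0) := by
    have hcubic := (contDiff_cubicPoly t (n := 0)).continuous
    have h : ContinuousAt (fun z ↦ (z, cubicPoly t z + F z)) 0 := by fun_prop
    simpa [ContinuousAt, hF0, cubicPoly, Prod.mk_zero_zero] using h
  filter_upwards [hU, hgraph.eventually (eClosedBall_mem_nhds hδ)] with z hz hball
  exact ⟨⟨z, hz, rfl⟩, hball⟩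

end RescaledGraph

end CubicHull

open Topology in
theorem stmt_12_general {t : ℝ} (ht0 : 0 < t) (ht1 : t < Real.sqrt 3 / 2) {U : Set ℂ}
    (hU : U ∈ 𝓝 0) {F : ℂ → ℂ} (hF : ContDiffAt ℝ 3 F 0)
    (hders : ∀ k ≤ 3, iteratedFDeriv ℝ k F 0 = 0) {δ : ℝ} (hδ : 0 < δ) :
    ∃ ρ > 0, eOpenBall ρ ⊆ polyHull2 (Mset t U F ∩ eClosedBall δ) := by
  have ht : |t| < 1 := by
    rw [abs_of_pos ht0]
    linarith [CubicHull.sqrt_three_lt_two]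
  have hF0 : F 0 = 0 := by
    simpa using congrArg norm (hders 0 (Nat.zero_le 3))
  obtain ⟨X, W, E, b, hdisc⟩ := CubicHull.exists_isModelDisc ht0 ht1
  have hgraph := CubicHull.eventually_graph_mem_Mset_inter t hU hF.continuousAt hF0 hδ
  have hbdd : Bornology.IsBounded (Mset t U F ∩ eClosedBall δ) :=
    Metric.isBounded_closedBall.subset
      (Set.inter_subset_right.trans (CubicHull.eClosedBall_subset_closedBall δ))
  exact CubicHull.exists_eOpenBall_subset (hdisc.polyHull2_mem_nhds ht hF hders hbdd hgraph)

/-- for `0 < t < √3/2` and any `C^∞`-smooth `F` on a neighbourhood `U` of `0`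
whose derivatives of all orders `≤ 3` vanish at `0`, the polynomially convex hull of
`M_t ∩ B̄(0;δ)` contains a nonempty open ball centred at the origin for every `δ > 0`. -/
theorem stmt_12 (t : ℝ) (ht0 : 0 < t) (ht1 : t < Real.sqrt 3 / 2)
    (U : Set ℂ) (hU : IsOpen U) (h0U : (0 : ℂ) ∈ U) (F : ℂ → ℂ)
    (hF : ContDiffOn ℝ (⊤ : ℕ∞) F U)
    (hders : ∀ k : ℕ, k ≤ 3 → iteratedFDerivWithin ℝ k F U 0 = 0)
    (δ : ℝ) (hδ : 0 < δ) :
    ∃ ρ > (0 : ℝ), eOpenBall ρ ⊆ polyHull2 (Mset t U F ∩ eClosedBall δ) := by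
  exact stmt_12_general ht0 ht1 (hU.mem_nhds h0U)
    ((hF.contDiffAt (hU.mem_nhds h0U)).of_le (WithTop.coe_le_coe.2 le_top))
    (fun k hk ↦ (iteratedFDerivWithin_of_isOpen k hU h0U).symm.trans (hders k hk)) hδ
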